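/- arXiv:1804.09684 — 3 statements merged into one kernel-verified Lean document; each statement's English description precedes it below -/
import Mathlib

section
/- Let d ≥ 2 and c ≥ 1 be fixed integers and C > 0 a fixed constant. There exist constants r and K, depending only on d, c and C, such that the following holds for every integer b ≥ 1, every finite alphabet Σ, and every key set X ⊆ Σ^c with g = 2^b, n = d·g ≥ 4 and |X| = m ≤ C·n. If h_1,…,h_d : Σ^c → F₂^b ≅ [g] are d independent random simple tabulation hash functions, then the probability (over the random tables) that the hash graph contains a copy of a d-ary Fibonacci tree S_i(k) for some i ∈ {1,…,d}, with k = ⌈log₂ log₂ n / (d · log₂ φ_d) + r⌉, is at most K / log₂ log₂ n. -/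
/-!
The proof is a first-moment argument over ordered sequences of keys, organised so that linear
dependencies among keys can be controlled.

*Keys as vectors.* A key `x` is identified with the vector `charVec x` over `F₂` whose `i`-th block
is the indicator of `x i`. The tabulation hash of `x` is a linear function of `charVec x`, so keys
with independent vectors have independent uniform hash values. Hence, if `p` independent keys are
arranged in a rooted tree and each non-root key is required to agree with its parent under a
prescribed hash function, exactly `p - 1` independent conditions arise, each of probability `2 ^ (-b)`
(`rank_count`).

*A substructure of the Fibonacci tree.* `S_i(r + k + 1)` contains a top edge, `r + k` further edges
through its root (the root star), and a connected family of *units*: skeleton edges reachable from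
the top edge, each carrying `r` pendant edges (`tree_struct`). By the generalised Fibonacci
recurrence the number of units is at least of the order `φ ^ (d * k)`, that is, of the order `log n`
for the `k` of the theorem. Keys spanned by a set `B` of keys number at most `|B| ^ c`, since each
coordinate must already occur in `B`; thus out of the `r + k` root-star keys one can choose `R` with
`R ^ c` of order `log log n` which, together with the top key, are independent
(`exists_indep_subset`). The resulting `R + 1 + (r + 1) s` keys are listed with parents preceding
children (`extract`); a copy of the tree therefore produces the event `BadSeq`.

*The union bound.* There are at most `D ^ p * 2 ^ (b * p)` key sequences of length `p`, so fully
independent sequences contribute `2 ^ b * (d * D) ^ p`. Permuting the root-star keys, and the pendant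
keys inside a unit, preserves all constraints, which gains a factor `R! * (r!) ^ q` for `q` complete
units (`master_count`). For `r` large each unit then contributes at most `2 ^ (-d)`, and `s ≥ b / d`
units compensate the factor `2 ^ b` (`indep_case`). If the sequence is not independent, it is cut at
its first dependent key. A key that depends on `p` others forms a zero sum with an odd number, at
least three, of them. Counting zero sums of keys by induction on the number of coordinates, with the
Cauchy–Schwarz inequality in each coordinate (`sum_evenTuples_le`, `card_zeroSum_le`), shows that
there are only about `2 ^ p * M ^ (p - 1)` such pairs, `M` being the bound on the number of keys
(`card_dependent_le`). This replaces the missing factor `2 ^ (-b)` (`dep_case`), and the sum over the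
cutting position is dominated by a geometric series (`badSeq_count`, `series_bound`).

Everything is thus bounded by a constant times `E ^ (R + 1) / R!` for a constant `E`, which is
`O((R + 1) ^ (-c))` by `star_bound`, and so `O(1 / log log n)` (`tree_count_log`).
-/

/-- Simple tabulation: the hash of `x` is the XOR (sum over `F₂`) of the table entries
`T i (x i)`. -/
def simpleTab {c b : ℕ} {A : Type*} (T : Fin c → A → (Fin b → ZMod 2)) (x : Fin c → A) :
    Fin b → ZMod 2 := ∑ i, T i (x i)

/-- The edge set of the `d`-ary Fibonacci tree `S_i(k)` (with `i` zero-based: `SEdges d k i`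
is the tree `S_{i+1}(k)` of the paper).  Vertices are addressed by lists over `Fin d`:
the vertex `v_j` of the top edge is the root of the `j`-th copy, and the `j`-th copy
consists of the addresses starting with `j`.  The root of `S_i(k)` is `List.replicate k i`. -/
def SEdges (d : ℕ) [NeZero d] : (k : ℕ) → (i : Fin d) → Finset (Finset (List (Fin d)))
  | 0, _ => ∅
  | (k + 1), i =>
      insert
        (Finset.univ.image fun j : Fin d =>
          if j < i then j :: List.replicate (k + 1) j else j :: List.replicate k j)
        (Finset.univ.biUnion fun j : Fin d =>
          if _h : j < i then (SEdges d (k + 1) j).image fun e => e.image (List.cons j)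
          else (SEdges d k j).image fun e => e.image (List.cons j))
  termination_by k i => (k, (i : ℕ))

/-- The hash graph (given by the edge map `hashEdge` on the key set `X`) contains a copy of
the hypertree with edge set `Edges`: there are distinct keys of `X`, one per edge, and an
injection of the vertex set into the bins mapping each tree edge onto the hash edge of the
corresponding key. -/
def containsCopy {Vt A G : Type*} [DecidableEq Vt] [DecidableEq G]
    (Edges : Finset (Finset Vt)) (X : Finset A) (hashEdge : A → Finset G) : Prop :=
  ∃ (φ : Vt → G) (ψ : Finset Vt → A),
    Set.InjOn φ ↑(Edges.biUnion id) ∧ Set.InjOn ψ ↑Edges ∧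
      ∀ e ∈ Edges, ψ e ∈ X ∧ e.image φ = hashEdge (ψ e)

/-! ### Keys as vectors over the two-element field -/

section Vec
variable {c : ℕ} {A : Type*} [DecidableEq A]

/-- The vector of a key `x`: block `i` is the indicator vector of the character `x i`. -/
def charVec (x : Fin c → A) : Fin c → A → ZMod 2 := fun i => Pi.single (x i) 1

lemma charVec_injective : Function.Injective (charVec (c := c) (A := A)) := by
  intro x y h
  funext i
  have := congrFun (congrFun h i) (x i)
  by_contra hne
  simp [charVec, hne] at this

lemma coord_mem_of_mem_span {S : Set (Fin c → A)} {y : Fin c → A}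
    (h : charVec y ∈ Submodule.span (ZMod 2) (charVec '' S)) (i : Fin c) :
    ∃ x ∈ S, x i = y i := by
  by_contra hne
  push Not at hne
  let l : (Fin c → A → ZMod 2) →ₗ[ZMod 2] ZMod 2 :=
    (LinearMap.proj (φ := fun _ : A => ZMod 2) (y i)).comp
      (LinearMap.proj (φ := fun _ : Fin c => A → ZMod 2) i)
  have hle : Submodule.span (ZMod 2) (charVec '' S) ≤ LinearMap.ker l := by
    rw [Submodule.span_le]
    rintro _ ⟨x, hx, rfl⟩
    have := hne x hx
    simp [l, charVec, this.symm]
  have := hle h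
  simp [l, charVec] at this

/-- A key in the span of `B` has each coordinate occurring in `B`, so at most `|B| ^ c` keys are
spanned by `B`. -/
lemma card_le_of_span (B S : Finset (Fin c → A))
    (h : ∀ y ∈ S, charVec y ∈ Submodule.span (ZMod 2) (charVec '' (B : Set (Fin c → A)))) :
    S.card ≤ B.card ^ c := by
  classical
  have hsub : S ⊆ Fintype.piFinset (fun i : Fin c => B.image (fun x => x i)) := by
    intro y hy
    rw [Fintype.mem_piFinset]
    intro i
    obtain ⟨x, hx, hxy⟩ := coord_mem_of_mem_span (h y hy) i
    exact Finset.mem_image.2 ⟨x, hx, hxy⟩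
  calc S.card ≤ _ := Finset.card_le_card hsub
    _ = ∏ i : Fin c, (B.image (fun x => x i)).card := Fintype.card_piFinset _
    _ ≤ ∏ i : Fin c, B.card := Finset.prod_le_prod' fun i _ => Finset.card_image_le
    _ = B.card ^ c := by simp

/-- A set of at least `R ^ c` keys contains `R` keys that are independent together with `e`. A
maximal independent set containing `e` spans all the keys, so it has more than `R` elements. -/
lemma exists_indep_subset (hc : 0 < c) (e : Fin c → A) (S : Finset (Fin c → A)) (he : e ∉ S)
    (R : ℕ) (hR : R ^ c ≤ S.card) :
    ∃ B ⊆ S, B.card = R ∧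
      LinearIndepOn (ZMod 2) charVec (insert e (B : Set (Fin c → A))) := by
  classical
  have h0 : LinearIndepOn (ZMod 2) charVec ({e} : Set (Fin c → A)) := by
    rw [linearIndepOn_singleton_iff]
    intro h
    have := congrFun (congrFun h ⟨0, hc⟩) (e ⟨0, hc⟩)
    simp [charVec] at this
  obtain ⟨b, hbs, heb, hspan, hli⟩ := exists_linearIndepOn_extension h0
    (t := ((insert e S : Finset (Fin c → A)) : Set (Fin c → A))) (by simp)
  have hbf : b.Finite := (Finset.finite_toSet _).subset hbs
  lift b to Finset (Fin c → A) using hbf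
  have h1 := card_le_of_span b (insert e S) fun y hy => hspan ⟨y, hy, rfl⟩
  rw [Finset.card_insert_of_notMem he] at h1
  have h2 : R < b.card := lt_of_pow_lt_pow_left' c (by omega)
  have h3 : R ≤ (b.erase e).card := by
    rw [Finset.card_erase_of_mem (by simpa using heb)]; omega
  obtain ⟨B, hB, hBc⟩ := Finset.exists_subset_card_eq h3
  refine ⟨B, ?_, hBc, hli.mono ?_⟩
  · intro y hy
    have h4 := Finset.mem_erase.1 (hB hy)
    have := hbs h4.2
    simpa [h4.1] using this
  · intro y hy
    rcases hy with rfl | hy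
    · simpa using heb
    · exact Finset.mem_of_mem_erase (hB hy)

/-- Perturbing the tables in the direction of a functional `l` shifts the hash value of `x` by
`l (charVec x) • u`. -/
lemma simpleTab_add_dual {b : ℕ} [Fintype A] (T : Fin c → A → (Fin b → ZMod 2))
    (l : (Fin c → A → ZMod 2) →ₗ[ZMod 2] ZMod 2) (u : Fin b → ZMod 2) (x : Fin c → A) :
    simpleTab (T + fun i z => l (Pi.single i (Pi.single z 1)) • u) x =
      simpleTab T x + l (charVec x) • u := by
  have : charVec x = ∑ i, Pi.single i (Pi.single (x i) (1 : ZMod 2)) := by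
    rw [← Finset.univ_sum_single (charVec x)]; rfl
  rw [this, map_sum, Finset.sum_smul]
  simp only [simpleTab, Pi.add_apply, Finset.sum_add_distrib]

/-- For independent keys there are functionals that single out one of them. -/
lemma exists_dual {p : ℕ} {x : Fin p → Fin c → A}
    (hx : LinearIndependent (ZMod 2) (charVec ∘ x)) (a : Fin p) :
    ∃ l : (Fin c → A → ZMod 2) →ₗ[ZMod 2] ZMod 2,
      l (charVec (x a)) = 1 ∧ ∀ a' ≠ a, l (charVec (x a')) = 0 := by
  have h := hx.notMem_span_image (s := {a}ᶜ) (x := a) (by simp)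
  obtain ⟨l, hl, hl'⟩ := Submodule.exists_dual_map_eq_bot_of_notMem h inferInstance
  refine ⟨l, ?_, ?_⟩
  · generalize hq : l (charVec (x a)) = q
    have : q ≠ 0 := by rw [← hq]; exact hl
    clear hq hl
    revert q; decide
  · intro a' ha'
    have : l (charVec (x a')) ∈ (Submodule.span (ZMod 2) ((charVec ∘ x) '' {a}ᶜ)).map l :=
      Submodule.mem_map_of_mem (Submodule.subset_span ⟨a', ha', rfl⟩)
    rw [hl'] at this
    simpa using this

/-- Prescribing, for independent keys, that each of the keys `1, …, q` agrees with an earlier parent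
key under a given hash function leaves at most a fraction `2 ^ (-b * q)` of the tables: the tables
meeting one more constraint have `2 ^ b` disjoint translates that meet the previous ones. -/
lemma rank_count {b d p : ℕ} [Fintype A] (x : Fin p → Fin c → A)
    (hx : LinearIndependent (ZMod 2) (charVec ∘ x)) (par : Fin p → Fin p)
    (hpar : ∀ a : Fin p, 0 < a.val → par a < a) (side : Fin p → Fin d) (q : ℕ) (hq : q + 1 ≤ p) :
    (Finset.univ.filter fun T : Fin d → Fin c → A → (Fin b → ZMod 2) =>
      ∀ a : Fin p, 0 < a.val → a.val < q + 1 →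
        simpleTab (T (side a)) (x a) = simpleTab (T (side a)) (x (par a))).card * (2 ^ b) ^ q ≤
      Fintype.card (Fin d → Fin c → A → (Fin b → ZMod 2)) := by
  induction q with
  | zero => simpa only [pow_zero, mul_one] using Finset.card_le_univ _
  | succ q ih =>
    refine le_trans ?_ (ih (by omega))
    rw [pow_succ', ← mul_assoc]
    refine Nat.mul_le_mul_right _ ?_
    obtain ⟨l, hl1, hl0⟩ := exists_dual hx ⟨q + 1, by omega⟩
    -- Adding a multiple of the functional `l` to the table `side s` changes the hash value of
    -- `x s` arbitrarily and no other relevant one.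
    set s : Fin p := ⟨q + 1, by omega⟩ with hs
    have hc2 : (2 ^ b) = (Finset.univ : Finset (Fin b → ZMod 2)).card := by
      simp [ZMod.card]
    rw [hc2, ← Finset.card_product]
    have key : ∀ (T : Fin d → Fin c → A → (Fin b → ZMod 2)) (u : Fin b → ZMod 2) (j : Fin d)
        (y : Fin c → A), simpleTab ((Function.update T (side s) (T (side s) + fun i z =>
          l (Pi.single i (Pi.single z 1)) • u)) j) y =
          simpleTab (T j) y + if j = side s then l (charVec y) • u else 0 := by
      intro T u j y
      by_cases hj : j = side s
      · subst hj; simp [simpleTab_add_dual]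
      · simp [hj]
    refine Finset.card_le_card_of_injOn
      (fun Tu => Function.update Tu.1 (side s) (Tu.1 (side s) + fun i z =>
          l (Pi.single i (Pi.single z 1)) • Tu.2)) ?_ ?_
    · rintro ⟨T, u⟩ hT
      simp only [Finset.coe_product, Finset.coe_filter, Set.mem_prod, Set.mem_ofPred_eq,
        Finset.mem_univ, true_and, Finset.coe_univ, Set.mem_univ, and_true] at hT ⊢
      intro a ha0 haq
      have h1 : a ≠ s := by intro h; rw [h] at haq; simp [hs] at haq
      have h2 : par a ≠ s := by
        intro h; have := hpar a ha0; rw [h] at this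
        have := Fin.lt_def.1 this
        simp [hs] at this; omega
      rw [key, key, hl0 a h1, hl0 _ h2, hT a ha0 (by omega)]
    · rintro ⟨T, u⟩ hT ⟨T', u'⟩ hT' h
      simp only [Finset.coe_product, Finset.coe_filter, Set.mem_prod, Set.mem_ofPred_eq,
        Finset.mem_univ, true_and, Finset.coe_univ, Set.mem_univ, and_true] at hT hT' h
      have h2 : par s ≠ s := by
        have := hpar s (by simp [hs]); exact this.ne
      have e1 := key T u (side s) (x s)
      have e2 := key T u (side s) (x (par s))
      have e3 := key T' u' (side s) (x s)
      have e4 := key T' u' (side s) (x (par s))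
      rw [h] at e1 e2
      simp only [if_true, hl1, hl0 _ h2, one_smul, zero_smul, add_zero] at e1 e2 e3 e4
      have e5 := hT s (by simp [hs]) (by simp [hs])
      have e6 := hT' s (by simp [hs]) (by simp [hs])
      have hu : u = u' := by
        have : simpleTab (T (side s)) (x s) + u = simpleTab (T' (side s)) (x s) + u' :=
          e1.symm.trans e3
        rw [e5, e6, ← e2.symm.trans e4] at this
        exact add_left_cancel this
      subst hu
      refine Prod.ext ?_ rfl
      funext j
      have hj := congrFun h j
      by_cases hjs : j = side s
      · subst hjs
        simpa using hj
      · simpa [hjs] using hj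

end Vec

/-! ### Counting zero sums of keys -/

section ZeroSum
variable {A : Type*} [DecidableEq A] [Fintype A]

open Classical in
/-- Weighted count of the tuples in which every character occurs an even number of times. The first
entry equals some other entry `j`; removing both leaves a tuple of the same kind, and the sum over
the removed character is bounded by the Cauchy–Schwarz inequality. -/
lemma sum_evenTuples_le (n : ℕ) : ∀ (f : Fin n → A → ℝ), (∀ i a, 0 ≤ f i a) →
    ∑ a : Fin n → A, (if ∑ i, Pi.single (a i) (1 : ZMod 2) = (0 : A → ZMod 2)
      then ∏ i, f i (a i) else 0) ≤ (n.factorial : ℝ) * ∏ i, √(∑ a, f i a ^ 2) := by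
  induction n using Nat.twoStepInduction with
  | zero => intro f hf; simp
  | one =>
    intro f hf
    have : ∀ a : Fin 1 → A, ¬ (∑ i, Pi.single (a i) (1 : ZMod 2) = (0 : A → ZMod 2)) := by
      intro a h
      have := congrFun h (a 0)
      simp at this
    simp only [this, if_false, Finset.sum_const_zero]
    positivity
  | more n ih _ =>
    intro f hf
    have hpt : ∀ (a0 : A) (a' : Fin (n + 1) → A),
        (if ∑ i, Pi.single ((Fin.cons a0 a' : Fin (n + 2) → A) i) (1 : ZMod 2) =
            (0 : A → ZMod 2)
          then ∏ i, f i ((Fin.cons a0 a' : Fin (n + 2) → A) i) else 0) ≤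
        ∑ j : Fin (n + 1), (if a' j = a0 ∧
          ∑ i, Pi.single (a' (j.succAbove i)) (1 : ZMod 2) = (0 : A → ZMod 2)
          then f 0 a0 * (f j.succ (a' j) * ∏ i, f (j.succAbove i).succ (a' (j.succAbove i)))
          else 0) := by
      intro a0 a'
      have hnn : ∀ j : Fin (n + 1), 0 ≤ (if a' j = a0 ∧
          ∑ i, Pi.single (a' (j.succAbove i)) (1 : ZMod 2) = (0 : A → ZMod 2)
          then f 0 a0 * (f j.succ (a' j) * ∏ i, f (j.succAbove i).succ (a' (j.succAbove i)))
          else 0) := by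
        intro j
        split_ifs
        · exact mul_nonneg (hf _ _) (mul_nonneg (hf _ _) (Finset.prod_nonneg fun i _ => hf _ _))
        · exact le_rfl
      split_ifs with h
      · rw [Fin.sum_univ_succ] at h
        simp only [Fin.cons_zero, Fin.cons_succ] at h
        obtain ⟨j, hj⟩ : ∃ j, a' j = a0 := by
          by_contra hne
          push Not at hne
          have := congrFun h a0
          simp [Finset.sum_apply, fun j => (hne j).symm] at this
        refine le_trans (le_of_eq ?_) (Finset.single_le_sum (fun j _ => hnn j)
          (Finset.mem_univ j))
        rw [Fin.sum_univ_succAbove _ j, ← add_assoc, hj] at h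
        have h2 : (Pi.single a0 1 + Pi.single a0 1 : A → ZMod 2) = 0 := by
          funext z
          exact CharTwo.add_self_eq_zero _
        rw [h2, zero_add] at h
        rw [if_pos ⟨hj, h⟩, Fin.prod_univ_succ, Fin.prod_univ_succAbove _ j]
        simp
      · exact Finset.sum_nonneg fun j _ => hnn j
    calc _ = ∑ q : A × (Fin (n + 1) → A),
          (if ∑ i, Pi.single ((Fin.cons q.1 q.2 : Fin (n + 2) → A) i) (1 : ZMod 2) =
            (0 : A → ZMod 2)
          then ∏ i, f i ((Fin.cons q.1 q.2 : Fin (n + 2) → A) i) else 0) :=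
            by
            refine (Fintype.sum_equiv (Fin.consEquiv (fun _ => A)) _ _ fun q => ?_).symm
            simp only [Fin.consEquiv, Equiv.coe_fn_mk]
            congr
      _ ≤ ∑ q : A × (Fin (n + 1) → A), ∑ j : Fin (n + 1), (if q.2 j = q.1 ∧
          ∑ i, Pi.single (q.2 (j.succAbove i)) (1 : ZMod 2) = (0 : A → ZMod 2)
          then f 0 q.1 * (f j.succ (q.2 j) * ∏ i, f (j.succAbove i).succ (q.2 (j.succAbove i)))
          else 0) := Finset.sum_le_sum fun q _ => hpt q.1 q.2
      _ = ∑ j : Fin (n + 1), (∑ a0, f 0 a0 * f j.succ a0) *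
          ∑ a : Fin n → A, (if ∑ i, Pi.single (a i) (1 : ZMod 2) = (0 : A → ZMod 2)
            then ∏ i, f (j.succAbove i).succ (a i) else 0) := by
          rw [Finset.sum_comm]
          refine Finset.sum_congr rfl fun j _ => ?_
          rw [Fintype.sum_prod_type, Finset.sum_mul]
          refine Finset.sum_congr rfl fun a0 _ => ?_
          rw [← Fintype.sum_equiv (Fin.insertNthEquiv (fun _ => A) j) (fun q =>
            if q.1 = a0 ∧
              ∑ i, Pi.single (q.2 i) (1 : ZMod 2) = (0 : A → ZMod 2)
            then f 0 a0 * (f j.succ q.1 * ∏ i, f (j.succAbove i).succ (q.2 i))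
            else 0) _ (fun q => by simp [Fin.insertNthEquiv])]
          rw [Fintype.sum_prod_type, Finset.sum_eq_single a0]
          · rw [Finset.mul_sum]
            refine Finset.sum_congr rfl fun a _ => ?_
            simp only [true_and]
            split_ifs
            · ring
            · simp
          · intro b _ hb
            simp [hb]
          · simp
      _ ≤ ∑ j : Fin (n + 1), (√(∑ a, f 0 a ^ 2) * √(∑ a, f j.succ a ^ 2)) *
          ((n.factorial : ℝ) * ∏ i, √(∑ a, f (j.succAbove i).succ a ^ 2)) := by
          refine Finset.sum_le_sum fun j _ => ?_
          refine mul_le_mul (Real.sum_mul_le_sqrt_mul_sqrt _ _ _)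
            (ih (fun i => f (j.succAbove i).succ) (fun i a => hf _ _)) ?_ (by positivity)
          refine Finset.sum_nonneg fun a _ => ?_
          split_ifs
          · exact Finset.prod_nonneg fun i _ => hf _ _
          · exact le_rfl
      _ = ∑ j : Fin (n + 1), (n.factorial : ℝ) * ∏ i, √(∑ a, f i a ^ 2) := by
          refine Finset.sum_congr rfl fun j _ => ?_
          rw [Fin.prod_univ_succ, Fin.prod_univ_succAbove _ j]
          ring
      _ ≤ _ := by
          rw [Finset.sum_const, Finset.card_univ, Fintype.card_fin, nsmul_eq_mul, ← mul_assoc]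
          refine mul_le_mul_of_nonneg_right ?_ (by positivity)
          have : (n + 1) * n.factorial ≤ (n + 2).factorial := by
            rw [← Nat.factorial_succ]; exact Nat.factorial_le (by omega)
          exact_mod_cast this

open Classical in
/-- Tuples of keys summing to zero, by induction on the number of coordinates: `sum_evenTuples_le`
handles the first coordinate, the weights being the bounds for the remaining coordinates. -/
lemma card_zeroSum_le (n : ℕ) : ∀ (c : ℕ) (S : Fin n → Finset (Fin c → A)),
    (((Fintype.piFinset S).filter fun z => ∑ i, charVec (z i) = 0).card : ℝ) ≤
      (n.factorial : ℝ) ^ c * ∏ i, √((S i).card : ℝ) := by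
  intro c
  induction c with
  | zero =>
    intro S
    have h1 : ((Fintype.piFinset S).filter fun z => ∑ i, charVec (z i) = 0).card ≤
        ∏ i, (S i).card := by
      rw [← Fintype.card_piFinset]; exact Finset.card_filter_le _ _
    have h2 : ∀ i, ((S i).card : ℝ) ≤ √((S i).card : ℝ) := by
      intro i
      have : (S i).card ≤ 1 := Finset.card_le_one.2 fun a _ b _ => Subsingleton.elim _ _
      interval_cases (S i).card <;> simp
    calc _ ≤ ((∏ i, (S i).card : ℕ) : ℝ) := by exact_mod_cast h1
      _ = ∏ i, ((S i).card : ℝ) := by push_cast; rfl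
      _ ≤ ∏ i, √((S i).card : ℝ) := Finset.prod_le_prod (fun i _ => by positivity)
          fun i _ => h2 i
      _ = _ := by simp
  | succ c ih =>
    intro S
    -- `F i a` is the set of tails of the keys of `S i` with first character `a`.
    let F : (i : Fin n) → A → Finset (Fin c → A) := fun i a =>
      Finset.univ.filter fun t => (Fin.cons a t : Fin (c + 1) → A) ∈ S i
    have hF : ∀ i, ∑ a, ((F i a).card : ℝ) = (S i).card := by
      intro i
      have : (S i).card = ∑ a, ((S i).filter fun x => x 0 = a).card :=
        Finset.card_eq_sum_card_fiberwise (f := fun x : Fin (c + 1) → A => x 0) (t := Finset.univ)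
          (fun _ _ => by simp)
      rw [this]
      push_cast
      refine Finset.sum_congr rfl fun a _ => ?_
      norm_cast
      refine Finset.card_bij (fun t _ => Fin.cons a t) ?_ ?_ ?_
      · intro t ht; simpa [F] using ht
      · intro t _ t' _ h; exact Fin.cons_right_injective _ h
      · intro x hx
        rw [Finset.mem_filter] at hx
        refine ⟨Fin.tail x, ?_, ?_⟩
        · simp [F, ← hx.2, hx.1]
        · rw [← hx.2]; simp
    have hcard : ((Fintype.piFinset S).filter fun z => ∑ i, charVec (z i) = 0).card ≤
        ∑ a : Fin n → A, (if ∑ i, Pi.single (a i) (1 : ZMod 2) = (0 : A → ZMod 2) then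
          ((Fintype.piFinset fun i => F i (a i)).filter
            fun z => ∑ i, charVec (z i) = 0).card else 0) := by
      rw [Finset.card_eq_sum_card_fiberwise (f := fun z i => z i 0)
        (t := (Finset.univ : Finset (Fin n → A))) (fun _ _ => by simp)]
      refine Finset.sum_le_sum fun a _ => ?_
      split_ifs with h
      · refine Finset.card_le_card_of_injOn (fun z i => Fin.tail (z i)) ?_ ?_
        · intro z hz
          simp only [Finset.coe_filter, Set.mem_ofPred_eq, Finset.mem_filter,
            Fintype.mem_piFinset] at hz ⊢
          obtain ⟨⟨hz1, hz2⟩, hz3⟩ := hz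
          refine ⟨fun i => ?_, ?_⟩
          · have : a i = z i 0 := (congrFun hz3 i).symm
            simp [F, this, hz1 i]
          · funext k
            have := congrFun hz2 k.succ
            simpa [charVec, Fin.tail] using this
        · intro z hz z' hz' h
          simp only [Finset.coe_filter, Set.mem_ofPred_eq, Finset.mem_filter,
            Fintype.mem_piFinset] at hz hz'
          funext i
          have h1 : z i 0 = z' i 0 := by
            have := congrFun (hz.2.trans hz'.2.symm) i
            exact this
          have h2 := congrFun h i
          rw [← Fin.cons_self_tail (z i), ← Fin.cons_self_tail (z' i), h1]
          simp only at h2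
          rw [h2]
      · rw [Nat.le_zero, Finset.card_eq_zero, Finset.filter_eq_empty_iff]
        rintro z hz rfl
        apply h
        have := congrFun (Finset.mem_filter.1 hz).2 0
        simpa [charVec] using this
    calc _ ≤ ((∑ a : Fin n → A, (if ∑ i, Pi.single (a i) (1 : ZMod 2) = (0 : A → ZMod 2) then
          ((Fintype.piFinset fun i => F i (a i)).filter
            fun z => ∑ i, charVec (z i) = 0).card else 0) : ℕ) : ℝ) := by exact_mod_cast hcard
      _ ≤ ∑ a : Fin n → A, (n.factorial : ℝ) ^ c *
          (if ∑ i, Pi.single (a i) (1 : ZMod 2) = (0 : A → ZMod 2) then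
          ∏ i, √((F i (a i)).card : ℝ) else 0) := by
          push_cast
          refine Finset.sum_le_sum fun a _ => ?_
          split_ifs
          · exact ih _
          · simp
      _ ≤ (n.factorial : ℝ) ^ c * ((n.factorial : ℝ) *
            ∏ i, √(∑ a, √((F i a).card : ℝ) ^ 2)) := by
          rw [← Finset.mul_sum]
          refine mul_le_mul_of_nonneg_left ?_ (by positivity)
          exact sum_evenTuples_le n (fun i a => √((F i a).card : ℝ)) fun i a => by positivity
      _ = _ := by
          rw [pow_succ, ← mul_assoc]
          congr 1
          refine Finset.prod_congr rfl fun i _ => ?_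
          rw [← hF i]
          congr 1
          refine Finset.sum_congr rfl fun a _ => ?_
          rw [Real.sq_sqrt (by positivity)]

end ZeroSum

/-! ### Counting linearly dependent keys -/

section Dependent
variable {A : Type*} [DecidableEq A] [Fintype A]

open Classical in
/-- Tuples of keys of `X` whose entries indexed by `J` sum to zero. -/
lemma card_partial_zeroSum_le {c : ℕ} {ι : Type*} [Fintype ι] [DecidableEq ι] (J : Finset ι)
    (X : Finset (Fin c → A)) (M : ℝ) (hM : (X.card : ℝ) ≤ M) :
    ((Finset.univ.filter fun z : ι → Fin c → A =>
      (∀ i, z i ∈ X) ∧ ∑ i ∈ J, charVec (z i) = 0).card : ℝ) ≤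
      (J.card.factorial : ℝ) ^ c * √M ^ J.card * M ^ (Fintype.card ι - J.card) := by
  have hM0 : 0 ≤ M := le_trans (by positivity) hM
  let e : Fin J.card ≃ J := J.equivFin.symm
  have h1 : (Finset.univ.filter fun z : ι → Fin c → A =>
      (∀ i, z i ∈ X) ∧ ∑ i ∈ J, charVec (z i) = 0).card ≤
      (((Fintype.piFinset fun _ : Fin J.card => X).filter fun z => ∑ i, charVec (z i) = 0) ×ˢ
        (Fintype.piFinset fun _ : {i // i ∉ J} => X)).card := by
    refine Finset.card_le_card_of_injOn (fun z => (fun i => z (e i), fun i => z i)) ?_ ?_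
    · intro z hz
      simp only [Finset.coe_filter, Set.mem_ofPred_eq, Finset.mem_univ, true_and,
        Finset.coe_product, Set.mem_prod, Fintype.mem_piFinset, Finset.mem_coe,
        Fintype.coe_piFinset, Set.mem_pi] at hz ⊢
      refine ⟨⟨fun i => hz.1 _, ?_⟩, fun i _ => hz.1 _⟩
      rw [← hz.2, ← Finset.sum_coe_sort J]
      exact Fintype.sum_equiv e _ _ fun i => rfl
    · intro z _ z' _ h
      simp only [Prod.mk.injEq] at h
      funext i
      by_cases hi : i ∈ J
      · have := congrFun h.1 (e.symm ⟨i, hi⟩)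
        simpa using this
      · exact congrFun h.2 ⟨i, hi⟩
  have h2 := card_zeroSum_le J.card c (fun _ => X)
  have h3 : (Fintype.piFinset fun _ : {i // i ∉ J} => X).card =
      X.card ^ (Fintype.card ι - J.card) := by
    rw [Fintype.card_piFinset, Finset.prod_const, Finset.card_univ]
    congr 1
    simp [Fintype.card_subtype_compl]
  calc _ ≤ ((_ : ℕ) : ℝ) := Nat.cast_le.2 h1
    _ ≤ ((J.card.factorial : ℝ) ^ c * √(X.card : ℝ) ^ J.card) *
        (X.card : ℝ) ^ (Fintype.card ι - J.card) := by
      rw [Finset.card_product, h3]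
      push_cast
      refine mul_le_mul_of_nonneg_right ?_ (by positivity)
      simpa using h2
    _ ≤ _ := by gcongr

/-- A new key is a sum only of an odd number, at least three, of other keys: each block of a key
vector has coordinate sum one, and distinct keys have distinct vectors. -/
lemma odd_three_le_of_sum_eq {c p : ℕ} (hc : 0 < c) (x : Fin p → Fin c → A) (y : Fin c → A)
    (hy : ∀ a, y ≠ x a) (I : Finset (Fin p)) (h : charVec y = ∑ a ∈ I, charVec (x a)) :
    Odd I.card ∧ 3 ≤ I.card := by
  have hodd : Odd I.card := by
    have h1 := congrArg (fun w : Fin c → A → ZMod 2 => ∑ z, w ⟨0, hc⟩ z) h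
    simp only [Finset.sum_apply] at h1
    rw [Finset.sum_comm] at h1
    simp only [charVec, Finset.sum_pi_single', Finset.mem_univ, if_true, Finset.sum_const,
      nsmul_eq_mul, mul_one] at h1
    rw [← ZMod.natCast_eq_one_iff_odd]
    exact h1.symm
  refine ⟨hodd, ?_⟩
  by_contra hlt
  have h1 : I.card = 1 := by
    obtain ⟨k, hk⟩ := hodd; omega
  obtain ⟨a, rfl⟩ := Finset.card_eq_one.1 h1
  rw [Finset.sum_singleton] at h
  exact hy a (charVec_injective h)

/-- The bound of `card_partial_zeroSum_le` for a zero sum of `2 * t ≥ 4` among `p + 1` keys; the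
factorial is at most `24` if `t = 2` and is absorbed by `M ^ (t - 2)` otherwise. -/
lemma numeric_dep (c t p : ℕ) (M : ℝ) (ht : 2 ≤ t) (htp : 2 * t ≤ p + 1)
    (hM : ((p : ℝ) + 1) ^ (6 * c) ≤ M) :
    ((2 * t).factorial : ℝ) ^ c * √M ^ (2 * t) * M ^ (p + 1 - 2 * t) ≤ 24 ^ c * M ^ (p - 1) := by
  have hM1 : 1 ≤ M := le_trans (one_le_pow₀ (by linarith [Nat.cast_nonneg (α := ℝ) p])) hM
  have hM0 : 0 ≤ M := by linarith
  have h1 : ((2 * t).factorial : ℝ) ^ c ≤ 24 ^ c * M ^ (t - 2) := by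
    rcases Nat.lt_or_ge 2 t with h3 | h3
    · have h4 : ((2 * t).factorial : ℝ) ≤ ((p : ℝ) + 1) ^ (2 * t) := by
        have : (2 * t).factorial ≤ (p + 1) ^ (2 * t) :=
          (Nat.factorial_le_pow _).trans (Nat.pow_le_pow_left htp _)
        exact_mod_cast this
      calc ((2 * t).factorial : ℝ) ^ c ≤ (((p : ℝ) + 1) ^ (2 * t)) ^ c := by gcongr
        _ = ((p : ℝ) + 1) ^ (2 * t * c) := by rw [← pow_mul]
        _ ≤ ((p : ℝ) + 1) ^ (6 * c * (t - 2)) := by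
          refine pow_le_pow_right₀ (by linarith [Nat.cast_nonneg (α := ℝ) p]) ?_
          obtain ⟨k, rfl⟩ : ∃ k, t = k + 3 := ⟨t - 3, by omega⟩
          have : k + 3 - 2 = k + 1 := by omega
          rw [this]; nlinarith [Nat.zero_le (c * k)]
        _ = (((p : ℝ) + 1) ^ (6 * c)) ^ (t - 2) := by rw [← pow_mul]
        _ ≤ M ^ (t - 2) := by gcongr
        _ ≤ _ := le_mul_of_one_le_left (by positivity) (one_le_pow₀ (by norm_num))
    · have : t = 2 := by omega
      subst this
      simp [Nat.factorial]
  have h2 : √M ^ (2 * t) = M ^ t := by rw [pow_mul, Real.sq_sqrt hM0]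
  rw [h2]
  calc _ ≤ 24 ^ c * M ^ (t - 2) * M ^ t * M ^ (p + 1 - 2 * t) := by gcongr
    _ = 24 ^ c * M ^ (p - 1) := by
      rw [mul_assoc, mul_assoc, ← pow_add, ← pow_add]
      congr 2; omega

open Classical in
/-- Pairs of a `p`-tuple of keys and a new key in its span are fewer than all such pairs by a factor
of about `M ^ 2`. -/
lemma card_dependent_le {c : ℕ} (hc : 0 < c) (p : ℕ) (X : Finset (Fin c → A)) (M : ℝ)
    (hXM : (X.card : ℝ) ≤ M) (hM : ((p : ℝ) + 1) ^ (6 * c) ≤ M) :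
    ((Finset.univ.filter fun w : (Fin p → Fin c → A) × (Fin c → A) =>
      (∀ a, w.1 a ∈ X) ∧ w.2 ∈ X ∧ (∀ a, w.2 ≠ w.1 a) ∧
        charVec w.2 ∈ Submodule.span (ZMod 2) (Set.range (charVec ∘ w.1))).card : ℝ) ≤
      2 ^ p * 24 ^ c * M ^ (p - 1) := by
  have hM0 : 0 ≤ M := le_trans (by positivity) hXM
  -- `D I` collects the pairs whose new key is the sum of the keys indexed by `I`.
  let D : Finset (Fin p) → Finset ((Fin p → Fin c → A) × (Fin c → A)) := fun I =>
    Finset.univ.filter fun w => (∀ a, w.1 a ∈ X) ∧ w.2 ∈ X ∧ (∀ a, w.2 ≠ w.1 a) ∧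
        charVec w.2 = ∑ a ∈ I, charVec (w.1 a)
  have hsub : (Finset.univ.filter fun w : (Fin p → Fin c → A) × (Fin c → A) =>
      (∀ a, w.1 a ∈ X) ∧ w.2 ∈ X ∧ (∀ a, w.2 ≠ w.1 a) ∧
        charVec w.2 ∈ Submodule.span (ZMod 2) (Set.range (charVec ∘ w.1))) ⊆
      (Finset.univ : Finset (Finset (Fin p))).biUnion D := by
    rintro ⟨x, y⟩ hw
    simp only [Finset.mem_filter, Finset.mem_univ, true_and, Finset.mem_biUnion, D] at hw ⊢
    obtain ⟨h1, h2, h3, h4⟩ := hw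
    obtain ⟨f, hf⟩ := (Submodule.mem_span_range_iff_exists_fun (ZMod 2)).1 h4
    refine ⟨Finset.univ.filter fun a => f a ≠ 0, h1, h2, h3, ?_⟩
    rw [← hf, Finset.sum_filter]
    refine Finset.sum_congr rfl fun a _ => ?_
    have : f a = 0 ∨ f a = 1 := by
      generalize f a = q; clear hf; revert q; decide
    rcases this with h | h <;> simp [h]
  have hD : ∀ I, ((D I).card : ℝ) ≤ 24 ^ c * M ^ (p - 1) := by
    intro I
    rcases (D I).eq_empty_or_nonempty with h | ⟨⟨x0, y0⟩, h0⟩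
    · rw [h]; simp only [Finset.card_empty, Nat.cast_zero]; positivity
    simp only [Finset.mem_filter, Finset.mem_univ, true_and, D] at h0
    obtain ⟨hodd, h3⟩ := odd_three_le_of_sum_eq hc x0 y0 h0.2.2.1 I h0.2.2.2
    have hIp : I.card ≤ p := by simpa using I.card_le_univ
    have hle : (D I).card ≤ (Finset.univ.filter fun z : Option (Fin p) → Fin c → A =>
        (∀ i, z i ∈ X) ∧ ∑ i ∈ Finset.insertNone I, charVec (z i) = 0).card := by
      refine Finset.card_le_card_of_injOn (fun w o => o.elim w.2 w.1) ?_ ?_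
      · rintro ⟨x, y⟩ hw
        simp only [Finset.mem_univ, true_and, D, Finset.coe_filter,
          Set.mem_ofPred_eq] at hw ⊢
        refine ⟨?_, ?_⟩
        · rintro (_ | i)
          · exact hw.2.1
          · exact hw.1 i
        · rw [Finset.sum_insertNone]
          simp only [Option.elim_none, Option.elim_some]
          rw [← hw.2.2.2]
          funext i z
          exact CharTwo.add_self_eq_zero _
      · rintro ⟨x, y⟩ _ ⟨x', y'⟩ _ h
        have h1 := congrFun h none
        have h2 : x = x' := funext fun i => congrFun h (some i)
        simp only [Option.elim_none] at h1
        rw [h1, h2]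
    have h4 := card_partial_zeroSum_le (Finset.insertNone I) X M hXM
    rw [Finset.card_insertNone, Fintype.card_option, Fintype.card_fin] at h4
    obtain ⟨k, hk⟩ := hodd
    have h5 : I.card + 1 = 2 * (k + 1) := by omega
    rw [h5] at h4
    have h6 := numeric_dep c (k + 1) p M (by omega) (by omega) hM
    exact (Nat.cast_le.2 hle).trans (h4.trans h6)
  calc _ ≤ (((Finset.univ : Finset (Finset (Fin p))).biUnion D).card : ℝ) :=
        Nat.cast_le.2 (Finset.card_le_card hsub)
    _ ≤ ((∑ I : Finset (Fin p), (D I).card : ℕ) : ℝ) := Nat.cast_le.2 Finset.card_biUnion_le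
    _ ≤ ∑ I : Finset (Fin p), (24 : ℝ) ^ c * M ^ (p - 1) := by
      push_cast
      exact Finset.sum_le_sum fun I _ => hD I
    _ = _ := by
      rw [Finset.sum_const, Finset.card_univ, Fintype.card_finset, Fintype.card_fin,
        nsmul_eq_mul]
      push_cast
      ring

end Dependent

/-! ### Counting tables through ordered key sequences with symmetries -/

section Master

variable {c d b p : ℕ} {A : Type*} [DecidableEq A] [Fintype A]

/-- Each key after the first agrees with its parent key under at least one of the hash functions. -/
def Adj (par : Fin p → Fin p) (x : Fin p → Fin c → A)
    (T : Fin d → Fin c → A → (Fin b → ZMod 2)) : Prop :=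
  ∀ a : Fin p, 0 < a.val → ∃ j, simpleTab (T j) (x a) = simpleTab (T j) (x (par a))

open Classical in
/-- The union over the `d ^ p` choices of a witnessing hash function for every key. -/
lemma adj_count (hd : 0 < d) (hp : 1 ≤ p) (x : Fin p → Fin c → A)
    (hx : LinearIndependent (ZMod 2) (charVec ∘ x)) (par : Fin p → Fin p)
    (hpar : ∀ a : Fin p, 0 < a.val → par a < a) :
    (Finset.univ.filter fun T : Fin d → Fin c → A → (Fin b → ZMod 2) => Adj par x T).card *
      (2 ^ b) ^ (p - 1) ≤ d ^ p * Fintype.card (Fin d → Fin c → A → (Fin b → ZMod 2)) := by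
  have hsub : (Finset.univ.filter fun T : Fin d → Fin c → A → (Fin b → ZMod 2) => Adj par x T) ⊆
      (Finset.univ : Finset (Fin p → Fin d)).biUnion fun side =>
        Finset.univ.filter fun T : Fin d → Fin c → A → (Fin b → ZMod 2) =>
          ∀ a : Fin p, 0 < a.val → a.val < (p - 1) + 1 →
            simpleTab (T (side a)) (x a) = simpleTab (T (side a)) (x (par a)) := by
    intro T hT
    simp only [Finset.mem_filter, Finset.mem_univ, true_and, Finset.mem_biUnion] at hT ⊢
    have : ∀ a : Fin p, ∃ j : Fin d, 0 < a.val →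
        simpleTab (T j) (x a) = simpleTab (T j) (x (par a)) := by
      intro a
      by_cases ha : 0 < a.val
      · obtain ⟨j, hj⟩ := hT a ha
        exact ⟨j, fun _ => hj⟩
      · exact ⟨⟨0, hd⟩, fun h => absurd h ha⟩
    choose side hside using this
    exact ⟨side, fun a ha _ => hside a ha⟩
  calc _ ≤ (∑ side : Fin p → Fin d, (Finset.univ.filter fun
          T : Fin d → Fin c → A → (Fin b → ZMod 2) =>
          ∀ a : Fin p, 0 < a.val → a.val < (p - 1) + 1 →
            simpleTab (T (side a)) (x a) = simpleTab (T (side a)) (x (par a))).card) *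
            (2 ^ b) ^ (p - 1) :=
        Nat.mul_le_mul_right _ ((Finset.card_le_card hsub).trans Finset.card_biUnion_le)
    _ ≤ ∑ _side : Fin p → Fin d, Fintype.card (Fin d → Fin c → A → (Fin b → ZMod 2)) := by
        rw [Finset.sum_mul]
        exact Finset.sum_le_sum fun side _ =>
          rank_count x hx par hpar side (p - 1) (by omega)
    _ = _ := by simp

open Classical in
/-- Double counting of pairs (table, admissible key sequence): permuting the keys inside a block
of the sequence preserves all adjacency constraints, so every bad table is counted at least once
for every permutation in `G`. -/
lemma master_count {Y : Type*} (hd : 0 < d) (hp : 1 ≤ p) (par : Fin p → Fin p)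
    (hpar : ∀ a : Fin p, 0 < a.val → par a < a) (blk : Fin p → ℕ)
    (hb1 : ∀ a e, blk a = blk e → par a = par e)
    (hb2 : ∀ a e, blk (par a) = blk e → e = par a)
    (hb0 : ∀ a e : Fin p, a.val = 0 → blk a = blk e → e = a)
    (W : Finset ((Fin p → Fin c → A) × Y))
    (hW : ∀ w ∈ W, Function.Injective w.1 ∧ LinearIndependent (ZMod 2) (charVec ∘ w.1))
    (hWG : ∀ w ∈ W, ∀ σ : Equiv.Perm (Fin p), blk ∘ σ = blk → (w.1 ∘ σ, w.2) ∈ W)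
    (Bad : Finset (Fin d → Fin c → A → (Fin b → ZMod 2)))
    (hBad : ∀ T ∈ Bad, ∃ w ∈ W, Adj par w.1 T) :
    Bad.card * (Finset.univ.filter fun σ : Equiv.Perm (Fin p) => blk ∘ σ = blk).card *
        (2 ^ b) ^ (p - 1) ≤
      W.card * (d ^ p * Fintype.card (Fin d → Fin c → A → (Fin b → ZMod 2))) := by
  set G := Finset.univ.filter fun σ : Equiv.Perm (Fin p) => blk ∘ σ = blk with hG
  have h1 : Bad.card * G.card ≤ ∑ T ∈ Bad, (W.filter fun w => Adj par w.1 T).card := by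
    rw [← smul_eq_mul]
    refine Finset.card_nsmul_le_sum _ _ _ fun T hT => ?_
    obtain ⟨w, hw, hadj⟩ := hBad T hT
    refine Finset.card_le_card_of_injOn (fun σ => (w.1 ∘ σ, w.2)) ?_ ?_
    · intro σ hσ
      have hσ' : blk ∘ σ = blk := by simpa [hG] using hσ
      have hσa : ∀ a, blk (σ a) = blk a := fun a => congrFun hσ' a
      simp only [Finset.coe_filter, Set.mem_ofPred_eq]
      refine ⟨hWG w hw σ hσ', fun a ha => ?_⟩
      have h0 : 0 < (σ a).val := by
        by_contra h0
        have := hb0 (σ a) a (by omega) (hσa a)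
        rw [← this] at h0
        omega
      obtain ⟨j, hj⟩ := hadj (σ a) h0
      refine ⟨j, ?_⟩
      have e1 : par (σ a) = par a := hb1 _ _ (hσa a)
      have e2 : σ (par a) = par a := hb2 a _ (hσa (par a)).symm
      simp only [Function.comp_apply, e2]
      rw [hj, e1]
    · intro σ _ τ _ h
      simp only [Prod.mk.injEq, and_true] at h
      ext a
      exact congrArg Fin.val ((hW w hw).1 (congrFun h a))
  have h2 : ∑ T ∈ Bad, (W.filter fun w => Adj par w.1 T).card ≤
      ∑ w ∈ W, (Finset.univ.filter fun T : Fin d → Fin c → A → (Fin b → ZMod 2) =>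
        Adj par w.1 T).card := by
    refine (Finset.sum_le_univ_sum_of_nonneg (fun _ => Nat.zero_le _)).trans (le_of_eq ?_)
    simp only [Finset.card_filter]
    rw [Finset.sum_comm]
  calc _ ≤ (∑ w ∈ W, (Finset.univ.filter fun T : Fin d → Fin c → A → (Fin b → ZMod 2) =>
        Adj par w.1 T).card) * (2 ^ b) ^ (p - 1) := Nat.mul_le_mul_right _ (h1.trans h2)
    _ ≤ ∑ _w ∈ W, d ^ p * Fintype.card (Fin d → Fin c → A → (Fin b → ZMod 2)) := by
        rw [Finset.sum_mul]
        exact Finset.sum_le_sum fun w hw => adj_count hd hp w.1 (hW w hw).2 par hpar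
    _ = _ := by simp

end Master

section Layout

variable (R r : ℕ)

/-- Position of skeleton key number `v` in the key sequence: `0` for the top edge (`v = 0`), and
the first place of unit `v - 1` otherwise; positions `1, …, R` hold the keys of the root star and
each unit occupies `r + 1` consecutive places. -/
def skPos (v : ℕ) : ℕ := if v = 0 then 0 else R + 1 + (r + 1) * (v - 1)

/-- The parent position: root-star keys hang off position `0`, the skeleton key of unit `i` off
skeleton key number `v i`, and the other keys of a unit off the skeleton key of that unit. -/
def parN (v : ℕ → ℕ) (a : ℕ) : ℕ :=
  if a ≤ R then 0
  else if (a - (R + 1)) % (r + 1) = 0 then skPos R r (v ((a - (R + 1)) / (r + 1)))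
  else skPos R r ((a - (R + 1)) / (r + 1) + 1)

/-- Labels of the blocks of interchangeable positions: each skeleton key forms its own block
(even labels), the root star is block `1`, and the pendant keys of unit `i` are block `2 * i + 3`. -/
def blkN (a : ℕ) : ℕ :=
  if a = 0 then 0 else if a ≤ R then 1
  else if (a - (R + 1)) % (r + 1) = 0 then 2 * ((a - (R + 1)) / (r + 1)) + 2
  else 2 * ((a - (R + 1)) / (r + 1)) + 3

variable {R r}

lemma skPos_succ (v : ℕ) : skPos R r (v + 1) = R + 1 + (r + 1) * v := by simp [skPos]

lemma blkN_skPos (v : ℕ) : blkN R r (skPos R r v) = 2 * v := by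
  cases v with
  | zero => simp [skPos, blkN]
  | succ v =>
    rw [skPos_succ, blkN, if_neg (by omega), if_neg (by omega)]
    simp; ring

lemma eq_skPos_of_blkN {a v : ℕ} (h : blkN R r a = 2 * v) : a = skPos R r v := by
  unfold blkN at h
  split_ifs at h with h1 h2 h3
  · have : v = 0 := by omega
    simp [h1, this, skPos]
  · omega
  · have hv : v = (a - (R + 1)) / (r + 1) + 1 := by omega
    rw [hv, skPos_succ]
    have := Nat.div_add_mod (a - (R + 1)) (r + 1)
    omega
  · omega

lemma parN_eq_skPos (v : ℕ → ℕ) (a : ℕ) : ∃ w, parN R r v a = skPos R r w := by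
  unfold parN
  split_ifs
  · exact ⟨0, by simp [skPos]⟩
  · exact ⟨_, rfl⟩
  · exact ⟨_, rfl⟩

lemma skPos_mono {v w : ℕ} (h : v ≤ w) : skPos R r v ≤ skPos R r w := by
  rcases v with _ | v
  · simp [skPos]
  · obtain ⟨w, rfl⟩ : ∃ w', w = w' + 1 := ⟨w - 1, by omega⟩
    rw [skPos_succ, skPos_succ]
    have := Nat.mul_le_mul_left (r + 1) (show v ≤ w by omega)
    omega

lemma parN_lt {v : ℕ → ℕ} (hv : ∀ i, v i ≤ i) {a : ℕ} (ha : 0 < a) : parN R r v a < a := by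
  unfold parN
  have hdm := Nat.div_add_mod (a - (R + 1)) (r + 1)
  split_ifs with h1 h2
  · exact ha
  · refine lt_of_le_of_lt (skPos_mono (hv _)) ?_
    rcases hq : (a - (R + 1)) / (r + 1) with _ | q
    · simpa [skPos] using ha
    · rw [skPos_succ]
      rw [hq, mul_add] at hdm
      omega
  · rw [skPos_succ]
    omega

lemma parN_congr (v : ℕ → ℕ) {a e : ℕ} (h : blkN R r a = blkN R r e) :
    parN R r v a = parN R r v e := by
  unfold blkN at h
  unfold parN
  split_ifs at h ⊢ <;> first | rfl | omega | skip
  all_goals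
    congr 1
    first
    | omega
    | (congr 1; omega)

lemma eq_parN_of_blkN (v : ℕ → ℕ) {a e : ℕ} (h : blkN R r (parN R r v a) = blkN R r e) :
    e = parN R r v a := by
  obtain ⟨w, hw⟩ := parN_eq_skPos (R := R) (r := r) v a
  rw [hw, blkN_skPos] at h
  rw [hw]
  exact eq_skPos_of_blkN h.symm

lemma blkN_of_unit {i t : ℕ} (ht : 0 < t) (htr : t < r + 1) :
    blkN R r (R + 1 + (r + 1) * i + t) = 2 * i + 3 := by
  have e : R + 1 + (r + 1) * i + t - (R + 1) = t + (r + 1) * i := by omega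
  rw [blkN, if_neg (by omega), if_neg (by omega), e, Nat.add_mul_mod_self_left,
    Nat.mod_eq_of_lt htr, if_neg (by omega), Nat.add_mul_div_left _ _ (by omega),
    Nat.div_eq_of_lt htr]
  simp

open Classical in
/-- The permutations preserving all blocks number at least `R! · (r!)^q` once `q` complete units
fit into the sequence. -/
lemma blk_perm_card (p q : ℕ) (h : R + 1 + (r + 1) * q ≤ p) :
    R.factorial * r.factorial ^ q ≤
      (Finset.univ.filter fun σ : Equiv.Perm (Fin p) =>
        (fun a : Fin p => blkN R r a.val) ∘ σ = fun a : Fin p => blkN R r a.val).card := by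
  set f : Fin p → ℕ := fun a => blkN R r a.val with hf
  rw [← Fintype.card_subtype, DomMulAct.stabilizer_card']
  set S : Finset ℕ := insert 1 ((Finset.range q).image fun i => 2 * i + 3) with hS
  have e1 : ∏ i ∈ Finset.univ.image f, (Fintype.card {a // f a = i}).factorial =
      ∏ i ∈ Finset.univ.image f ∪ S, (Fintype.card {a // f a = i}).factorial := by
    refine Finset.prod_subset Finset.subset_union_left fun i _ hi => ?_
    have : IsEmpty {a // f a = i} :=
      ⟨fun a => hi (Finset.mem_image.2 ⟨a.1, Finset.mem_univ _, a.2⟩)⟩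
    simp
  rw [e1]
  have e2 : ∏ i ∈ S, (Fintype.card {a // f a = i}).factorial ≤
      ∏ i ∈ Finset.univ.image f ∪ S, (Fintype.card {a // f a = i}).factorial :=
    Finset.prod_le_prod_of_subset_of_one_le' Finset.subset_union_right
      fun i _ _ => Nat.factorial_pos _
  refine le_trans ?_ e2
  rw [hS, Finset.prod_insert (by simp), Finset.prod_image (by intro a _ e _ h; simpa using h)]
  refine Nat.mul_le_mul ?_ ?_
  · refine Nat.factorial_le ?_
    let g : Fin R → {a : Fin p // f a = 1} := fun t => ⟨⟨t.val + 1, by omega⟩, by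
      simp only [hf, blkN]
      rw [if_neg (by omega), if_pos (by omega)]⟩
    simpa using Fintype.card_le_of_injective g (by
      intro s t h
      simp only [g, Subtype.mk.injEq, Fin.mk.injEq] at h
      exact Fin.ext (by omega))
  · have : r.factorial ^ q = ∏ _i ∈ Finset.range q, r.factorial := by simp
    rw [this]
    refine Finset.prod_le_prod' fun i hi => Nat.factorial_le ?_
    have hi' : i + 1 ≤ q := Finset.mem_range.1 hi
    have hm := Nat.mul_le_mul_left (r + 1) hi'
    rw [mul_add] at hm
    let g : Fin r → {a : Fin p // f a = 2 * i + 3} := fun t =>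
      ⟨⟨R + 1 + (r + 1) * i + (t.val + 1), by omega⟩, by
        simp only [hf]
        exact blkN_of_unit (by omega) (by omega)⟩
    simpa using Fintype.card_le_of_injective g (by
      intro s t h
      simp only [g, Subtype.mk.injEq, Fin.mk.injEq] at h
      exact Fin.ext (by omega))

end Layout

/-! ### Skeletons of Fibonacci trees -/

section Tree

variable {d : ℕ}

/-- The top edge of `S_i(n + 1)`. -/
def topE (n : ℕ) (i : Fin d) : Finset (List (Fin d)) :=
  Finset.univ.image fun j : Fin d =>
    if j < i then j :: List.replicate (n + 1) j else j :: List.replicate n j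

/-- The image in the `j`-th copy of an edge of that copy. -/
abbrev liftE (j : Fin d) (e : Finset (List (Fin d))) : Finset (List (Fin d)) := e.image (List.cons j)

lemma lift_injective (j : Fin d) : Function.Injective (liftE j) :=
  Finset.image_injective List.cons_injective

lemma lift_ne_lift {j j' : Fin d} (h : j ≠ j') {e e' : Finset (List (Fin d))} (he : e.Nonempty) :
    liftE j e ≠ liftE j' e' := by
  intro heq
  obtain ⟨x, hx⟩ := he
  have : j :: x ∈ liftE j' e' := heq ▸ Finset.mem_image_of_mem _ hx
  obtain ⟨y, _, hy⟩ := Finset.mem_image.1 this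
  exact h (List.cons.inj hy).1.symm

lemma cons_mem_topE (n : ℕ) (i j : Fin d) :
    j :: List.replicate (if j < i then n + 1 else n) j ∈ topE n i := by
  refine Finset.mem_image.2 ⟨j, Finset.mem_univ _, ?_⟩
  split_ifs <;> rfl

lemma topE_ne_lift (hd : 2 ≤ d) (n : ℕ) (i j : Fin d) (e : Finset (List (Fin d))) :
    topE n i ≠ liftE j e := by
  intro heq
  have : Nontrivial (Fin d) := Fin.nontrivial_iff_two_le.2 hd
  obtain ⟨j', hj'⟩ := exists_ne j
  have := heq ▸ cons_mem_topE n i j'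
  obtain ⟨y, _, hy⟩ := Finset.mem_image.1 this
  exact hj' (List.cons.inj hy).1.symm

lemma topE_mem_SEdges [NeZero d] (n : ℕ) (i : Fin d) : topE n i ∈ SEdges d (n + 1) i := by
  rw [SEdges]
  exact Finset.mem_insert_self _ _

lemma lift_mem_SEdges [NeZero d] {n : ℕ} {i j : Fin d} {e : Finset (List (Fin d))}
    (he : e ∈ SEdges d (if j < i then n + 1 else n) j) : liftE j e ∈ SEdges d (n + 1) i := by
  rw [SEdges]
  refine Finset.mem_insert_of_mem (Finset.mem_biUnion.2 ⟨j, Finset.mem_univ _, ?_⟩)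
  split_ifs at he ⊢ <;> exact Finset.mem_image_of_mem _ he

lemma SEdges_nonempty [NeZero d] (n : ℕ) (i : Fin d) : ∀ e ∈ SEdges d n i, e.Nonempty := by
  induction n, i using SEdges.induct with
  | case1 i => simp [SEdges]
  | case2 k i ih1 ih2 =>
    intro e he
    rw [SEdges] at he
    rcases Finset.mem_insert.1 he with rfl | he
    · exact ⟨_, cons_mem_topE k i i⟩
    · obtain ⟨j, _, hj⟩ := Finset.mem_biUnion.1 he
      split_ifs at hj with h
      · obtain ⟨e', he', rfl⟩ := Finset.mem_image.1 hj
        exact (ih1 j h e' he').image _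
      · obtain ⟨e', he', rfl⟩ := Finset.mem_image.1 hj
        exact (ih2 j e' he').image _

/-- The `n` edges of `S_j(n)` containing its root. -/
def rootStar (j : Fin d) : ℕ → List (Finset (List (Fin d)))
  | 0 => []
  | n + 1 => topE n j :: (rootStar j n).map (liftE j)

/-- The `r` lowest edges of `S_j(r + k)` containing its root. -/
def lowS (r : ℕ) (j : Fin d) : ℕ → List (Finset (List (Fin d)))
  | 0 => rootStar j r
  | k + 1 => (lowS r j k).map (liftE j)

lemma length_rootStar (j : Fin d) (n : ℕ) : (rootStar j n).length = n := by
  induction n with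
  | zero => rfl
  | succ n ih => simp [rootStar, ih]

lemma length_lowS (r : ℕ) (j : Fin d) (k : ℕ) : (lowS r j k).length = r := by
  induction k with
  | zero => exact length_rootStar j r
  | succ k ih => simp [lowS, ih]

lemma rootStar_nodup (hd : 2 ≤ d) (j : Fin d) (n : ℕ) : (rootStar j n).Nodup := by
  induction n with
  | zero => exact List.nodup_nil
  | succ n ih =>
    refine List.nodup_cons.2 ⟨?_, ih.map (lift_injective j)⟩
    intro h
    obtain ⟨e, _, he⟩ := List.mem_map.1 h
    exact topE_ne_lift hd n j j e he.symm

lemma lowS_nodup (hd : 2 ≤ d) (r : ℕ) (j : Fin d) (k : ℕ) : (lowS r j k).Nodup := by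
  induction k with
  | zero => exact rootStar_nodup hd j r
  | succ k ih => exact ih.map (lift_injective j)

lemma mem_rootStar [NeZero d] (j : Fin d) (n : ℕ) : ∀ e ∈ rootStar j n,
    e ∈ SEdges d n j ∧ List.replicate n j ∈ e := by
  induction n with
  | zero => simp [rootStar]
  | succ n ih =>
    intro e he
    rcases List.mem_cons.1 he with rfl | he
    · refine ⟨topE_mem_SEdges n j, ?_⟩
      simpa [List.replicate_succ] using cons_mem_topE n j j
    · obtain ⟨e', he', rfl⟩ := List.mem_map.1 he
      refine ⟨lift_mem_SEdges (by simpa using (ih e' he').1), ?_⟩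
      exact Finset.mem_image_of_mem _ (ih e' he').2

lemma mem_lowS [NeZero d] (r : ℕ) (j : Fin d) (k : ℕ) : ∀ e ∈ lowS r j k,
    e ∈ SEdges d (r + k) j ∧ List.replicate (r + k) j ∈ e := by
  induction k with
  | zero => exact mem_rootStar j r
  | succ k ih =>
    intro e he
    obtain ⟨e', he', rfl⟩ := List.mem_map.1 he
    refine ⟨lift_mem_SEdges (n := r + k) (by simpa using (ih e' he').1), ?_⟩
    exact Finset.mem_image_of_mem _ (ih e' he').2

/-- A unit: a skeleton edge together with its list of pendant edges. -/
abbrev EUnit (d : ℕ) := Finset (List (Fin d)) × List (Finset (List (Fin d)))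

/-- All edges of a list of units. -/
def allE (L : List (EUnit d)) : List (Finset (List (Fin d))) := L.flatMap fun u => u.1 :: u.2

/-- The image of a unit in the `j`-th copy. -/
def liftU (j : Fin d) (u : EUnit d) : EUnit d := (liftE j u.1, u.2.map (liftE j))

/-- Every skeleton edge meets `V` or an earlier skeleton edge. -/
def Conn : Set (List (Fin d)) → List (EUnit d) → Prop
  | _, [] => True
  | V, u :: L => (∃ x ∈ u.1, x ∈ V) ∧ Conn (V ∪ ↑u.1) L

lemma Conn.mono {V V' : Set (List (Fin d))} {L : List (EUnit d)} (h : Conn V L) (hV : V ⊆ V') :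
    Conn V' L := by
  induction L generalizing V V' with
  | nil => trivial
  | cons u L ih =>
    obtain ⟨⟨x, hx, hxV⟩, h2⟩ := h
    exact ⟨⟨x, hx, hV hxV⟩, ih h2 (Set.union_subset_union_left _ hV)⟩

lemma Conn.append {V : Set (List (Fin d))} {L L' : List (EUnit d)} (h : Conn V L)
    (h' : Conn V L') : Conn V (L ++ L') := by
  induction L generalizing V with
  | nil => exact h'
  | cons u L ih => exact ⟨h.1, ih h.2 (h'.mono Set.subset_union_left)⟩

lemma Conn.flatMap {ι : Type*} {V : Set (List (Fin d))} (F : ι → List (EUnit d)) (l : List ι)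
    (h : ∀ j ∈ l, Conn V (F j)) : Conn V (l.flatMap F) := by
  induction l with
  | nil => trivial
  | cons j l ih =>
    rw [List.flatMap_cons]
    exact (h j List.mem_cons_self).append (ih fun j' hj' => h j' (List.mem_cons_of_mem _ hj'))

lemma Conn.map {V : Set (List (Fin d))} {L : List (EUnit d)} (j : Fin d) (h : Conn V L) :
    Conn (List.cons j '' V) (L.map (liftU j)) := by
  induction L generalizing V with
  | nil => trivial
  | cons u L ih =>
    obtain ⟨⟨x, hx, hxV⟩, h2⟩ := h
    refine ⟨⟨j :: x, Finset.mem_image_of_mem _ hx, Set.mem_image_of_mem _ hxV⟩, ?_⟩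
    have := ih h2
    rw [Set.image_union] at this
    simpa [liftU, liftE] using this

/-- In a connected list of units, the `i`-th skeleton edge meets `V` or an earlier one. -/
lemma Conn.getElem {V : Set (List (Fin d))} {L : List (EUnit d)} (h : Conn V L) (i : ℕ)
    (hi : i < L.length) : (∃ x ∈ L[i].1, x ∈ V) ∨
      ∃ (q : ℕ) (hq : q < i), ∃ x ∈ L[i].1, x ∈ (L[q]'(hq.trans hi)).1 := by
  induction L generalizing V i with
  | nil => simp at hi
  | cons u L ih =>
    rcases i with _ | i
    · exact Or.inl h.1
    · rcases ih h.2 i (by simpa using hi) with ⟨x, hx, hxV | hxu⟩ | ⟨q, hq, x, hx, hxq⟩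
      · exact Or.inl ⟨x, hx, hxV⟩
      · exact Or.inr ⟨0, by omega, x, hx, hxu⟩
      · exact Or.inr ⟨q + 1, by omega, x, hx, hxq⟩

lemma allE_map (j : Fin d) (L : List (EUnit d)) :
    allE (L.map (liftU j)) = (allE L).map (liftE j) := by
  simp [allE, liftU, List.flatMap_map, List.map_flatMap]

lemma allE_flatMap {ι : Type*} (l : List ι) (F : ι → List (EUnit d)) :
    allE (l.flatMap F) = l.flatMap fun j => allE (F j) := by
  simp [allE, List.flatMap_assoc]

/-- `L` is a list of units inside `S_i(r + k)`, reachable from the root, each with `r` pendant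
edges, using pairwise distinct edges none of which is one of the `r` lowest root edges. -/
structure IsSkel [NeZero d] (r k : ℕ) (i : Fin d) (L : List (EUnit d)) : Prop where
  conn : Conn {List.replicate (r + k) i} L
  pend : ∀ u ∈ L, u.2.length = r ∧ ∀ e ∈ u.2, ∃ x ∈ e, x ∈ u.1
  nodup : (allE L).Nodup
  mem : ∀ e ∈ allE L, e ∈ SEdges d (r + k) i ∧ e ∉ lowS r i k

lemma pend_map {r : ℕ} (j : Fin d) {L : List (EUnit d)}
    (h : ∀ u ∈ L, u.2.length = r ∧ ∀ e ∈ u.2, ∃ x ∈ e, x ∈ u.1) :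
    ∀ u ∈ L.map (liftU j), u.2.length = r ∧ ∀ e ∈ u.2, ∃ x ∈ e, x ∈ u.1 := by
  intro u hu
  obtain ⟨u', hu', rfl⟩ := List.mem_map.1 hu
  refine ⟨by simpa [liftU] using (h u' hu').1, fun e he => ?_⟩
  obtain ⟨e', he', rfl⟩ := List.mem_map.1 he
  obtain ⟨x, hx, hx'⟩ := (h u' hu').2 e' he'
  exact ⟨j :: x, Finset.mem_image_of_mem _ hx, Finset.mem_image_of_mem _ hx'⟩

/-- One recursion step: the top edge, whose pendant edges are the reserved low root edges of
another copy, followed by the skeletons of all copies. -/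
lemma IsSkel.step [NeZero d] (hd : 2 ≤ d) {r k : ℕ} {i : Fin d} (F : Fin d → List (EUnit d))
    (hF : ∀ j, IsSkel r (if j < i then k + 1 else k) j (F j)) :
    ∃ L, IsSkel r (k + 1) i L ∧ L.length = 1 + ∑ j, (F j).length := by
  have : Nontrivial (Fin d) := Fin.nontrivial_iff_two_le.2 hd
  obtain ⟨i', hi'⟩ := exists_ne i
  set lev : Fin d → ℕ := fun j => if j < i then k + 1 else k with hlev
  have hlev' : ∀ j, (if j < i then r + k + 1 else r + k) = r + lev j := by
    intro j; simp only [hlev]; split_ifs <;> omega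
  have hroot : ∀ j, j :: List.replicate (r + lev j) j ∈ topE (r + k) i := by
    intro j
    have := cons_mem_topE (r + k) i j
    rwa [hlev'] at this
  have hmemS : ∀ j e, e ∈ SEdges d (r + lev j) j → liftE j e ∈ SEdges d (r + (k + 1)) i := by
    intro j e he
    exact lift_mem_SEdges (n := r + k) (by rwa [hlev'])
  set L : List (EUnit d) := (topE (r + k) i, (lowS r i' (lev i')).map (liftE i')) ::
    (List.finRange d).flatMap (fun j => (F j).map (liftU j)) with hL
  have hall : allE L = topE (r + k) i :: ((lowS r i' (lev i')).map (liftE i') ++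
      (List.finRange d).flatMap fun j => (allE (F j)).map (liftE j)) := by
    rw [hL, allE, List.flatMap_cons]
    change _ ++ allE _ = _
    rw [allE_flatMap]
    simp [allE_map]
  have hmemall : ∀ e ∈ allE L, e = topE (r + k) i ∨
      (∃ e' ∈ lowS r i' (lev i'), e = liftE i' e') ∨ ∃ j, ∃ e' ∈ allE (F j), e = liftE j e' := by
    intro e he
    rw [hall, List.mem_cons, List.mem_append] at he
    rcases he with h | h | h
    · exact Or.inl h
    · obtain ⟨e', he', rfl⟩ := List.mem_map.1 h
      exact Or.inr (Or.inl ⟨e', he', rfl⟩)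
    · obtain ⟨j, _, hj⟩ := List.mem_flatMap.1 h
      obtain ⟨e', he', rfl⟩ := List.mem_map.1 hj
      exact Or.inr (Or.inr ⟨j, e', he', rfl⟩)
  refine ⟨L, ⟨?_, ?_, ?_, ?_⟩, ?_⟩
  · refine ⟨⟨_, hroot i, ?_⟩, Conn.flatMap _ _ fun j _ => ((hF j).conn.map j).mono ?_⟩
    · simp only [hlev, lt_irrefl, if_false]
      rfl
    · rintro _ ⟨x, rfl, rfl⟩
      exact Or.inr (hroot j)
  · intro u hu
    rcases List.mem_cons.1 hu with rfl | hu
    · refine ⟨by simp [length_lowS], fun e he => ?_⟩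
      obtain ⟨e', he', rfl⟩ := List.mem_map.1 he
      exact ⟨_, Finset.mem_image_of_mem _ (mem_lowS _ _ _ e' he').2, hroot i'⟩
    · obtain ⟨j, _, hj⟩ := List.mem_flatMap.1 hu
      exact pend_map j (hF j).pend u hj
  · rw [hall]
    refine List.nodup_cons.2 ⟨?_, List.Nodup.append ?_ ?_ ?_⟩
    · intro h
      rcases List.mem_append.1 h with h | h
      · obtain ⟨e', _, he'⟩ := List.mem_map.1 h
        exact topE_ne_lift hd _ _ _ _ he'.symm
      · obtain ⟨j, _, hj⟩ := List.mem_flatMap.1 h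
        obtain ⟨e', _, he'⟩ := List.mem_map.1 hj
        exact topE_ne_lift hd _ _ _ _ he'.symm
    · exact (lowS_nodup hd _ _ _).map (lift_injective _)
    · refine List.nodup_flatMap.2 ⟨fun j _ => (hF j).nodup.map (lift_injective _), ?_⟩
      refine (List.nodup_finRange d).imp fun {j j'} hjj e he he' => ?_
      obtain ⟨e1, h1, rfl⟩ := List.mem_map.1 he
      obtain ⟨e2, _, h2⟩ := List.mem_map.1 he'
      exact lift_ne_lift hjj (SEdges_nonempty _ _ _ ((hF j).mem e1 h1).1) h2.symm
    · intro e he he'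
      obtain ⟨e1, h1, rfl⟩ := List.mem_map.1 he
      obtain ⟨j, _, hj⟩ := List.mem_flatMap.1 he'
      obtain ⟨e2, h2, h3⟩ := List.mem_map.1 hj
      by_cases hji : j = i'
      · subst hji
        rw [lift_injective _ h3] at h2
        exact ((hF j).mem e1 h2).2 h1
      · exact lift_ne_lift hji (SEdges_nonempty _ _ _ ((hF j).mem e2 h2).1) h3
  · intro e he
    rcases hmemall e he with rfl | ⟨e', he', rfl⟩ | ⟨j, e', he', rfl⟩
    · refine ⟨topE_mem_SEdges (r + k) i, fun h => ?_⟩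
      obtain ⟨e', _, he'⟩ := List.mem_map.1 h
      exact topE_ne_lift hd _ _ _ _ he'.symm
    · refine ⟨hmemS _ _ (mem_lowS _ _ _ e' he').1, fun h => ?_⟩
      obtain ⟨e2, _, h2⟩ := List.mem_map.1 h
      exact lift_ne_lift hi' ⟨_, (mem_lowS _ _ _ e' he').2⟩ h2.symm
    · refine ⟨hmemS _ _ ((hF j).mem e' he').1, fun h => ?_⟩
      obtain ⟨e2, h2, h3⟩ := List.mem_map.1 h
      by_cases hji : j = i
      · subst hji
        rw [lift_injective _ h3] at h2
        have := ((hF j).mem e' he').2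
        simp only [lt_irrefl, if_false] at this
        exact this h2
      · exact lift_ne_lift hji (SEdges_nonempty _ _ _ ((hF j).mem e' he').1) h3.symm
  · simp [hL, List.length_flatMap, Fin.sum_univ_def, add_comm]

lemma fib_sum {φ : ℝ} (hφ : φ ^ d = ∑ j ∈ Finset.range d, φ ^ j) (i : ℕ) (hi : i ≤ d) :
    ∑ j ∈ Finset.range d, (if j < i then φ ^ (d + j) else φ ^ j) = φ ^ d * φ ^ i := by
  have h1 : (φ - 1) * φ ^ d = φ ^ d - 1 := by
    have := geom_sum_mul φ d
    rw [← hφ] at this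
    linarith
  have h2 : ∀ j ∈ Finset.range d, (if j < i then φ ^ (d + j) else φ ^ j) =
      φ ^ j + if j < i then (φ ^ d - 1) * φ ^ j else 0 := by
    intro j _
    split_ifs
    · rw [pow_add]; ring
    · ring
  have h3 : (Finset.range d).filter (fun j => j < i) = Finset.range i := by
    ext j; simp only [Finset.mem_filter, Finset.mem_range]; omega
  rw [Finset.sum_congr rfl h2, Finset.sum_add_distrib, ← hφ, ← Finset.sum_filter, h3,
    ← Finset.mul_sum, ← h1]
  have := geom_sum_mul φ i
  linear_combination φ ^ d * this

/-- Skeletons exist with at least about `φ ^ (d * (k - 1) + i) / (d - 1)` units, by the generalised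
Fibonacci recurrence for the number of units. -/
lemma exists_skel [NeZero d] (hd : 2 ≤ d) {φ : ℝ} (hφ1 : 1 ≤ φ)
    (hφ : φ ^ d = ∑ j ∈ Finset.range d, φ ^ j) (r k : ℕ) (i : Fin d) :
    ∃ L, IsSkel r k i L ∧ φ ^ (d * k + i) ≤ φ ^ d * (((d : ℝ) - 1) * L.length + 1) := by
  induction k, i using SEdges.induct with
  | case1 i =>
    refine ⟨[], ⟨trivial, by simp, by simp [allE], by simp [allE]⟩, ?_⟩
    simpa using pow_le_pow_right₀ hφ1 i.2.le
  | case2 k i ih1 ih2 =>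
    have : ∀ j : Fin d, ∃ L, IsSkel r (if j < i then k + 1 else k) j L ∧
        φ ^ (d * k) * (if j.val < i.val then φ ^ (d + j.val) else φ ^ j.val) ≤
          φ ^ d * (((d : ℝ) - 1) * L.length + 1) := by
      intro j
      by_cases h : j < i
      · obtain ⟨L, hL, hL'⟩ := ih1 j h
        refine ⟨L, by rwa [if_pos h], ?_⟩
        rw [if_pos (Fin.lt_def.1 h), ← pow_add]
        convert hL' using 2
        ring
      · obtain ⟨L, hL, hL'⟩ := ih2 j
        refine ⟨L, by rwa [if_neg h], ?_⟩
        rw [if_neg (fun h' => h (Fin.lt_def.2 h')), ← pow_add]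
        exact hL'
    choose F hF hF' using this
    obtain ⟨L, hL, hlen⟩ := IsSkel.step hd F hF
    refine ⟨L, hL, ?_⟩
    have hsum := Finset.sum_le_sum fun j (_ : j ∈ (Finset.univ : Finset (Fin d))) => hF' j
    rw [← Finset.mul_sum, Fin.sum_univ_eq_sum_range
      (fun j => if j < i.val then φ ^ (d + j) else φ ^ j) d, fib_sum hφ i.val i.2.le,
      ← Finset.mul_sum, Finset.sum_add_distrib, ← Finset.mul_sum] at hsum
    simp only [Finset.sum_const, Finset.card_univ, Fintype.card_fin, nsmul_eq_mul, mul_one]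
      at hsum
    rw [hlen]
    push_cast
    calc φ ^ (d * (k + 1) + i.val) = φ ^ (d * k) * (φ ^ d * φ ^ i.val) := by
          rw [← pow_add, ← pow_add]; ring_nf
      _ ≤ _ := hsum
      _ = _ := by ring

/-- The part of `S_i(r + k + 1)` used in the union bound: a top edge `e0`, `r + k` further edges
through the root of `S_i(r + k + 1)`, and a connected list of units hanging off `e0`. -/
lemma tree_struct [NeZero d] (hd : 2 ≤ d) {φ : ℝ} (hφ1 : 1 ≤ φ)
    (hφ : φ ^ d = ∑ j ∈ Finset.range d, φ ^ j) (r k : ℕ) (i : Fin d) :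
    ∃ (e0 : Finset (List (Fin d))) (cand : List (Finset (List (Fin d)))) (L : List (EUnit d)),
      (e0 :: (cand ++ allE L)).Nodup ∧
      (∀ e ∈ e0 :: (cand ++ allE L), e ∈ SEdges d (r + k + 1) i) ∧
      cand.length = r + k ∧ (∀ e ∈ cand, ∃ x ∈ e, x ∈ e0) ∧ Conn ↑e0 L ∧
      (∀ u ∈ L, u.2.length = r ∧ ∀ e ∈ u.2, ∃ x ∈ e, x ∈ u.1) ∧
      φ ^ (d * k) ≤ φ ^ d * (((d : ℝ) - 1) * L.length + 1) := by
  have : Nontrivial (Fin d) := Fin.nontrivial_iff_two_le.2 hd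
  obtain ⟨j, hj⟩ := exists_ne i
  obtain ⟨L, hL, hlen⟩ := exists_skel hd hφ1 hφ r (if j < i then k + 1 else k) j
  have hlev : (if j < i then r + k + 1 else r + k) = r + if j < i then k + 1 else k := by
    split_ifs <;> omega
  have hcand : ∀ e ∈ rootStar i (r + k), liftE i e ∈ SEdges d (r + k + 1) i := fun e he =>
    lift_mem_SEdges (by simpa using (mem_rootStar i _ e he).1)
  have hsk : ∀ e ∈ allE L, liftE j e ∈ SEdges d (r + k + 1) i := fun e he =>
    lift_mem_SEdges (by rw [hlev]; exact (hL.mem e he).1)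
  refine ⟨topE (r + k) i, (rootStar i (r + k)).map (liftE i), L.map (liftU j), ?_, ?_, ?_, ?_, ?_,
    pend_map j hL.pend, ?_⟩
  · rw [allE_map]
    refine List.nodup_cons.2 ⟨?_, List.Nodup.append ((rootStar_nodup hd _ _).map
      (lift_injective _)) (hL.nodup.map (lift_injective _)) ?_⟩
    · intro h
      rcases List.mem_append.1 h with h | h <;>
      · obtain ⟨e', _, he'⟩ := List.mem_map.1 h
        exact topE_ne_lift hd _ _ _ _ he'.symm
    · intro e he he'
      obtain ⟨e1, h1, rfl⟩ := List.mem_map.1 he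
      obtain ⟨e2, _, h3⟩ := List.mem_map.1 he'
      exact lift_ne_lift hj.symm ⟨_, (mem_rootStar _ _ _ h1).2⟩ h3.symm
  · rw [allE_map]
    intro e he
    rcases List.mem_cons.1 he with rfl | he
    · exact topE_mem_SEdges _ _
    rcases List.mem_append.1 he with he | he
    · obtain ⟨e', he', rfl⟩ := List.mem_map.1 he
      exact hcand e' he'
    · obtain ⟨e', he', rfl⟩ := List.mem_map.1 he
      exact hsk e' he'
  · simp [length_rootStar]
  · intro e he
    obtain ⟨e', he', rfl⟩ := List.mem_map.1 he
    refine ⟨_, Finset.mem_image_of_mem _ (mem_rootStar _ _ _ he').2, ?_⟩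
    simpa using cons_mem_topE (r + k) i i
  · refine (hL.conn.map j).mono ?_
    rintro _ ⟨x, rfl, rfl⟩
    have := cons_mem_topE (r + k) i j
    rw [hlev] at this
    exact this
  · rw [List.length_map]
    refine le_trans (pow_le_pow_right₀ hφ1 ?_) hlen
    split_ifs
    · rw [mul_add]; omega
    · omega

end Tree

/-! ### Key sequences extracted from a copy of the tree -/

section Extract

variable {d c : ℕ} {A : Type*}

/-- The `t`-th edge of the `i`-th unit (the skeleton edge for `t = 0`). -/
def unitEdge (L : List (EUnit d)) (i t : ℕ) : Finset (List (Fin d)) :=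
  ((L.getD i (∅, [])).1 :: (L.getD i (∅, [])).2).getD t ∅

/-- Skeleton edge number `v`: the top edge for `v = 0`, that of unit `v - 1` otherwise. -/
def skE (e0 : Finset (List (Fin d))) (L : List (EUnit d)) (v : ℕ) : Finset (List (Fin d)) :=
  if v = 0 then e0 else unitEdge L (v - 1) 0

lemma unitEdge_eq {L : List (EUnit d)} {i t : ℕ} (hi : i < L.length) (ht : t < L[i].2.length + 1) :
    unitEdge L i t = (L[i].1 :: L[i].2)[t]'(by simpa using ht) := by
  unfold unitEdge
  have e : L.getD i (∅, []) = L[i] := by simp [List.getD_eq_getElem?_getD, hi]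
  rw [e, List.getD_eq_getElem?_getD, List.getElem?_eq_getElem (by simpa using ht)]
  rfl

lemma unitEdge_zero {L : List (EUnit d)} {i : ℕ} (hi : i < L.length) :
    unitEdge L i 0 = L[i].1 := by
  rw [unitEdge_eq hi (by omega)]; rfl

lemma unitEdge_mem_pend {L : List (EUnit d)} {i t : ℕ} (hi : i < L.length)
    (ht0 : 0 < t) (ht : t < L[i].2.length + 1) : unitEdge L i t ∈ L[i].2 := by
  obtain ⟨t, rfl⟩ : ∃ t', t = t' + 1 := ⟨t - 1, by omega⟩
  rw [unitEdge_eq hi ht]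
  simp

lemma unitEdge_mem {L : List (EUnit d)} {i t : ℕ} (hi : i < L.length)
    (ht : t < L[i].2.length + 1) : unitEdge L i t ∈ allE L := by
  rw [unitEdge_eq hi ht]
  exact List.mem_flatMap.2 ⟨L[i], List.getElem_mem _, List.getElem_mem _⟩

lemma unitEdge_inj {L : List (EUnit d)} (h : (allE L).Nodup) {i t i' t' : ℕ}
    (hi : i < L.length) (ht : t < L[i].2.length + 1)
    (hi' : i' < L.length) (ht' : t' < L[i'].2.length + 1)
    (heq : unitEdge L i t = unitEdge L i' t') : i = i' ∧ t = t' := by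
  obtain ⟨h1, h2⟩ := List.nodup_flatMap.1 h
  rw [List.pairwise_iff_getElem] at h2
  rw [unitEdge_eq hi ht, unitEdge_eq hi' ht'] at heq
  have m1 : (L[i].1 :: L[i].2)[t]'(by simpa using ht) ∈ L[i].1 :: L[i].2 := List.getElem_mem _
  have m2 : (L[i].1 :: L[i].2)[t]'(by simpa using ht) ∈ L[i'].1 :: L[i'].2 :=
    heq ▸ List.getElem_mem _
  have hii : i = i' := by
    by_contra hne
    rcases Nat.lt_or_gt_of_ne hne with hlt | hlt
    · exact h2 i i' hi hi' hlt m1 m2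
    · exact h2 i' i hi' hi hlt m2 m1
  subst hii
  exact ⟨rfl, (List.Nodup.getElem_inj_iff (h1 _ (List.getElem_mem hi))).1 heq⟩

/-- The parents of skeleton edges in a connected list of units, as a function of the unit index. -/
lemma exists_parents {e0 : Finset (List (Fin d))} {L : List (EUnit d)} (h : Conn ↑e0 L) :
    ∃ v : ℕ → ℕ, (∀ i, v i ≤ i) ∧
      ∀ i < L.length, ∃ x ∈ unitEdge L i 0, x ∈ skE e0 L (v i) := by
  have : ∀ i, ∃ v ≤ i, i < L.length → ∃ x ∈ unitEdge L i 0, x ∈ skE e0 L v := by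
    intro i
    by_cases hi : i < L.length
    · rw [unitEdge_zero hi]
      rcases h.getElem i hi with ⟨x, hx, hx'⟩ | ⟨q, hq, x, hx, hx'⟩
      · exact ⟨0, by omega, fun _ => ⟨x, hx, by simpa [skE] using hx'⟩⟩
      · refine ⟨q + 1, by omega, fun _ => ⟨x, hx, ?_⟩⟩
        simpa [skE, unitEdge_zero (hq.trans hi)] using hx'
    · exact ⟨0, by omega, fun h => absurd h hi⟩
  choose v hv hv' using this
  exact ⟨v, hv, hv'⟩

lemma mod_decomp {R r s a : ℕ} (ha : ¬ a ≤ R) (has : a < R + 1 + (r + 1) * s) :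
    (a - (R + 1)) / (r + 1) < s ∧ (a - (R + 1)) % (r + 1) < r + 1 ∧
      a = R + 1 + (r + 1) * ((a - (R + 1)) / (r + 1)) + (a - (R + 1)) % (r + 1) := by
  have := Nat.div_add_mod (a - (R + 1)) (r + 1)
  refine ⟨?_, Nat.mod_lt _ (by omega), by omega⟩
  rw [Nat.div_lt_iff_lt_mul (by omega), mul_comm]
  omega

/-- Any injective assignment of keys to the edges of the structure of `tree_struct` allows the
choice of `R` root-star edges whose keys are independent together with the key of the top edge;
the resulting edges are laid out in the order prescribed by `parN`. -/
lemma extract [DecidableEq A] (hc : 0 < c) {R r : ℕ} {e0 : Finset (List (Fin d))}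
    {cand : List (Finset (List (Fin d)))} {L : List (EUnit d)}
    (hnd : (e0 :: (cand ++ allE L)).Nodup) (hcand : ∀ e ∈ cand, ∃ x ∈ e, x ∈ e0)
    (hpend : ∀ u ∈ L, u.2.length = r ∧ ∀ e ∈ u.2, ∃ x ∈ e, x ∈ u.1)
    (hR : R ^ c ≤ cand.length) {v : ℕ → ℕ} (hvi : ∀ i, v i ≤ i)
    (hv : ∀ i < L.length, ∃ x ∈ unitEdge L i 0, x ∈ skE e0 L (v i))
    (ψ : Finset (List (Fin d)) → Fin c → A)
    (hψ : Set.InjOn ψ {e | e ∈ e0 :: (cand ++ allE L)}) :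
    ∃ eps : ℕ → Finset (List (Fin d)),
      (∀ a < R + 1 + (r + 1) * L.length, eps a ∈ e0 :: (cand ++ allE L)) ∧
      Set.InjOn eps (Set.Iio (R + 1 + (r + 1) * L.length)) ∧
      LinearIndependent (ZMod 2) (charVec ∘ fun a : Fin (R + 1) => ψ (eps a)) ∧
      ∀ a, 0 < a → a < R + 1 + (r + 1) * L.length →
        ∃ x ∈ eps a, x ∈ eps (parN R r v a) := by
  classical
  have hnd0 := (List.nodup_cons.1 hnd).1
  have hnd1 := List.nodup_append'.1 (List.nodup_cons.1 hnd).2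
  have hmc : ∀ e ∈ cand, e ∈ e0 :: (cand ++ allE L) := fun e he =>
    List.mem_cons_of_mem _ (List.mem_append_left _ he)
  have hma : ∀ e ∈ allE L, e ∈ e0 :: (cand ++ allE L) := fun e he =>
    List.mem_cons_of_mem _ (List.mem_append_right _ he)
  have hm0 : e0 ∈ e0 :: (cand ++ allE L) := List.mem_cons_self
  have hSc : (cand.toFinset.image ψ).card = cand.length := by
    rw [Finset.card_image_of_injOn, List.toFinset_card_of_nodup hnd1.1]
    exact hψ.mono fun e he => hmc e (by simpa using he)
  obtain ⟨B, hBS, hBc, hBi⟩ := exists_indep_subset hc (ψ e0) (cand.toFinset.image ψ) (by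
    intro h
    obtain ⟨e, he, heq⟩ := Finset.mem_image.1 h
    have he' : e ∈ cand := by simpa using he
    have := hψ (hmc e he') hm0 heq
    subst this
    exact hnd0 (List.mem_append_left _ he')) R (by rw [hSc]; exact hR)
  have hex : ∀ t : Fin R, ∃ e ∈ cand, ψ e = ((B.equivFinOfCardEq hBc).symm t : Fin c → A) := by
    intro t
    obtain ⟨e, he, heq⟩ := Finset.mem_image.1 (hBS ((B.equivFinOfCardEq hBc).symm t).2)
    exact ⟨e, by simpa using he, heq⟩
  choose β hβ hβψ using hex
  have hβinj : Function.Injective β := by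
    intro s t h
    have : ψ (β s) = ψ (β t) := by rw [h]
    rw [hβψ, hβψ] at this
    exact (B.equivFinOfCardEq hBc).symm.injective (Subtype.ext this)
  set eps : ℕ → Finset (List (Fin d)) := fun a =>
    if a = 0 then e0 else if h : a - 1 < R then β ⟨a - 1, h⟩
    else unitEdge L ((a - (R + 1)) / (r + 1)) ((a - (R + 1)) % (r + 1)) with heps
  have eps0 : eps 0 = e0 := rfl
  have eps1 : ∀ a (h0 : a ≠ 0) (h : a ≤ R), eps a = β ⟨a - 1, by omega⟩ := by
    intro a h0 h
    simp only [heps]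
    rw [if_neg h0, dif_pos (by omega)]
  have eps2 : ∀ a, ¬ a ≤ R →
      eps a = unitEdge L ((a - (R + 1)) / (r + 1)) ((a - (R + 1)) % (r + 1)) := by
    intro a h
    simp only [heps]
    rw [if_neg (by omega), dif_neg (by omega)]
  have hlen : ∀ i (hi : i < L.length), L[i].2.length = r := fun i hi =>
    (hpend _ (List.getElem_mem hi)).1
  have hmem2 : ∀ a, ¬ a ≤ R → a < R + 1 + (r + 1) * L.length → eps a ∈ allE L := by
    intro a ha has
    obtain ⟨h1, h2, _⟩ := mod_decomp ha has
    rw [eps2 a ha]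
    exact unitEdge_mem h1 (by rw [hlen _ h1]; exact h2)
  have hmem1 : ∀ a, a ≠ 0 → a ≤ R → eps a ∈ cand := by
    intro a h0 h
    rw [eps1 a h0 h]
    exact hβ _
  have epsk : ∀ w ≤ L.length, eps (skPos R r w) = skE e0 L w := by
    intro w _
    rcases w with _ | w
    · rfl
    · rw [skPos_succ, eps2 _ (by omega)]
      simp [skE]
  refine ⟨eps, ?_, ?_, ?_, ?_⟩
  · intro a ha
    by_cases h0 : a = 0
    · rw [h0]; exact hm0
    by_cases h1 : a ≤ R
    · exact hmc _ (hmem1 a h0 h1)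
    · exact hma _ (hmem2 a h1 ha)
  · intro a ha a' ha' heq
    simp only [Set.mem_Iio] at ha ha'
    have key0 : ∀ a, a < R + 1 + (r + 1) * L.length → a ≠ 0 → eps a ≠ e0 := by
      intro a ha h0 h
      refine hnd0 (h ▸ ?_)
      by_cases h1 : a ≤ R
      · exact List.mem_append_left _ (hmem1 a h0 h1)
      · exact List.mem_append_right _ (hmem2 a h1 ha)
    by_cases h0 : a = 0
    · by_contra hne
      rw [h0] at heq hne
      exact key0 a' ha' (Ne.symm hne) heq.symm
    by_cases h0' : a' = 0
    · rw [h0'] at heq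
      exact absurd heq (key0 a ha h0)
    by_cases h1 : a ≤ R
    · by_cases h1' : a' ≤ R
      · rw [eps1 a h0 h1, eps1 a' h0' h1'] at heq
        have := congrArg Fin.val (hβinj heq)
        simp only at this
        omega
      · exact absurd (heq ▸ hmem2 a' h1' ha') (hnd1.2.2 (hmem1 a h0 h1))
    · by_cases h1' : a' ≤ R
      · exact absurd (heq ▸ hmem2 a h1 ha) (hnd1.2.2 (hmem1 a' h0' h1'))
      · obtain ⟨p1, p2, p3⟩ := mod_decomp h1 ha
        obtain ⟨q1, q2, q3⟩ := mod_decomp h1' ha'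
        rw [eps2 a h1, eps2 a' h1'] at heq
        obtain ⟨e1, e2⟩ := unitEdge_inj hnd1.2.1 p1 (by rw [hlen _ p1]; exact p2) q1
          (by rw [hlen _ q1]; exact q2) heq
        rw [p3, q3, e1, e2]
  · have hin : ∀ a : Fin (R + 1), ψ (eps a) ∈ insert (ψ e0) (B : Set (Fin c → A)) := by
      intro a
      by_cases h0 : a.val = 0
      · rw [h0]; exact Set.mem_insert _ _
      · rw [eps1 a h0 (by omega), hβψ]
        exact Set.mem_insert_of_mem _ (Subtype.property _)
    refine LinearIndependent.comp (v := fun x : ↥(insert (ψ e0) (B : Set (Fin c → A))) =>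
      charVec x.1) hBi (fun a : Fin (R + 1) => ⟨ψ (eps a), hin a⟩) ?_
    intro a a' h
    have h : ψ (eps a) = ψ (eps a') := congrArg Subtype.val h
    have hz : ∀ a : Fin (R + 1), a.val ≠ 0 → ψ (eps a) ≠ ψ e0 := by
      intro a h0 heq
      have := hψ (hmc _ (hmem1 a h0 (by omega))) hm0 heq
      exact hnd0 (List.mem_append_left _ (this ▸ hmem1 a h0 (by omega)))
    by_cases h0 : a.val = 0
    · by_contra hne
      have h0' : a'.val ≠ 0 := fun h' => hne (Fin.ext (h0.trans h'.symm))
      rw [h0] at h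
      exact hz a' h0' h.symm
    by_cases h0' : a'.val = 0
    · rw [h0'] at h
      exact absurd h (hz a h0)
    rw [eps1 a h0 (by omega), eps1 a' h0' (by omega)] at h
    have := congrArg Fin.val (hβinj (hψ (hmc _ (hβ _)) (hmc _ (hβ _)) h))
    simp only at this
    exact Fin.ext (by omega)
  · intro a ha has
    by_cases h1 : a ≤ R
    · have : parN R r v a = 0 := by rw [parN, if_pos h1]
      rw [this]
      exact hcand _ (hmem1 a (by omega) h1)
    obtain ⟨p1, p2, p3⟩ := mod_decomp h1 has
    by_cases h2 : (a - (R + 1)) % (r + 1) = 0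
    · have : parN R r v a = skPos R r (v ((a - (R + 1)) / (r + 1))) := by
        rw [parN, if_neg h1, if_pos h2]
      rw [this, epsk _ ((hvi _).trans p1.le), eps2 a h1, h2]
      exact hv _ p1
    · have : parN R r v a = skPos R r ((a - (R + 1)) / (r + 1) + 1) := by
        rw [parN, if_neg h1, if_neg h2]
      rw [this, epsk _ p1, eps2 a h1]
      have hsk : skE e0 L ((a - (R + 1)) / (r + 1) + 1) = (L[(a - (R + 1)) / (r + 1)]).1 := by
        simp [skE, unitEdge_zero p1]
      rw [hsk]
      exact (hpend _ (List.getElem_mem p1)).2 _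
        (unitEdge_mem_pend p1 (by omega) (by rw [hlen _ p1]; exact p2))

/-- Edges of a copy sharing a vertex have keys that agree under one of the hash functions. -/
lemma meet_of_copy {b : ℕ} {T : Fin d → Fin c → A → (Fin b → ZMod 2)}
    {φ : List (Fin d) → (Fin b → ZMod 2) × Fin d} {e e' : Finset (List (Fin d))} {y y' : Fin c → A}
    (he : e.image φ = Finset.univ.image fun j : Fin d => (simpleTab (T j) y, j))
    (he' : e'.image φ = Finset.univ.image fun j : Fin d => (simpleTab (T j) y', j))
    (h : ∃ x ∈ e, x ∈ e') : ∃ j, simpleTab (T j) y = simpleTab (T j) y' := by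
  obtain ⟨x, hx, hx'⟩ := h
  have h1 := he ▸ Finset.mem_image_of_mem φ hx
  have h2 := he' ▸ Finset.mem_image_of_mem φ hx'
  obtain ⟨j, _, hj⟩ := Finset.mem_image.1 h1
  obtain ⟨j', _, hj'⟩ := Finset.mem_image.1 h2
  rw [← hj', Prod.mk.injEq] at hj
  obtain ⟨h3, rfl⟩ := hj
  exact ⟨j, h3⟩

end Extract

/-! ### The union bound over key sequences -/

section Union

variable {d c b : ℕ} {A : Type*} [DecidableEq A]

lemma parN_le {R r : ℕ} {v : ℕ → ℕ} (hv : ∀ i, v i ≤ i) (a : ℕ) : parN R r v a ≤ a := by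
  rcases Nat.eq_zero_or_pos a with rfl | ha
  · simp [parN]
  · exact (parN_lt hv ha).le

/-- `master_count` for the layout `parN`, `blkN` with `q` complete units. -/
lemma case_count [Fintype A] {Y : Type*} (hd : 0 < d) {R r : ℕ} {v : ℕ → ℕ} (hv : ∀ i, v i ≤ i)
    (p q : ℕ) (hp : 1 ≤ p) (hq : R + 1 + (r + 1) * q ≤ p) (W : Finset ((Fin p → Fin c → A) × Y))
    (hW : ∀ w ∈ W, Function.Injective w.1 ∧ LinearIndependent (ZMod 2) (charVec ∘ w.1))
    (hWG : ∀ w ∈ W, ∀ σ : Equiv.Perm (Fin p), (w.1 ∘ σ, w.2) ∈ W)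
    (Bad : Finset (Fin d → Fin c → A → (Fin b → ZMod 2)))
    (hBad : ∀ T ∈ Bad, ∃ w ∈ W, ∀ a : Fin p, 0 < a.val →
      ∃ j, simpleTab (T j) (w.1 a) =
        simpleTab (T j) (w.1 ⟨parN R r v a, (parN_le hv a).trans_lt a.2⟩))
    (Q : ℝ) (hQ : (W.card : ℝ) ≤ Q * (2 ^ b) ^ (p - 1)) :
    (Bad.card : ℝ) * (R.factorial * r.factorial ^ q) ≤
      Q * d ^ p * Fintype.card (Fin d → Fin c → A → (Fin b → ZMod 2)) := by
  classical
  have h := master_count hd hp (fun a : Fin p => ⟨parN R r v a, (parN_le hv a).trans_lt a.2⟩)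
    (fun a ha => Fin.lt_def.2 (parN_lt hv ha)) (fun a : Fin p => blkN R r a.val)
    (fun a e h => Fin.ext (parN_congr v h)) (fun a e h => Fin.ext (eq_parN_of_blkN v h))
    (fun a e ha h => Fin.ext (by
      have h' : blkN R r e.val = 2 * 0 := by rw [← h, ha]; simp [blkN]
      have := eq_skPos_of_blkN h'
      rw [this, ha]; simp [skPos])) W hW (fun w hw σ _ => hWG w hw σ) Bad hBad
  have hG := blk_perm_card (R := R) (r := r) p q hq
  set G := (Finset.univ.filter fun σ : Equiv.Perm (Fin p) =>
        (fun a : Fin p => blkN R r a.val) ∘ σ = fun a : Fin p => blkN R r a.val).card with hGdef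
  set N := Fintype.card (Fin d → Fin c → A → (Fin b → ZMod 2)) with hN
  have h' : (Bad.card : ℝ) * G * (2 ^ b) ^ (p - 1) ≤ W.card * (d ^ p * N) := by
    have := Nat.cast_le (α := ℝ).2 h
    push_cast at this
    convert this using 2
  have hG' : ((R.factorial : ℝ) * r.factorial ^ q) ≤ G := by exact_mod_cast hG
  have hpos : (0 : ℝ) < (2 ^ b) ^ (p - 1) := by positivity
  refine le_of_mul_le_mul_right ?_ hpos
  calc (Bad.card : ℝ) * (R.factorial * r.factorial ^ q) * (2 ^ b) ^ (p - 1)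
      ≤ Bad.card * G * (2 ^ b) ^ (p - 1) := by gcongr
    _ ≤ W.card * (d ^ p * N) := h'
    _ ≤ Q * (2 ^ b) ^ (p - 1) * (d ^ p * N) := by gcongr
    _ = _ := by ring

/-- The event that some sequence of `P` distinct keys of `X`, whose first `R + 1` keys are
independent, satisfies the adjacency constraints prescribed by `parN`. -/
def BadSeq (X : Finset (Fin c → A)) (R r : ℕ) (v : ℕ → ℕ) (P : ℕ)
    (T : Fin d → Fin c → A → (Fin b → ZMod 2)) : Prop :=
  ∃ x : ℕ → Fin c → A, (∀ a < P, x a ∈ X) ∧ Set.InjOn x (Set.Iio P) ∧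
    LinearIndependent (ZMod 2) (charVec ∘ fun a : Fin (R + 1) => x a) ∧
    ∀ a, 0 < a → a < P → ∃ j, simpleTab (T j) (x a) = simpleTab (T j) (x (parN R r v a))

/-- Either the whole sequence is independent or there is a first dependent key. -/
lemma indep_or_first (x : ℕ → Fin c → A) (p0 P : ℕ) (h0P : p0 ≤ P)
    (h0 : LinearIndependent (ZMod 2) (charVec ∘ fun a : Fin p0 => x a)) :
    LinearIndependent (ZMod 2) (charVec ∘ fun a : Fin P => x a) ∨
    ∃ p, p0 ≤ p ∧ p < P ∧ LinearIndependent (ZMod 2) (charVec ∘ fun a : Fin p => x a) ∧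
      charVec (x p) ∈ Submodule.span (ZMod 2) (Set.range (charVec ∘ fun a : Fin p => x a)) := by
  induction P, h0P using Nat.le_induction with
  | base => exact Or.inl h0
  | succ P hP ih =>
    rcases ih with h | ⟨p, h1, h2, h3⟩
    · by_cases hs : charVec (x P) ∈
        Submodule.span (ZMod 2) (Set.range (charVec ∘ fun a : Fin P => x a))
      · exact Or.inr ⟨P, hP, by omega, h, hs⟩
      · refine Or.inl (linearIndependent_finSucc'.2 ⟨h, hs⟩)
    · exact Or.inr ⟨p, h1, by omega, h3⟩

open Classical in
/-- Tables whose bad sequence is fully independent. -/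
lemma indep_case [Fintype A] (hd : 0 < d) {R r s : ℕ} {v : ℕ → ℕ} (hv : ∀ i, v i ≤ i)
    (X : Finset (Fin c → A)) (D : ℝ) (hX : (X.card : ℝ) ≤ D * 2 ^ b) (P : ℕ)
    (hP : P = R + 1 + (r + 1) * s) (Bad : Finset (Fin d → Fin c → A → (Fin b → ZMod 2)))
    (hBad : ∀ T ∈ Bad, ∃ x : ℕ → Fin c → A, (∀ a < P, x a ∈ X) ∧ Set.InjOn x (Set.Iio P) ∧
      LinearIndependent (ZMod 2) (charVec ∘ fun a : Fin P => x a) ∧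
      ∀ a, 0 < a → a < P → ∃ j, simpleTab (T j) (x a) = simpleTab (T j) (x (parN R r v a))) :
    (Bad.card : ℝ) * (R.factorial * r.factorial ^ s) ≤
      2 ^ b * (d * D) ^ P * Fintype.card (Fin d → Fin c → A → (Fin b → ZMod 2)) := by
  set W : Finset ((Fin P → Fin c → A) × Unit) := Finset.univ.filter fun w =>
    (∀ a, w.1 a ∈ X) ∧ Function.Injective w.1 ∧ LinearIndependent (ZMod 2) (charVec ∘ w.1) with hW
  have hD0 : 0 ≤ D * 2 ^ b := (Nat.cast_nonneg _).trans hX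
  have hWc : (W.card : ℝ) ≤ (D * 2 ^ b) ^ P := by
    have : W.card ≤ X.card ^ P := by
      calc W.card ≤ (Fintype.piFinset fun _ : Fin P => X).card := by
            refine Finset.card_le_card_of_injOn (fun w => w.1) ?_ ?_
            · intro w hw
              have hw := (Finset.mem_filter.1 hw).2
              simpa using hw.1
            · intro w _ w' _ h
              exact Prod.ext h rfl
        _ = X.card ^ P := by simp
    calc (W.card : ℝ) ≤ (X.card : ℝ) ^ P := by exact_mod_cast this
      _ ≤ _ := pow_le_pow_left₀ (Nat.cast_nonneg _) hX P
  have hfin := case_count (R := R) (r := r) hd hv P s (by omega) (by omega) W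
    (fun w hw => (Finset.mem_filter.1 hw).2.2) (by
      intro w hw σ
      obtain ⟨h1, h2, h3⟩ := (Finset.mem_filter.1 hw).2
      exact Finset.mem_filter.2 ⟨Finset.mem_univ _, fun a => h1 _, h2.comp σ.injective,
        h3.comp σ σ.injective⟩) Bad (by
      intro T hT
      obtain ⟨x, h1, h2, h3, h4⟩ := hBad T hT
      refine ⟨(fun a => x a, ()), Finset.mem_filter.2 ⟨Finset.mem_univ _, fun a => h1 _ a.2,
        fun a a' h => Fin.ext (h2 a.2 a'.2 h), h3⟩, fun a ha => h4 a ha a.2⟩)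
    (2 ^ b * D ^ P) (by
      refine hWc.trans (le_of_eq ?_)
      obtain ⟨P', rfl⟩ : ∃ P', P = P' + 1 := ⟨P - 1, by omega⟩
      rw [Nat.add_sub_cancel, mul_pow, pow_succ (2 ^ b : ℝ)]
      ring)
  refine hfin.trans (le_of_eq ?_)
  rw [mul_pow]; ring

open Classical in
/-- Tables whose bad sequence has its first dependent key at position `p`. -/
lemma dep_case [Fintype A] (hc : 0 < c) (hd : 0 < d) {R r p q : ℕ} {v : ℕ → ℕ} (hv : ∀ i, v i ≤ i)
    (X : Finset (Fin c → A)) (D : ℝ) (hD : 1 ≤ D) (hX : (X.card : ℝ) ≤ D * 2 ^ b)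
    (hq : R + 1 + (r + 1) * q ≤ p) (hM : ((p : ℝ) + 1) ^ (6 * c) ≤ D * 2 ^ b)
    (Bad : Finset (Fin d → Fin c → A → (Fin b → ZMod 2)))
    (hBad : ∀ T ∈ Bad, ∃ x : ℕ → Fin c → A, (∀ a < p + 1, x a ∈ X) ∧
      Set.InjOn x (Set.Iio (p + 1)) ∧
      LinearIndependent (ZMod 2) (charVec ∘ fun a : Fin p => x a) ∧
      charVec (x p) ∈ Submodule.span (ZMod 2) (Set.range (charVec ∘ fun a : Fin p => x a)) ∧
      ∀ a, 0 < a → a < p → ∃ j, simpleTab (T j) (x a) = simpleTab (T j) (x (parN R r v a))) :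
    (Bad.card : ℝ) * (R.factorial * r.factorial ^ q) ≤
      24 ^ c * (2 * d * D) ^ p * Fintype.card (Fin d → Fin c → A → (Fin b → ZMod 2)) := by
  set W : Finset ((Fin p → Fin c → A) × (Fin c → A)) := Finset.univ.filter fun w =>
    ((∀ a, w.1 a ∈ X) ∧ w.2 ∈ X ∧ (∀ a, w.2 ≠ w.1 a) ∧
      charVec w.2 ∈ Submodule.span (ZMod 2) (Set.range (charVec ∘ w.1))) ∧
    Function.Injective w.1 ∧ LinearIndependent (ZMod 2) (charVec ∘ w.1) with hW
  have hWc : (W.card : ℝ) ≤ 2 ^ p * 24 ^ c * (D * 2 ^ b) ^ (p - 1) := by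
    refine le_trans ?_ (card_dependent_le hc p X (D * 2 ^ b) hX hM)
    refine Nat.cast_le.2 (Finset.card_le_card fun w hw => ?_)
    have := (Finset.mem_filter.1 hw).2.1
    exact Finset.mem_filter.2 ⟨Finset.mem_univ _, this⟩
  have hfin := case_count hd hv p q (by omega) hq W
    (fun w hw => (Finset.mem_filter.1 hw).2.2) (by
      intro w hw σ
      obtain ⟨⟨h1, h2, h3, h4⟩, h5, h6⟩ := (Finset.mem_filter.1 hw).2
      refine Finset.mem_filter.2 ⟨Finset.mem_univ _, ⟨fun a => h1 _, h2, fun a => h3 _, ?_⟩,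
        h5.comp σ.injective, h6.comp σ σ.injective⟩
      have : Set.range (charVec ∘ w.1 ∘ σ) = Set.range (charVec ∘ w.1) := by
        rw [← Function.comp_assoc]
        exact σ.surjective.range_comp _
      simpa only [this] using h4) Bad (by
      intro T hT
      obtain ⟨x, h1, h2, h3, h4, h5⟩ := hBad T hT
      refine ⟨(fun a => x a, x p), Finset.mem_filter.2 ⟨Finset.mem_univ _,
        ⟨fun a => h1 _ (by omega), h1 p (by omega), fun a h => ?_, h4⟩,
        fun a a' h => Fin.ext (h2 (Set.mem_Iio.2 (by omega)) (Set.mem_Iio.2 (by omega)) h), h3⟩,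
        fun a ha => h5 a ha a.2⟩
      have := h2 (Set.mem_Iio.2 (by omega)) (Set.mem_Iio.2 (by omega)) h
      omega)
    (2 ^ p * 24 ^ c * D ^ (p - 1)) (by
      refine hWc.trans (le_of_eq ?_)
      rw [mul_pow]; ring)
  refine hfin.trans ?_
  have : D ^ (p - 1) ≤ D ^ p := pow_le_pow_right₀ hD (by omega)
  calc 2 ^ p * 24 ^ c * D ^ (p - 1) * (d : ℝ) ^ p *
        (Fintype.card (Fin d → Fin c → A → (Fin b → ZMod 2)) : ℝ)
      ≤ 2 ^ p * 24 ^ c * D ^ p * (d : ℝ) ^ p *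
        (Fintype.card (Fin d → Fin c → A → (Fin b → ZMod 2)) : ℝ) := by gcongr
    _ = _ := by rw [mul_pow, mul_pow]; ring

open Classical in
/-- The fraction of tables with a bad sequence, as a sum over the first dependent position. -/
lemma badSeq_count [Fintype A] (hc : 0 < c) (hd : 0 < d) {R r s P : ℕ} {v : ℕ → ℕ} (hv : ∀ i, v i ≤ i)
    (X : Finset (Fin c → A)) (D : ℝ) (hD : 1 ≤ D) (hX : (X.card : ℝ) ≤ D * 2 ^ b)
    (hP : P = R + 1 + (r + 1) * s) (hM : ((P : ℝ) + 1) ^ (6 * c) ≤ D * 2 ^ b) :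
    ((Finset.univ.filter fun T : Fin d → Fin c → A → (Fin b → ZMod 2) =>
        BadSeq X R r v P T).card : ℝ) ≤
      (2 ^ b * ((d * D) ^ P / (R.factorial * r.factorial ^ s)) +
        ∑ t ∈ Finset.range ((r + 1) * s), 24 ^ c * ((2 * d * D) ^ (R + 1 + t) /
          (R.factorial * r.factorial ^ (t / (r + 1))))) *
        Fintype.card (Fin d → Fin c → A → (Fin b → ZMod 2)) := by
  set N := Fintype.card (Fin d → Fin c → A → (Fin b → ZMod 2)) with hN
  set B0 := Finset.univ.filter fun T : Fin d → Fin c → A → (Fin b → ZMod 2) =>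
    ∃ x : ℕ → Fin c → A, (∀ a < P, x a ∈ X) ∧ Set.InjOn x (Set.Iio P) ∧
      LinearIndependent (ZMod 2) (charVec ∘ fun a : Fin P => x a) ∧
      ∀ a, 0 < a → a < P → ∃ j, simpleTab (T j) (x a) = simpleTab (T j) (x (parN R r v a))
    with hB0
  set B1 : ℕ → Finset (Fin d → Fin c → A → (Fin b → ZMod 2)) := fun p => Finset.univ.filter
    fun T : Fin d → Fin c → A → (Fin b → ZMod 2) =>
    ∃ x : ℕ → Fin c → A, (∀ a < p + 1, x a ∈ X) ∧ Set.InjOn x (Set.Iio (p + 1)) ∧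
      LinearIndependent (ZMod 2) (charVec ∘ fun a : Fin p => x a) ∧
      charVec (x p) ∈ Submodule.span (ZMod 2) (Set.range (charVec ∘ fun a : Fin p => x a)) ∧
      ∀ a, 0 < a → a < p → ∃ j, simpleTab (T j) (x a) = simpleTab (T j) (x (parN R r v a))
    with hB1
  have hsub : (Finset.univ.filter fun T : Fin d → Fin c → A → (Fin b → ZMod 2) =>
      BadSeq X R r v P T) ⊆ B0 ∪ (Finset.range ((r + 1) * s)).biUnion fun t => B1 (R + 1 + t) := by
    intro T hT
    obtain ⟨x, h1, h2, h3, h4⟩ := (Finset.mem_filter.1 hT).2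
    rcases indep_or_first x (R + 1) P (by omega) h3 with h | ⟨p, hp1, hp2, hp3, hp4⟩
    · exact Finset.mem_union_left _ (Finset.mem_filter.2 ⟨Finset.mem_univ _, x, h1, h2, h, h4⟩)
    · refine Finset.mem_union_right _ (Finset.mem_biUnion.2 ⟨p - (R + 1), ?_, ?_⟩)
      · exact Finset.mem_range.2 (by omega)
      · rw [show R + 1 + (p - (R + 1)) = p by omega]
        exact Finset.mem_filter.2 ⟨Finset.mem_univ _, x, fun a ha => h1 a (by omega),
          h2.mono fun a ha => Set.mem_Iio.2 (lt_of_lt_of_le (Set.mem_Iio.1 ha) hp2), hp3, hp4,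
          fun a ha ha' => h4 a ha (by omega)⟩
  have hF : ∀ q : ℕ, (0 : ℝ) < R.factorial * r.factorial ^ q := fun q => by positivity
  have hA : (B0.card : ℝ) ≤ 2 ^ b * ((d * D) ^ P / (R.factorial * r.factorial ^ s)) * N := by
    have := indep_case hd hv X D hX P hP B0 fun T hT => (Finset.mem_filter.1 hT).2
    rw [mul_div_assoc', div_mul_eq_mul_div, le_div_iff₀ (hF s)]
    exact this
  have hB : ∀ t ∈ Finset.range ((r + 1) * s), ((B1 (R + 1 + t)).card : ℝ) ≤
      24 ^ c * ((2 * d * D) ^ (R + 1 + t) / (R.factorial * r.factorial ^ (t / (r + 1)))) * N := by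
    intro t ht
    have ht := Finset.mem_range.1 ht
    have htP : ((R + 1 + t : ℕ) : ℝ) ≤ P := by
      rw [hP]; exact Nat.cast_le.2 (by omega)
    have := dep_case hc hd (p := R + 1 + t) (q := t / (r + 1)) hv X D hD hX
      (by have := Nat.mul_div_le t (r + 1); omega)
      (le_trans (by gcongr) hM) (B1 (R + 1 + t)) fun T hT => (Finset.mem_filter.1 hT).2
    rw [mul_div_assoc', div_mul_eq_mul_div, le_div_iff₀ (hF _)]
    exact this
  have hcard : ((Finset.univ.filter fun T : Fin d → Fin c → A → (Fin b → ZMod 2) =>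
      BadSeq X R r v P T).card : ℝ) ≤
      B0.card + ∑ t ∈ Finset.range ((r + 1) * s), ((B1 (R + 1 + t)).card : ℝ) := by
    have h1 := Finset.card_le_card hsub
    have h2 := Finset.card_union_le B0
      ((Finset.range ((r + 1) * s)).biUnion fun t => B1 (R + 1 + t))
    have h3 := Finset.card_biUnion_le (s := Finset.range ((r + 1) * s))
      (t := fun t => B1 (R + 1 + t))
    exact_mod_cast h1.trans (h2.trans (by omega))
  refine hcard.trans ?_
  rw [add_mul _ _ (N : ℝ), Finset.sum_mul]
  exact add_le_add hA (Finset.sum_le_sum hB)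

end Union

/-! ### Numerical estimates -/

section Numerics

lemma sum_div_block (f : ℕ → ℝ) (w s : ℕ) (hw : 0 < w) :
    ∑ t ∈ Finset.range (w * s), f (t / w) = w * ∑ q ∈ Finset.range s, f q := by
  induction s with
  | zero => simp
  | succ s ih =>
    rw [Nat.mul_succ, Finset.sum_range_add, ih, Finset.sum_range_succ, mul_add]
    congr 1
    rw [Finset.sum_congr rfl (g := fun _ => f s)]
    · simp
    · intro t ht
      rw [Nat.mul_add_div hw, Nat.div_eq_of_lt (Finset.mem_range.1 ht), add_zero]

/-- With `E ^ (r + 1) / r!` small, each unit gains a constant factor, so the sums over all possible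
lengths are dominated by the contribution of the root star. -/
lemma series_bound {E : ℝ} (hE : 1 ≤ E) {d c r R s b : ℕ} (hd : 1 ≤ d) (hs : b ≤ d * s)
    (hθ : E ^ (r + 1) / r.factorial ≤ (1 / 2) ^ d) :
    2 ^ b * (E ^ (R + 1 + (r + 1) * s) / (R.factorial * r.factorial ^ s)) +
        ∑ t ∈ Finset.range ((r + 1) * s), 24 ^ c * (E ^ (R + 1 + t) /
          (R.factorial * (r.factorial : ℝ) ^ (t / (r + 1)))) ≤
      E ^ (R + 1) / R.factorial * (1 + 24 ^ c * E ^ (r + 1) * (2 * (r + 1))) := by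
  set θ := E ^ (r + 1) / (r.factorial : ℝ) with hθd
  have hθ0 : 0 ≤ θ := by positivity
  have hθh : θ ≤ 1 / 2 := hθ.trans (pow_le_of_le_one (by norm_num) (by norm_num) (by omega))
  set U := E ^ (R + 1) / (R.factorial : ℝ) with hU
  have hU0 : 0 ≤ U := by positivity
  have hfac : ∀ q : ℕ, E ^ (R + 1 + (r + 1) * q) / (R.factorial * (r.factorial : ℝ) ^ q) =
      U * θ ^ q := by
    intro q
    rw [pow_add, pow_mul, hU, hθd, div_pow, div_mul_div_comm]
  have h1 : 2 ^ b * (E ^ (R + 1 + (r + 1) * s) / (R.factorial * (r.factorial : ℝ) ^ s)) ≤ U := by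
    rw [hfac]
    have : (2 : ℝ) ^ b * θ ^ s ≤ 1 := by
      calc (2 : ℝ) ^ b * θ ^ s ≤ 2 ^ (d * s) * ((1 / 2) ^ d) ^ s := by
            gcongr
            norm_num
        _ = 1 := by rw [← pow_mul, ← mul_pow]; norm_num
    calc (2 : ℝ) ^ b * (U * θ ^ s) = U * (2 ^ b * θ ^ s) := by ring
      _ ≤ U * 1 := by gcongr
      _ = U := mul_one _
  have h2 : ∀ t ∈ Finset.range ((r + 1) * s), 24 ^ c * (E ^ (R + 1 + t) /
      (R.factorial * (r.factorial : ℝ) ^ (t / (r + 1)))) ≤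
      24 ^ c * E ^ (r + 1) * U * θ ^ (t / (r + 1)) := by
    intro t _
    have ht : R + 1 + t ≤ (r + 1) + (R + 1 + (r + 1) * (t / (r + 1))) := by
      have := Nat.div_add_mod t (r + 1)
      have := Nat.mod_lt t (show 0 < r + 1 by omega)
      omega
    calc 24 ^ c * (E ^ (R + 1 + t) / (R.factorial * (r.factorial : ℝ) ^ (t / (r + 1))))
        ≤ 24 ^ c * (E ^ ((r + 1) + (R + 1 + (r + 1) * (t / (r + 1)))) /
          (R.factorial * (r.factorial : ℝ) ^ (t / (r + 1)))) := by gcongr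
      _ = 24 ^ c * E ^ (r + 1) * (E ^ (R + 1 + (r + 1) * (t / (r + 1))) /
          (R.factorial * (r.factorial : ℝ) ^ (t / (r + 1)))) := by rw [pow_add]; ring
      _ = _ := by rw [hfac]; ring
  have h3 : ∑ q ∈ Finset.range s, θ ^ q ≤ 2 := by
    have hg := geom_sum_mul_neg θ s
    have hp : 0 ≤ θ ^ s := by positivity
    have hq : 0 ≤ ∑ q ∈ Finset.range s, θ ^ q := Finset.sum_nonneg fun _ _ => by positivity
    nlinarith
  have h4 := Finset.sum_le_sum h2
  have h5 : ∑ t ∈ Finset.range ((r + 1) * s), 24 ^ c * E ^ (r + 1) * U * θ ^ (t / (r + 1)) =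
      24 ^ c * E ^ (r + 1) * U * (((r : ℝ) + 1) * ∑ q ∈ Finset.range s, θ ^ q) := by
    rw [← Finset.mul_sum, sum_div_block (fun q => θ ^ q) (r + 1) s (by omega)]
    push_cast
    rfl
  calc _ ≤ U + 24 ^ c * E ^ (r + 1) * U * (((r : ℝ) + 1) * ∑ q ∈ Finset.range s, θ ^ q) :=
        add_le_add h1 (h4.trans_eq h5)
    _ ≤ U + 24 ^ c * E ^ (r + 1) * U * (((r : ℝ) + 1) * 2) := by gcongr
    _ = _ := by ring

/-- `E ^ (R + 1) / R!` decays faster than `(R + 1) ^ (-c)`. -/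
lemma star_bound {E : ℝ} (hE : 0 ≤ E) (c R : ℕ) :
    E ^ (R + 1) / R.factorial * ((R : ℝ) + 1) ^ c ≤
      c.factorial * (E * Real.exp 1) * Real.exp (E * Real.exp 1) := by
  have h1 : ((R : ℝ) + 1) ^ c ≤ c.factorial * Real.exp 1 ^ (R + 1) := by
    have := Real.pow_div_factorial_le_exp ((R : ℝ) + 1) (by positivity) c
    rw [div_le_iff₀ (by positivity)] at this
    rw [← Real.exp_nat_mul, mul_comm (c.factorial : ℝ)]
    push_cast
    rwa [mul_one]
  have h2 := Real.pow_div_factorial_le_exp (E * Real.exp 1) (by positivity) R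
  calc E ^ (R + 1) / R.factorial * ((R : ℝ) + 1) ^ c
      ≤ E ^ (R + 1) / R.factorial * (c.factorial * Real.exp 1 ^ (R + 1)) := by gcongr
    _ = c.factorial * (E * Real.exp 1) * ((E * Real.exp 1) ^ R / R.factorial) := by
        rw [pow_succ, pow_succ, mul_pow]; ring
    _ ≤ _ := by gcongr

lemma exists_nat_root {c : ℕ} (hc : 0 < c) {z : ℝ} (hz : 0 ≤ z) :
    ∃ R : ℕ, (R : ℝ) ^ c ≤ z ∧ z ≤ ((R : ℝ) + 1) ^ c := by
  have h : (z ^ ((c : ℝ)⁻¹)) ^ c = z := Real.rpow_inv_natCast_pow hz hc.ne'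
  have hn : 0 ≤ z ^ ((c : ℝ)⁻¹) := Real.rpow_nonneg hz _
  refine ⟨⌊z ^ ((c : ℝ)⁻¹)⌋₊, ?_, ?_⟩
  · calc _ ≤ (z ^ ((c : ℝ)⁻¹)) ^ c := by gcongr; exact Nat.floor_le hn
      _ = z := h
  · calc z = (z ^ ((c : ℝ)⁻¹)) ^ c := h.symm
      _ ≤ _ := by gcongr; exact (Nat.lt_floor_add_one _).le

lemma logb_two_le_self {x : ℝ} (hx : 0 < x) : Real.logb 2 x ≤ x := by
  rw [Real.logb_le_iff_le_rpow (by norm_num) hx]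
  have h1 := one_add_mul_self_le_rpow_one_add (s := 1) (by norm_num) (p := max x 1)
    (le_max_right _ _)
  rcases le_total x 1 with h | h
  · exact h.trans (Real.one_le_rpow (by norm_num) hx.le)
  · rw [max_eq_left h] at h1
    norm_num at h1
    linarith

end Numerics

/-! ### The probability of containing a Fibonacci tree -/

/-- Extraction of bad key sequences from copies, combined with the counting bounds. -/
lemma tree_count {d c b : ℕ} [NeZero d] {A : Type*} [DecidableEq A] [Fintype A] (hd : 2 ≤ d)
    (hc : 0 < c) {φ : ℝ} (hφ1 : 1 ≤ φ) (hφ : φ ^ d = ∑ j ∈ Finset.range d, φ ^ j)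
    (X : Finset (Fin c → A)) (D : ℝ) (hD : 1 ≤ D) (hX : (X.card : ℝ) ≤ D * 2 ^ b)
    {r R s k : ℕ} (hθ : (2 * d * D) ^ (r + 1) / r.factorial ≤ (1 / 2) ^ d)
    (hRk : R ^ c ≤ r + k) (hs : b ≤ d * s)
    (hsl : ∀ l : ℕ, φ ^ (d * k) ≤ φ ^ d * (((d : ℝ) - 1) * l + 1) → s ≤ l)
    (hM : (((R + 1 + (r + 1) * s : ℕ) : ℝ) + 1) ^ (6 * c) ≤ D * 2 ^ b) :
    (Nat.card {T : Fin d → Fin c → A → (Fin b → ZMod 2) //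
        ∃ i : Fin d, containsCopy (SEdges d (r + k + 1) i) X
          (fun x => Finset.univ.image fun j : Fin d => (simpleTab (T j) x, j))} : ℝ) ≤
      d * ((2 * d * D) ^ (R + 1) / R.factorial *
        (1 + 24 ^ c * (2 * d * D) ^ (r + 1) * (2 * (r + 1)))) *
        Fintype.card (Fin d → Fin c → A → (Fin b → ZMod 2)) := by
  classical
  set P := R + 1 + (r + 1) * s with hP
  have hex : ∀ i : Fin d, ∃ v : ℕ → ℕ, (∀ i, v i ≤ i) ∧
      ∀ T : Fin d → Fin c → A → (Fin b → ZMod 2), containsCopy (SEdges d (r + k + 1) i) X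
        (fun x => Finset.univ.image fun j : Fin d => (simpleTab (T j) x, j)) →
        BadSeq X R r v P T := by
    intro i
    obtain ⟨e0, cand, L, hnd, hmem, hcl, hcand, hconn, hpend, hlen⟩ :=
      tree_struct hd hφ1 hφ r k i
    obtain ⟨v, hvi, hv⟩ := exists_parents hconn
    refine ⟨v, hvi, ?_⟩
    rintro T ⟨f, ψ, _, hψ, hcopy⟩
    obtain ⟨eps, h1, h2, h3, h4⟩ := extract hc hnd hcand hpend (by rw [hcl]; exact hRk) hvi hv ψ
      (hψ.mono fun e he => hmem e he)
    have hPL : P ≤ R + 1 + (r + 1) * L.length := by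
      have := Nat.mul_le_mul_left (r + 1) (hsl _ hlen)
      omega
    have hS : ∀ a < P, eps a ∈ SEdges d (r + k + 1) i := fun a ha =>
      hmem _ (h1 a (ha.trans_le hPL))
    refine ⟨fun a => ψ (eps a), fun a ha => (hcopy _ (hS a ha)).1, ?_, h3, ?_⟩
    · intro a ha a' ha' heq
      exact h2 (Set.mem_Iio.2 (lt_of_lt_of_le ha hPL)) (Set.mem_Iio.2 (lt_of_lt_of_le ha' hPL))
        (hψ (hS a ha) (hS a' ha') heq)
    · intro a ha ha'
      exact meet_of_copy (hcopy _ (hS a ha')).2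
        (hcopy _ (hS _ ((parN_lt hvi ha).trans ha'))).2 (h4 a ha (ha'.trans_le hPL))
  choose v hvi hv using hex
  rw [Nat.card_eq_fintype_card, Fintype.card_subtype]
  have hsub : (Finset.univ.filter fun T : Fin d → Fin c → A → (Fin b → ZMod 2) =>
      ∃ i : Fin d, containsCopy (SEdges d (r + k + 1) i) X
        (fun x => Finset.univ.image fun j : Fin d => (simpleTab (T j) x, j))) ⊆
      Finset.univ.biUnion fun i : Fin d => Finset.univ.filter fun
        T : Fin d → Fin c → A → (Fin b → ZMod 2) => BadSeq X R r (v i) P T := by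
    intro T hT
    obtain ⟨i, hi⟩ := (Finset.mem_filter.1 hT).2
    exact Finset.mem_biUnion.2 ⟨i, Finset.mem_univ _, Finset.mem_filter.2
      ⟨Finset.mem_univ _, hv i T hi⟩⟩
  have hd1 : (1 : ℝ) ≤ d := by exact_mod_cast (by omega : 1 ≤ d)
  have hE : 1 ≤ 2 * (d : ℝ) * D := by nlinarith
  have hone : ∀ i : Fin d, ((Finset.univ.filter fun
      T : Fin d → Fin c → A → (Fin b → ZMod 2) => BadSeq X R r (v i) P T).card : ℝ) ≤
      (2 * d * D) ^ (R + 1) / R.factorial *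
        (1 + 24 ^ c * (2 * d * D) ^ (r + 1) * (2 * (r + 1))) *
        Fintype.card (Fin d → Fin c → A → (Fin b → ZMod 2)) := by
    intro i
    refine (badSeq_count hc (by omega) (hvi i) X D hD hX hP hM).trans ?_
    refine mul_le_mul_of_nonneg_right ?_ (Nat.cast_nonneg _)
    refine le_trans ?_ (series_bound (c := c) (R := R) hE (by omega) hs hθ)
    have : (d : ℝ) * D ≤ 2 * d * D := by nlinarith
    rw [hP]
    gcongr
  calc _ ≤ ∑ i : Fin d, ((Finset.univ.filter fun
        T : Fin d → Fin c → A → (Fin b → ZMod 2) => BadSeq X R r (v i) P T).card : ℝ) := by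
        exact_mod_cast (Finset.card_le_card hsub).trans Finset.card_biUnion_le
    _ ≤ ∑ _i : Fin d, (2 * d * D) ^ (R + 1) / R.factorial *
        (1 + 24 ^ c * (2 * d * D) ^ (r + 1) * (2 * (r + 1))) *
        (Fintype.card (Fin d → Fin c → A → (Fin b → ZMod 2)) : ℝ) :=
        Finset.sum_le_sum fun i _ => hone i
    _ = _ := by simp; ring

/-- The real root of `φ ^ d = ∑ i < d, φ ^ i` lies in `(1, 2]`. -/
lemma root_bounds {d : ℕ} (hd : 2 ≤ d) {φ : ℝ} (h0 : 0 < φ)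
    (hφ : φ ^ d = ∑ i ∈ Finset.range d, φ ^ i) : 1 < φ ∧ φ ≤ 2 := by
  constructor
  · by_contra hle
    push Not at hle
    have h1 : φ ^ d ≤ 1 := pow_le_one₀ h0.le hle
    have h2 : ∑ i ∈ Finset.range 2, φ ^ i ≤ ∑ i ∈ Finset.range d, φ ^ i :=
      Finset.sum_le_sum_of_subset_of_nonneg (Finset.range_mono hd) fun _ _ _ => by positivity
    rw [← hφ, Finset.sum_range_succ, Finset.sum_range_one] at h2
    simp only [pow_zero, pow_one] at h2
    linarith
  · have h1 := geom_sum_mul φ d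
    rw [← hφ] at h1
    have h2 : 0 < φ ^ d := by positivity
    by_contra hgt
    push Not at hgt
    nlinarith

/-- The least `s` with `b ≤ d * s`, that is, `b / d` rounded up. -/
lemma exists_ceil_div {d b : ℕ} (hd : 0 < d) :
    ∃ s, b ≤ d * s ∧ s ≤ b ∧ ∀ l, b ≤ d * l → s ≤ l := by
  have hex : ∃ s, b ≤ d * s := ⟨b, Nat.le_mul_of_pos_left b hd⟩
  classical
  exact ⟨Nat.find hex, Nat.find_spec hex, Nat.find_min' hex (Nat.le_mul_of_pos_left b hd),
    fun l hl => Nat.find_min' hex hl⟩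

/-- The counting bound with `y` in the role of `log₂ log₂ n`: the root star has about
`(y / d) ^ (1 / c)` edges and the skeleton has at least `b / d` units. -/
lemma tree_count_log {d c b : ℕ} [NeZero d] {A : Type*} [DecidableEq A] [Fintype A]
    (hd : 2 ≤ d) (hc : 0 < c) (hb : 1 ≤ b) {φ : ℝ} (hφ1 : 1 < φ) (hφ2 : φ ≤ 2)
    (hφ : φ ^ d = ∑ j ∈ Finset.range d, φ ^ j)
    (X : Finset (Fin c → A)) {D E K : ℝ} (hD : 1 ≤ D) (hX : (X.card : ℝ) ≤ D * 2 ^ b)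
    (hE : E = 2 * d * D) {r : ℕ} (hθ : E ^ (r + 1) / r.factorial ≤ (1 / 2) ^ d)
    (hK : K = 1 + 24 ^ c * E ^ (r + 1) * (2 * (r + 1)))
    (hb0 : (((r : ℝ) + d + 4) * b) ^ (6 * c) ≤ 2 ^ b)
    {y : ℝ} (hy0 : 0 < y) (hy : (b : ℝ) + 1 ≤ 2 ^ y) (hyb : y ≤ b + d) :
    (Nat.card {T : Fin d → Fin c → A → (Fin b → ZMod 2) //
        ∃ i : Fin d, containsCopy
          (SEdges d ⌈y / ((d : ℝ) * Real.logb 2 φ) + ((r + 2 : ℕ) : ℝ)⌉₊ i) X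
          (fun x => Finset.univ.image fun j : Fin d => (simpleTab (T j) x, j))} : ℝ) * y ≤
      d * K * (d * (c.factorial * (E * Real.exp 1) * Real.exp (E * Real.exp 1))) *
        Fintype.card (Fin d → Fin c → A → (Fin b → ZMod 2)) := by
  have hd1 : (1 : ℝ) ≤ d := by exact_mod_cast (by omega : 1 ≤ d)
  have hd2 : (2 : ℝ) ≤ d := by exact_mod_cast hd
  have hb1 : (1 : ℝ) ≤ b := by exact_mod_cast hb
  have hφ0 : 0 < φ := by linarith
  have hE0 : 0 < E := by rw [hE]; positivity
  have hlam0 : 0 < Real.logb 2 φ := Real.logb_pos (by norm_num) hφ1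
  have hlam1 : Real.logb 2 φ ≤ 1 := by
    rw [Real.logb_le_iff_le_rpow (by norm_num) hφ0, Real.rpow_one]; exact hφ2
  have hdl : 0 < (d : ℝ) * Real.logb 2 φ := by positivity
  obtain ⟨k, hk⟩ : ∃ k, k = ⌈y / ((d : ℝ) * Real.logb 2 φ)⌉₊ := ⟨_, rfl⟩
  have hk1 : y / ((d : ℝ) * Real.logb 2 φ) ≤ k := hk ▸ Nat.le_ceil _
  have hceil : ⌈y / ((d : ℝ) * Real.logb 2 φ) + ((r + 2 : ℕ) : ℝ)⌉₊ = r + (k + 1) + 1 := by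
    rw [Nat.ceil_add_natCast (by positivity), ← hk]
    omega
  rw [hceil]
  obtain ⟨R, hR1, hR2⟩ := exists_nat_root (c := c) hc (z := y / d) (by positivity)
  -- `φ ^ (d * k)` exceeds `b`, hence the skeleton has at least `b / d` units.
  have hpow : (b : ℝ) + 1 ≤ φ ^ (d * k) := by
    have hk2 := hk1
    rw [div_le_iff₀ hdl] at hk2
    calc (b : ℝ) + 1 ≤ (2 : ℝ) ^ y := hy
      _ ≤ (2 : ℝ) ^ (Real.logb 2 φ * ((d * k : ℕ) : ℝ)) := by
          refine Real.rpow_le_rpow_of_exponent_le (by norm_num) ?_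
          push_cast
          linarith
      _ = φ ^ (d * k) := by
          rw [Real.rpow_mul (by norm_num), Real.rpow_logb (by norm_num) (by norm_num) hφ0,
            Real.rpow_natCast]
  have hRk : R ^ c ≤ r + (k + 1) := by
    have h1 : y / d ≤ k := by
      refine le_trans ?_ hk1
      exact div_le_div_of_nonneg_left hy0.le hdl (mul_le_of_le_one_right (by positivity) hlam1)
    have h2 : R ^ c ≤ k := by
      rw [← Nat.cast_le (α := ℝ), Nat.cast_pow]
      exact hR1.trans h1
    exact h2.trans (by omega)
  have hRb : (R : ℝ) ≤ b + d := by
    rcases Nat.eq_zero_or_pos R with h | h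
    · rw [h, Nat.cast_zero]; positivity
    · have h1 : (R : ℝ) ≤ (R : ℝ) ^ c :=
        le_self_pow₀ (by exact_mod_cast h) (by omega)
      have h2 : y / d ≤ y := div_le_self hy0.le hd1
      linarith
  obtain ⟨s, hsd, hsb, hsl⟩ := exists_ceil_div (d := d) (b := b) (by omega)
  have hsl' : ∀ l : ℕ, φ ^ (d * (k + 1)) ≤ φ ^ d * (((d : ℝ) - 1) * l + 1) → s ≤ l := by
    intro l hl
    rw [mul_add, mul_one, pow_add, mul_comm] at hl
    have h1 := le_of_mul_le_mul_left hl (show 0 < φ ^ d by positivity)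
    have h2 : (b : ℝ) ≤ ((d * l : ℕ) : ℝ) := by
      have h3 : (0 : ℝ) ≤ l := Nat.cast_nonneg _
      rw [Nat.cast_mul]
      linarith
    exact hsl l (Nat.cast_le.1 h2)
  have hM : (((R + 1 + (r + 1) * s : ℕ) : ℝ) + 1) ^ (6 * c) ≤ D * 2 ^ b := by
    have hsb' : (s : ℝ) ≤ b := by exact_mod_cast hsb
    have h1 : (((R + 1 + (r + 1) * s : ℕ) : ℝ) + 1) ≤ ((r : ℝ) + d + 4) * b := by
      have h2 : ((r : ℝ) + 1) * s ≤ (r + 1) * b := by gcongr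
      have h3 : (d : ℝ) ≤ d * b := le_mul_of_one_le_right (by positivity) hb1
      push_cast
      linarith
    calc _ ≤ (((r : ℝ) + d + 4) * b) ^ (6 * c) := by gcongr
      _ ≤ 2 ^ b := hb0
      _ ≤ D * 2 ^ b := le_mul_of_one_le_left (by positivity) hD
  have hθ' := hθ
  rw [hE] at hθ'
  have hmain := tree_count (b := b) hd hc hφ1.le hφ X D hD hX hθ' hRk hsd hsl' hM
  rw [← hE, ← hK] at hmain
  have hstar := star_bound hE0.le c R
  have hyR : y ≤ d * ((R : ℝ) + 1) ^ c := by
    rw [div_le_iff₀ (by positivity)] at hR2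
    linarith
  have hK0 : 0 ≤ K := by rw [hK]; positivity
  refine (mul_le_mul_of_nonneg_right hmain hy0.le).trans ?_
  generalize (Fintype.card (Fin d → Fin c → A → (Fin b → ZMod 2)) : ℕ) = N
  have hU : 0 ≤ E ^ (R + 1) / (R.factorial : ℝ) := by positivity
  generalize E ^ (R + 1) / (R.factorial : ℝ) = U at *
  calc d * (U * K) * N * y ≤ d * (U * K) * N * (d * ((R : ℝ) + 1) ^ c) := by gcongr
    _ = d * K * (d * (U * ((R : ℝ) + 1) ^ c)) * N := by ring
    _ ≤ d * K * (d * (c.factorial * (E * Real.exp 1) * Real.exp (E * Real.exp 1))) * N := by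
        gcongr

theorem stmt7 (d c : ℕ) (hd : 2 ≤ d) (hc : 1 ≤ c) (C : ℝ) (hC : 0 < C)
    (φd : ℝ) (hφ0 : 0 < φd) (hφ : φd ^ d = ∑ i ∈ Finset.range d, φd ^ i) :
    haveI : NeZero d := ⟨by omega⟩
    ∃ r K : ℝ, ∀ b : ℕ, 1 ≤ b → ∀ (A : Type) [Fintype A] [DecidableEq A],
      ∀ X : Finset (Fin c → A),
        4 ≤ d * 2 ^ b → (X.card : ℝ) ≤ C * ((d : ℝ) * 2 ^ b) →
        (Nat.card {T : Fin d → Fin c → A → (Fin b → ZMod 2) //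
            ∃ i : Fin d,
              containsCopy
                (SEdges d
                  ⌈Real.logb 2 (Real.logb 2 ((d : ℝ) * 2 ^ b)) /
                      ((d : ℝ) * Real.logb 2 φd) + r⌉₊ i)
                X (fun x => Finset.univ.image fun j : Fin d => (simpleTab (T j) x, j))} : ℝ) /
          (Fintype.card (Fin d → Fin c → A → (Fin b → ZMod 2)) : ℝ) ≤
        K / Real.logb 2 (Real.logb 2 ((d : ℝ) * 2 ^ b)) := by
  have : NeZero d := ⟨by omega⟩
  have hd2 : (2 : ℝ) ≤ d := by exact_mod_cast hd
  obtain ⟨hφ1, hφ2⟩ := root_bounds hd hφ0 hφ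
  obtain ⟨D, hDdef⟩ : ∃ D : ℝ, D = max (C * d) 1 := ⟨_, rfl⟩
  have hD : 1 ≤ D := hDdef ▸ le_max_right _ _
  obtain ⟨E, hE⟩ : ∃ E : ℝ, E = 2 * d * D := ⟨_, rfl⟩
  have hE0 : 0 < E := by rw [hE]; positivity
  -- The slack `r₀` makes the contribution of one unit at most `2 ^ (-d)`.
  obtain ⟨r0, hr0⟩ : ∃ r0 : ℕ, E ^ (r0 + 1) / r0.factorial ≤ (1 / 2) ^ d := by
    have h1 := (FloorSemiring.tendsto_pow_div_factorial_atTop E).const_mul E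
    rw [mul_zero] at h1
    obtain ⟨r0, h⟩ := (h1.eventually_le_const (show (0 : ℝ) < (1 / 2) ^ d by positivity)).exists
    refine ⟨r0, le_trans (le_of_eq ?_) h⟩
    rw [pow_succ]; ring
  -- Beyond `b0` the length of the key sequences is negligible against `2 ^ b`.
  obtain ⟨b0, hb0⟩ : ∃ b0 : ℕ, ∀ b ≥ b0, (((r0 : ℝ) + d + 4) * b) ^ (6 * c) ≤ 2 ^ b := by
    have h1 := (tendsto_pow_const_div_const_pow_of_one_lt (6 * c)
      (show (1 : ℝ) < 2 by norm_num)).const_mul (((r0 : ℝ) + d + 4) ^ (6 * c))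
    rw [mul_zero] at h1
    obtain ⟨b0, h⟩ := Filter.eventually_atTop.1
      (h1.eventually_le_const (show (0 : ℝ) < 1 by norm_num))
    refine ⟨b0, fun b hb => ?_⟩
    have := h b hb
    rw [mul_div_assoc', div_le_one (by positivity)] at this
    rwa [mul_pow]
  obtain ⟨K, hK⟩ : ∃ K : ℝ, K = 1 + 24 ^ c * E ^ (r0 + 1) * (2 * (r0 + 1)) := ⟨_, rfl⟩
  have hK0 : 0 ≤ K := by rw [hK]; positivity
  refine ⟨((r0 + 2 : ℕ) : ℝ), (b0 + d) +
    d * K * (d * (c.factorial * (E * Real.exp 1) * Real.exp (E * Real.exp 1))), ?_⟩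
  intro b hb A _ _ X _ hX
  have hell : Real.logb 2 ((d : ℝ) * 2 ^ b) = Real.logb 2 d + b := by
    rw [Real.logb_mul (by positivity) (by positivity), Real.logb_pow, Real.logb_self_eq_one
      (by norm_num), mul_one]
  have hld : 1 ≤ Real.logb 2 d := by
    rw [Real.le_logb_iff_rpow_le (by norm_num) (by positivity), Real.rpow_one]; exact hd2
  have hb1 : (1 : ℝ) ≤ b := by exact_mod_cast hb
  generalize Real.logb 2 ((d : ℝ) * 2 ^ b) = ell at hell ⊢
  have hell1 : (b : ℝ) + 1 ≤ ell := by linarith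
  have hell2 : ell ≤ b + d := by
    have := logb_two_le_self (show (0 : ℝ) < d by positivity)
    linarith
  have hell0 : 0 < ell := by linarith
  have hy1 : 1 ≤ Real.logb 2 ell := by
    rw [Real.le_logb_iff_rpow_le (by norm_num) hell0, Real.rpow_one]; linarith
  have hy2 : Real.logb 2 ell ≤ b + d := (logb_two_le_self hell0).trans hell2
  have hyell : (2 : ℝ) ^ Real.logb 2 ell = ell := Real.rpow_logb (by norm_num) (by norm_num) hell0
  generalize Real.logb 2 ell = y at hy1 hy2 hyell ⊢
  have hy0 : 0 < y := by linarith
  have hN : (0 : ℝ) < Fintype.card (Fin d → Fin c → A → (Fin b → ZMod 2)) := by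
    exact_mod_cast Fintype.card_pos
  rw [div_le_div_iff₀ hN hy0]
  rcases lt_or_ge b b0 with hlt | hge
  · -- For the finitely many `b < b0` the trivial bound by one suffices.
    have hbb : (b : ℝ) ≤ b0 := by exact_mod_cast hlt.le
    have hK12 : 0 ≤ d * K *
        (d * (c.factorial * (E * Real.exp 1) * Real.exp (E * Real.exp 1))) := by positivity
    rw [mul_comm]
    refine mul_le_mul (by linarith) ?_ (Nat.cast_nonneg _) (by positivity)
    rw [← Nat.card_eq_fintype_card]
    exact_mod_cast Nat.card_le_card_of_injective _ Subtype.val_injective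
  · have hXD : (X.card : ℝ) ≤ D * 2 ^ b := by
      refine hX.trans ?_
      rw [← mul_assoc, hDdef]
      gcongr
      exact le_max_left _ _
    have hmain := tree_count_log hd (by omega) hb hφ1 hφ2 hφ X hD hXD hE hr0 hK (hb0 b hge) hy0
      (hell1.trans hyell.ge) hy2
    refine hmain.trans ?_
    gcongr
    exact le_add_of_nonneg_left (by positivity)
end

section
/- Let d ≥ 2 and c ≥ 1 be fixed integers and C, α > 0 fixed constants. For every δ > 0 there exists n₀ such that the following holds for every integer b ≥ 1, every finite alphabet Σ, and every key set X ⊆ Σ^c with g = 2^b, n = d·g ≥ n₀ and |X| = m ≤ C·n. If h_1,…,h_d : Σ^c → F₂^b ≅ [g] are d independent random simple tabulation hash functions, then the probability (over the random tables) that the hash graph contains a subgraph (V,E) with |E| ≤ α·log₂ log₂ n and |V| ≤ (d−1)|E| − 1, whose edges correspond to distinct keys that are independent, is at most n^{−1+δ}. -/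
/-- A key `x : Fin c → A` viewed as a vector of the `F₂`-vector space indexed by
position characters `Fin c × A`. -/
def keyVec {c : ℕ} {A : Type*} [DecidableEq A] (x : Fin c → A) : Fin c × A → ZMod 2 :=
  fun p => if x p.1 = p.2 then 1 else 0

/-- A finite set of keys is independent if no nonempty subset XORs to the empty set. -/
def IndepKeys {c : ℕ} {A : Type*} [DecidableEq A] (S : Finset (Fin c → A)) : Prop :=
  ∀ I ⊆ S, I.Nonempty → ∑ x ∈ I, keyVec x ≠ 0

/-! ### Uniformity of hash values on independent keys -/

open Finset in
/-- Independence of keys is linear independence over `F₂` of their character vectors. -/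
lemma IndepKeys.linearIndependent {c : ℕ} {A : Type*} [DecidableEq A]
    {S : Finset (Fin c → A)} (hS : IndepKeys S) :
    LinearIndependent (ZMod 2) (fun x : S => keyVec (x : Fin c → A)) := by
  rw [Fintype.linearIndependent_iff]
  intro g hg
  by_contra! hne
  obtain ⟨i, hi⟩ := hne
  have h01 : ∀ z : ZMod 2, z ≠ 0 → z = 1 := by decide
  refine hS ((univ.filter fun x : S => g x ≠ 0).map (Function.Embedding.subtype _)) ?_ ?_ ?_
  · intro x hx
    simp only [mem_map, mem_filter, mem_univ, true_and] at hx
    obtain ⟨y, -, rfl⟩ := hx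
    exact y.2
  · exact ⟨i, by simp [hi]⟩
  · rw [sum_map, sum_filter]
    refine Eq.trans ?_ hg
    refine sum_congr rfl fun x _ => ?_
    by_cases h : g x = 0
    · simp [h]
    · simp [h01 _ h]

/-- The hash values of the keys in `S` under all `d` functions, as an additive function of the
tables. -/
def evalHom {c b d : ℕ} {A : Type*} (S : Finset (Fin c → A)) :
    (Fin d → Fin c → A → (Fin b → ZMod 2)) →+ (S → Fin d → (Fin b → ZMod 2)) where
  toFun T x j := simpleTab (T j) x
  map_zero' := by ext; simp [simpleTab]
  map_add' T T' := by ext; simp [simpleTab, Finset.sum_add_distrib]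

/-- On independent keys every pattern of hash values is attained: extend the pattern linearly to
all of `F₂^(Fin c × A)` and read the tables off the standard basis. -/
lemma evalHom_surjective {c b d : ℕ} {A : Type*} [Fintype A] [DecidableEq A]
    {S : Finset (Fin c → A)} (hS : IndepKeys S) :
    Function.Surjective (evalHom (b := b) (d := d) S) := by
  intro t
  have hli := hS.linearIndependent
  obtain ⟨f, hf⟩ := LinearMap.exists_extend
    ((Module.Basis.span hli).constr (ZMod 2) t)
  refine ⟨fun j i a => f (Pi.single (i, a) 1) j, ?_⟩
  ext x j l
  have hkey : keyVec (x : Fin c → A) =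
      ∑ i, (Pi.single (i, (x : Fin c → A) i) 1 : Fin c × A → ZMod 2) := by
    ext ⟨i, a⟩
    simp [keyVec, Finset.sum_apply, Pi.single_apply, Prod.ext_iff, eq_comm, ite_and]
  have hfx : f (keyVec (x : Fin c → A)) = t x := by
    have := LinearMap.congr_fun hf (Module.Basis.span hli x)
    rw [Module.Basis.constr_basis] at this
    rw [← this]
    simp [Module.Basis.span_apply]
  rw [hkey, map_sum] at hfx
  rw [← hfx]
  simp [evalHom, simpleTab]

/-- A surjective homomorphism of finite groups transports uniform probabilities. -/
lemma card_preimage_mul {G H : Type*} [AddGroup G] [AddGroup H] [Fintype G] [Fintype H]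
    [DecidableEq H] (f : G →+ H) (hf : Function.Surjective f) (P : Finset H) :
    (Finset.univ.filter fun x => f x ∈ P).card * Fintype.card H = P.card * Fintype.card G := by
  have key : ∀ Q : Finset H, (Finset.univ.filter fun x => f x ∈ Q).card =
      Q.card * (Finset.univ.filter fun x => f x = 0).card := by
    intro Q
    rw [Finset.card_eq_sum_card_fiberwise (f := f) (t := Q) (by intro x; simp), ← smul_eq_mul,
      ← Finset.sum_const]
    refine Finset.sum_congr rfl fun y hy => ?_
    rw [← AddMonoidHom.card_fiber_eq_of_mem_range f (x := y) (y := 0) (hf y) (hf 0)]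
    congr 1
    ext x
    simp only [Finset.mem_filter, Finset.mem_univ, true_and]
    exact ⟨fun h => h.2, fun h => ⟨h ▸ hy, h⟩⟩
  have h1 := key P
  have h2 := key Finset.univ
  simp only [Finset.mem_univ, Finset.filter_true, Finset.card_univ] at h2
  rw [h1, h2]
  ring

/-! ### Counting patterns that span few vertices -/

/-- The patterns of values whose edges span at most `v` vertices number at most `(dg)^v v^{dk}`:
list `v` vertices containing all those used, then say which of them each value is. -/
lemma card_patterns_le {ι R : Type*} [Fintype ι] [DecidableEq ι] [Fintype R] [DecidableEq R]
    [Nonempty R] (d v : ℕ) (hd : 0 < d) (P : Finset (ι → Fin d → R))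
    (hP : ∀ t ∈ P, (Finset.univ.biUnion fun x : ι =>
      Finset.univ.image fun j : Fin d => (t x j, j)).card ≤ v) :
    P.card ≤ (d * Fintype.card R) ^ v * v ^ (d * Fintype.card ι) := by
  classical
  let F : (Fin v → R × Fin d) × (ι × Fin d → Fin v) → ι → Fin d → R :=
    fun p x j => (p.1 (p.2 (x, j))).1
  have hsub : P ⊆ Finset.univ.image F := by
    intro t ht
    have hc := hP t ht
    set V := Finset.univ.biUnion fun x : ι =>
      Finset.univ.image fun j : Fin d => (t x j, j) with hV
    have hmem : ∀ x j, (t x j, j) ∈ V := fun x j => by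
      simp only [hV, Finset.mem_biUnion, Finset.mem_univ, Finset.mem_image, true_and]
      exact ⟨x, j, rfl⟩
    let w : Fin v → R × Fin d := fun i =>
      if h : (i : ℕ) < V.card then (V.equivFin.symm ⟨i, h⟩ : R × Fin d)
      else (Classical.arbitrary R, ⟨0, hd⟩)
    let s : ι × Fin d → Fin v := fun p => Fin.castLE hc (V.equivFin ⟨_, hmem p.1 p.2⟩)
    refine Finset.mem_image.2 ⟨(w, s), Finset.mem_univ _, ?_⟩
    ext x j
    simp [F, w, s]
  calc P.card ≤ _ := Finset.card_le_card hsub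
    _ ≤ _ := Finset.card_image_le
    _ = _ := by simp [mul_comm]

/-- For a fixed set of `k` independent keys, the fraction of tables for which it spans fewer than
`(d-1)k` vertices is at most `(d²k)^{dk} / n^{k+1}`, where `n = d 2^b`. -/
lemma card_bad_le {c b d k : ℕ} (hd : 2 ≤ d) {A : Type*} [Fintype A] [DecidableEq A]
    {S : Finset (Fin c → A)} (hS : IndepKeys S) (hk : S.card = k) :
    ((Finset.univ.filter fun T : Fin d → Fin c → A → (Fin b → ZMod 2) =>
      (S.biUnion fun x => Finset.univ.image fun j : Fin d =>
        (simpleTab (T j) x, j)).card + 1 ≤ (d - 1) * S.card).card) * (d * 2 ^ b) ^ (k + 1) ≤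
      (d * (d * k)) ^ (d * k) * Fintype.card (Fin d → Fin c → A → (Fin b → ZMod 2)) := by
  classical
  rcases Nat.eq_zero_or_pos k with rfl | hk0
  · simp [hk]
  set N := Fintype.card (Fin d → Fin c → A → (Fin b → ZMod 2))
  obtain ⟨v, hv⟩ : ∃ v, (d - 1) * k = v + 1 :=
    ⟨(d - 1) * k - 1, by have : 0 < (d - 1) * k := Nat.mul_pos (by omega) hk0
                         omega⟩
  have hvk : v + (k + 1) = d * k := by
    obtain ⟨e, rfl⟩ : ∃ e, d = e + 1 := ⟨d - 1, by omega⟩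
    simp only [Nat.add_sub_cancel] at hv
    rw [add_mul, one_mul]
    omega
  let P : Finset (S → Fin d → (Fin b → ZMod 2)) := Finset.univ.filter fun t =>
    (Finset.univ.biUnion fun x : S =>
      Finset.univ.image fun j : Fin d => (t x j, j)).card ≤ v
  have hfil : (Finset.univ.filter fun T : Fin d → Fin c → A → (Fin b → ZMod 2) =>
      (S.biUnion fun x => Finset.univ.image fun j : Fin d =>
        (simpleTab (T j) x, j)).card + 1 ≤ (d - 1) * S.card) =
      Finset.univ.filter fun T => evalHom S T ∈ P := by
    ext T
    have : (Finset.univ.biUnion fun x : S =>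
        Finset.univ.image fun j : Fin d => (evalHom S T x j, j)) =
        S.biUnion fun x => Finset.univ.image fun j : Fin d => (simpleTab (T j) x, j) := by
      ext p
      simp [evalHom]
    simp only [P, Finset.mem_filter, Finset.mem_univ, true_and, this, hk, hv]
    omega
  rw [hfil]
  set B := (Finset.univ.filter fun T => evalHom (b := b) (d := d) S T ∈ P).card
  have h1 := card_preimage_mul (evalHom (b := b) (d := d) S) (evalHom_surjective hS) P
  have hcard : Fintype.card (S → Fin d → (Fin b → ZMod 2)) = (2 ^ b) ^ (d * k) := by
    simp [hk, ← pow_mul, mul_assoc]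
  have h2 : P.card ≤ (d * 2 ^ b) ^ v * v ^ (d * k) := by
    have := card_patterns_le d v (by omega) P (fun t ht => (Finset.mem_filter.1 ht).2)
    simpa [hk] using this
  change B * _ = _ * N at h1
  rw [hcard] at h1
  have hpos : 0 < (d * 2 ^ b) ^ v := by positivity
  have hvle : v ≤ d * k := by omega
  -- since `v + (k + 1) = dk`, multiplying by `n ^ v` completes `n ^ (k + 1)` to `n ^ (dk)`
  refine Nat.le_of_mul_le_mul_left ?_ hpos
  calc (d * 2 ^ b) ^ v * (B * (d * 2 ^ b) ^ (k + 1))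
      = B * (2 ^ b) ^ (d * k) * d ^ (d * k) := by
        rw [← hvk]; ring
    _ = P.card * N * d ^ (d * k) := by rw [h1]
    _ ≤ ((d * 2 ^ b) ^ v * (d * k) ^ (d * k)) * N * d ^ (d * k) := by
        gcongr
        exact h2.trans (by gcongr)
    _ = _ := by rw [mul_pow d (d * k)]; ring

/-! ### Asymptotic estimates -/

/-- `(log₂ log₂ x)²` is negligible against `log x`. -/
lemma exists_logb_sq_le (B α δ : ℝ) (hB : 0 < B) (hα : 0 < α) (hδ : 0 < δ) :
    ∃ N : ℝ, ∀ x ≥ N, B * (α * Real.logb 2 (Real.logb 2 x)) ^ 2 ≤ δ * Real.log x := by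
  have hl : 0 < Real.log 2 := Real.log_pos (by norm_num)
  -- the constant that absorbs `B α² / (log 2)²` and one more factor `log 2` from `log x`
  have hε : 0 < δ * Real.log 2 ^ 3 / (B * α ^ 2) := by positivity
  have h1 := (Real.isLittleO_pow_log_id_atTop (n := 2)).bound hε
  have h2 : Filter.Tendsto (fun x => Real.logb 2 x) Filter.atTop Filter.atTop :=
    Real.tendsto_logb_atTop (by norm_num)
  have h3 := (h2.eventually (h1.and (Filter.eventually_ge_atTop 0)))
  obtain ⟨N, hN⟩ := Filter.eventually_atTop.1 h3
  refine ⟨N, fun x hx => ?_⟩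
  obtain ⟨h4, h5⟩ := hN x hx
  simp only [Real.norm_eq_abs, id, abs_of_nonneg h5, abs_pow, sq_abs] at h4
  have hx : Real.log x = Real.logb 2 x * Real.log 2 := by
    rw [Real.logb]; field_simp
  rw [hx]
  generalize Real.logb 2 x = y at *
  have h6 : B * α ^ 2 / Real.log 2 ^ 2 * Real.log y ^ 2 ≤
      B * α ^ 2 / Real.log 2 ^ 2 * (δ * Real.log 2 ^ 3 / (B * α ^ 2) * y) := by gcongr
  calc _ = B * α ^ 2 / Real.log 2 ^ 2 * Real.log y ^ 2 := by rw [Real.logb]; field_simp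
    _ ≤ _ := h6
    _ = _ := by field_simp

/-- The contribution of size-`k` key sets, in the form obtained after multiplying the number of
such sets by the probability bound for one of them. -/
lemma term_le {C : ℝ} (hC : 0 < C) {d k K : ℕ} (hk : 1 ≤ k) (hkK : k ≤ K) :
    C ^ k * ((d * (d * k) : ℕ) : ℝ) ^ (d * k) ≤ Real.exp ((C + d ^ 3) * K ^ 2) := by
  have hK : (1 : ℝ) ≤ K := by exact_mod_cast hk.trans hkK
  have hkK' : (k : ℝ) ≤ K := by exact_mod_cast hkK
  have hE : ∀ y : ℝ, y ≤ Real.exp y := fun y => by linarith [Real.add_one_le_exp y]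
  calc C ^ k * ((d * (d * k) : ℕ) : ℝ) ^ (d * k)
      ≤ Real.exp C ^ k * Real.exp ((d * (d * k) : ℕ) : ℝ) ^ (d * k) := by
        gcongr <;> exact hE _
    _ = Real.exp (C * k + d ^ 3 * (k : ℝ) ^ 2) := by
        rw [← Real.exp_nat_mul, ← Real.exp_nat_mul, ← Real.exp_add]
        congr 1
        push_cast
        ring
    _ ≤ _ := by
        rw [add_mul]
        gcongr
        nlinarith

/-! ### The union bound -/

theorem stmt8 (d c : ℕ) (hd : 2 ≤ d) (hc : 1 ≤ c) (C α : ℝ) (hC : 0 < C) (hα : 0 < α)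
    (δ : ℝ) (hδ : 0 < δ) :
    ∃ n₀ : ℕ, ∀ b : ℕ, 1 ≤ b → ∀ (A : Type) [Fintype A] [DecidableEq A],
      ∀ X : Finset (Fin c → A),
        n₀ ≤ d * 2 ^ b → (X.card : ℝ) ≤ C * ((d : ℝ) * 2 ^ b) →
        (Nat.card {T : Fin d → Fin c → A → (Fin b → ZMod 2) //
            ∃ S ⊆ X, IndepKeys S ∧
              (S.card : ℝ) ≤ α * Real.logb 2 (Real.logb 2 ((d : ℝ) * 2 ^ b)) ∧
              (S.biUnion fun x => Finset.univ.image fun j : Fin d =>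
                  (simpleTab (T j) x, j)).card + 1 ≤ (d - 1) * S.card} : ℝ) /
          (Fintype.card (Fin d → Fin c → A → (Fin b → ZMod 2)) : ℝ) ≤
        ((d : ℝ) * 2 ^ b) ^ (-(1 : ℝ) + δ) := by
  classical
  obtain ⟨N, hN⟩ := exists_logb_sq_le (1 + C + d ^ 3) α δ (by positivity) hα hδ
  refine ⟨⌈N⌉₊, fun b _ A _ _ X hn hX => ?_⟩
  set n : ℝ := (d : ℝ) * 2 ^ b with hndef
  have hn0 : 0 < n := by positivity
  have hNn : N ≤ n := by
    refine (Nat.le_ceil N).trans ?_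
    calc ((⌈N⌉₊ : ℕ) : ℝ) ≤ ((d * 2 ^ b : ℕ) : ℝ) := by exact_mod_cast hn
      _ = n := by push_cast; rfl
  have hlog := hN n hNn
  set L := α * Real.logb 2 (Real.logb 2 n) with hL
  set K := ⌊L⌋₊ with hK
  set M := Fintype.card (Fin d → Fin c → A → (Fin b → ZMod 2)) with hM
  have hM0 : (0 : ℝ) < M := by exact_mod_cast Fintype.card_pos
  let bad : Finset (Fin c → A) → Finset (Fin d → Fin c → A → (Fin b → ZMod 2)) := fun S =>
    Finset.univ.filter fun T => IndepKeys S ∧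
      (S.biUnion fun x => Finset.univ.image fun j : Fin d =>
        (simpleTab (T j) x, j)).card + 1 ≤ (d - 1) * S.card
  have hbad : ∀ k, ∀ S ∈ X.powersetCard k, ((bad S).card : ℝ) ≤
      ((d * (d * k) : ℕ) : ℝ) ^ (d * k) * M / n ^ (k + 1) := by
    intro k S hS
    rw [le_div_iff₀ (by positivity)]
    by_cases hI : IndepKeys S
    · have := card_bad_le (b := b) hd hI (Finset.mem_powersetCard.1 hS).2
      simp only [bad, hI, true_and]
      rw [hndef]
      exact_mod_cast this
    · simp only [bad, hI, false_and, Finset.filter_false, Finset.card_empty]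
      simp only [Nat.cast_zero, zero_mul]
      positivity
  have hlevel : ∀ k ∈ Finset.Icc 1 K, (∑ S ∈ X.powersetCard k, ((bad S).card : ℝ)) ≤
      Real.exp ((C + d ^ 3) * K ^ 2) * M / n := by
    intro k hk
    obtain ⟨hk1, hkK⟩ := Finset.mem_Icc.1 hk
    calc (∑ S ∈ X.powersetCard k, ((bad S).card : ℝ))
        ≤ (X.powersetCard k).card • (((d * (d * k) : ℕ) : ℝ) ^ (d * k) * M / n ^ (k + 1)) :=
          Finset.sum_le_card_nsmul _ _ _ (hbad k)
      _ ≤ (C * n) ^ k * (((d * (d * k) : ℕ) : ℝ) ^ (d * k) * M / n ^ (k + 1)) := by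
          rw [nsmul_eq_mul, Finset.card_powersetCard]
          gcongr
          calc ((X.card.choose k : ℕ) : ℝ) ≤ (X.card : ℝ) ^ k := by
                exact_mod_cast Nat.choose_le_pow _ _
            _ ≤ _ := by gcongr
      _ = C ^ k * ((d * (d * k) : ℕ) : ℝ) ^ (d * k) * M / n := by
          rw [mul_pow, pow_succ]
          field_simp
      _ ≤ _ := by
          gcongr
          exact term_le hC hk1 hkK
  have hcount : (Nat.card {T : Fin d → Fin c → A → (Fin b → ZMod 2) //
      ∃ S ⊆ X, IndepKeys S ∧ (S.card : ℝ) ≤ L ∧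
        (S.biUnion fun x => Finset.univ.image fun j : Fin d =>
          (simpleTab (T j) x, j)).card + 1 ≤ (d - 1) * S.card} : ℝ) ≤
      ∑ k ∈ Finset.Icc 1 K, ∑ S ∈ X.powersetCard k, ((bad S).card : ℝ) := by
    rw [Nat.card_eq_fintype_card, Fintype.card_subtype]
    have hsub : (Finset.univ.filter fun T : Fin d → Fin c → A → (Fin b → ZMod 2) =>
        ∃ S ⊆ X, IndepKeys S ∧ (S.card : ℝ) ≤ L ∧
        (S.biUnion fun x => Finset.univ.image fun j : Fin d =>
          (simpleTab (T j) x, j)).card + 1 ≤ (d - 1) * S.card) ⊆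
        (Finset.Icc 1 K).biUnion fun k => (X.powersetCard k).biUnion bad := by
      intro T hT
      obtain ⟨S, hSX, hI, hSL, hV⟩ := (Finset.mem_filter.1 hT).2
      simp only [Finset.mem_biUnion, Finset.mem_powersetCard, Finset.mem_Icc]
      refine ⟨S.card, ⟨?_, Nat.le_floor hSL⟩, S, ⟨hSX, rfl⟩, ?_⟩
      -- the empty key set would need fewer than zero vertices
      · by_contra h0
        have h0 : S.card = 0 := by omega
        simp [h0] at hV
      · simp only [bad, Finset.mem_filter, Finset.mem_univ, true_and]
        exact ⟨hI, hV⟩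
    refine (Nat.cast_le.2 ((Finset.card_le_card hsub).trans
      (Finset.card_biUnion_le.trans (Finset.sum_le_sum fun k _ =>
        Finset.card_biUnion_le)))).trans ?_
    push_cast
    exact le_rfl
  rw [div_le_iff₀ hM0]
  -- `L` may be negative, in which case `K = 0`
  have hKL : (K : ℝ) ^ 2 ≤ L ^ 2 := by
    rcases le_or_gt 0 L with h | h
    · have := Nat.floor_le h
      gcongr
    · have : K = 0 := Nat.floor_of_nonpos h.le
      rw [this]
      simpa using sq_nonneg L
  have hKexp : (K : ℝ) ≤ Real.exp ((K : ℝ) ^ 2) := by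
    have h1 : (K : ℝ) ≤ (K : ℝ) ^ 2 := by exact_mod_cast Nat.le_self_pow two_ne_zero K
    linarith [Real.add_one_le_exp ((K : ℝ) ^ 2)]
  calc _ ≤ ∑ k ∈ Finset.Icc 1 K, ∑ S ∈ X.powersetCard k, ((bad S).card : ℝ) := hcount
    _ ≤ (Finset.Icc 1 K).card • (Real.exp ((C + d ^ 3) * K ^ 2) * M / n) :=
        Finset.sum_le_card_nsmul _ _ _ hlevel
    _ = K * Real.exp ((C + d ^ 3) * K ^ 2) * M / n := by
        rw [nsmul_eq_mul, Nat.card_Icc, Nat.add_sub_cancel]; ring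
    _ ≤ Real.exp ((K : ℝ) ^ 2) * Real.exp ((C + d ^ 3) * K ^ 2) * M / n := by gcongr
    _ = Real.exp ((1 + C + d ^ 3) * (K : ℝ) ^ 2) * M / n := by
        rw [← Real.exp_add]; ring_nf
    _ ≤ Real.exp (δ * Real.log n) * M / n := by
        have := Real.exp_le_exp.2 ((mul_le_mul_of_nonneg_left hKL (by positivity : 0 ≤ 1 + C + (d : ℝ) ^ 3)).trans hlog)
        gcongr ?_ * _ / _
    _ = n ^ (-(1 : ℝ) + δ) * M := by
        rw [Real.rpow_add hn0, Real.rpow_neg_one, Real.rpow_def_of_pos hn0, mul_comm δ]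
        ring
end

section
/- Let d ≥ 2 and c ≥ 1 be fixed integers and C, α > 0 fixed constants. For every δ > 0 there exists n₀ such that the following holds for every integer b ≥ 1, every finite alphabet Σ, and every key set X ⊆ Σ^c with g = 2^b, n = d·g ≥ n₀ and |X| = m ≤ C·n. If h_1,…,h_d : Σ^c → F₂^b ≅ [g] are d independent random simple tabulation hash functions, then the probability (over the random tables) that the hash graph contains a subgraph (V,E) with |V| ≤ (d−1)|E| and |E| ≤ α·log₂ log₂ n, whose edges correspond to distinct keys x_1,…,x_{|E|} that are independent, but such that there exists a key y ∈ X ∖ {x_1,…,x_{|E|}} that is dependent on x_1,…,x_{|E|} (i.e., y ⊕ ⊕_{i∈I} x_i = ∅ for some subset I), is at most n^{−1+δ}. -/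
/-! ### Additive energy of key sets -/

lemma card_pairs_eq_sum {ι β : Type*} [DecidableEq β] (Q : Finset ι) (f g : ι → β)
    (W : Finset β) (hf : ∀ i ∈ Q, f i ∈ W) :
    ((Q ×ˢ Q).filter fun p => f p.1 = g p.2).card =
      ∑ w ∈ W, (Q.filter fun i => f i = w).card * (Q.filter fun i => g i = w).card := by
  rw [Finset.card_eq_sum_card_fiberwise (f := fun p : ι × ι => f p.1) (t := W)]
  · refine Finset.sum_congr rfl fun w _ => ?_
    rw [← Finset.card_product]
    congr 1
    ext p
    simp only [Finset.mem_filter, Finset.mem_product]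
    grind
  · intro p hp
    simp only [Finset.coe_filter, Finset.mem_product, Set.mem_ofPred_eq] at hp
    exact hf _ hp.1.1

/-- Collisions between two labellings `f`, `g` of `Q` are at most the average of the
self-collisions of `f` and of `g`: an AM–GM form of the Cauchy–Schwarz inequality that stays
in `ℕ`. -/
lemma two_mul_card_pairs_le {ι β : Type*} [DecidableEq β] (Q : Finset ι) (f g : ι → β) :
    2 * ((Q ×ˢ Q).filter fun p => f p.1 = g p.2).card ≤
      ((Q ×ˢ Q).filter fun p => f p.1 = f p.2).card +
      ((Q ×ˢ Q).filter fun p => g p.1 = g p.2).card := by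
  have hf : ∀ i ∈ Q, f i ∈ Q.image f ∪ Q.image g := fun i hi =>
    Finset.mem_union_left _ (Finset.mem_image_of_mem _ hi)
  have hg : ∀ i ∈ Q, g i ∈ Q.image f ∪ Q.image g := fun i hi =>
    Finset.mem_union_right _ (Finset.mem_image_of_mem _ hi)
  rw [card_pairs_eq_sum Q f g _ hf, card_pairs_eq_sum Q f f _ hf, card_pairs_eq_sum Q g g _ hg,
    Finset.mul_sum, ← Finset.sum_add_distrib]
  refine Finset.sum_le_sum fun w _ => ?_
  have := two_mul_le_add_sq (Q.filter fun i => f i = w).card (Q.filter fun i => g i = w).card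
  nlinarith

lemma keyVec_injective {c : ℕ} {A : Type*} [DecidableEq A] :
    Function.Injective (keyVec : (Fin c → A) → _) := by
  intro x y h
  funext p
  have := congrFun h (p, x p)
  simp only [keyVec, if_true] at this
  by_contra hne
  rw [if_neg (Ne.symm hne)] at this
  exact one_ne_zero this

/-- If `a ⊕ b = x ⊕ y`, then at each position the characters of `a, b, x, y` match up in one of
three ways: `a` with `b`, `a` with `x`, or `a` with `y`. -/
lemma keyVec_pair {c : ℕ} {A : Type*} [DecidableEq A] {a b x y : Fin c → A}
    (h : keyVec a + keyVec b = keyVec x + keyVec y) (p : Fin c) :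
    (a p = b p ∧ x p = y p) ∨ (a p ≠ b p ∧ a p = x p ∧ b p = y p) ∨
      (a p ≠ b p ∧ a p ≠ x p ∧ a p = y p ∧ b p = x p) := by
  have h1 := congrFun h (p, a p)
  have h2 := congrFun h (p, b p)
  have h3 := congrFun h (p, x p)
  have e : (1 : ZMod 2) + 1 = 0 := by decide
  have n : (1 : ZMod 2) ≠ 0 := by decide
  simp only [keyVec, Pi.add_apply] at h1 h2 h3
  grind

/-- The label of a pair of keys relative to the sets `D` and `B` of positions: on `D` it records
the two characters, in the given order at the positions of `B` and swapped at the others; off `D`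
(where the two keys are going to agree) it records nothing. -/
def pairLabel {c : ℕ} {A : Type*} (D B : Finset (Fin c)) (q : (Fin c → A) × (Fin c → A)) :
    Fin c → Option (A × A) :=
  fun p => if p ∈ D then (if p ∈ B then some (q.1 p, q.2 p) else some (q.2 p, q.1 p)) else none

/-- Two pairs `(a, b)`, `(x, y)` agreeing internally off `D` and carrying equal labels are
determined by `a` and `y` alone: on `D`, `b = y` and `x = a`, while off `D`, `b = a` and
`x = y`. -/
lemma card_pairLabel_le {c : ℕ} {A : Type*} [DecidableEq A] (X : Finset (Fin c → A))
    (D B : Finset (Fin c)) :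
    ((((X ×ˢ X).filter fun q => ∀ p ∉ D, q.1 p = q.2 p) ×ˢ
      ((X ×ˢ X).filter fun q => ∀ p ∉ D, q.1 p = q.2 p)).filter fun r =>
        pairLabel D B r.1 = pairLabel D B r.2).card ≤ X.card ^ 2 := by
  rw [sq, ← Finset.card_product]
  refine Finset.card_le_card_of_injOn (fun r => (r.1.1, r.2.2)) ?_ ?_
  · intro r hr
    simp only [Finset.coe_filter, Finset.mem_product, Finset.mem_filter, Set.mem_ofPred_eq] at hr
    simp only [Finset.coe_product, Set.mem_prod, Finset.mem_coe]
    exact ⟨hr.1.1.1.1, hr.1.2.1.2⟩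
  · rintro ⟨⟨a, b⟩, ⟨x, y⟩⟩ hr ⟨⟨a', b'⟩, ⟨x', y'⟩⟩ hr' h
    simp only [Finset.coe_filter, Finset.mem_product, Finset.mem_filter, Set.mem_ofPred_eq] at hr hr'
    simp only [Prod.mk.injEq] at h
    obtain ⟨rfl, rfl⟩ := h
    have k1 := hr.1.1.2
    have k2 := hr.1.2.2
    have k3 := hr'.1.1.2
    have k4 := hr'.1.2.2
    have e1 : ∀ p, p ∈ D → a p = x p ∧ b p = y p := by
      intro p hp
      have := congrFun hr.2 p
      simp only [pairLabel, hp, if_true] at this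
      grind
    have e2 : ∀ p, p ∈ D → a p = x' p ∧ b' p = y p := by
      intro p hp
      have := congrFun hr'.2 p
      simp only [pairLabel, hp, if_true] at this
      grind
    have hb : b = b' := by funext p; by_cases hp : p ∈ D <;> grind
    have hx : x = x' := by funext p; by_cases hp : p ∈ D <;> grind
    rw [hb, hx]

/-- The `F₂`-additive energy of a set of keys is at most `4 ^ c * |X| ^ 2`. -/
lemma card_energy_le {c : ℕ} {A : Type*} [DecidableEq A] [Fintype A] (X : Finset (Fin c → A)) :
    (((X ×ˢ X) ×ˢ (X ×ˢ X)).filter fun r =>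
      keyVec r.1.1 + keyVec r.1.2 = keyVec r.2.1 + keyVec r.2.2).card ≤ 4 ^ c * X.card ^ 2 := by
  classical
  set Q : Finset (Fin c) → Finset ((Fin c → A) × (Fin c → A)) := fun D =>
    (X ×ˢ X).filter fun q => ∀ p ∉ D, q.1 p = q.2 p with hQ
  have hsub : (((X ×ˢ X) ×ˢ (X ×ˢ X)).filter fun r =>
      keyVec r.1.1 + keyVec r.1.2 = keyVec r.2.1 + keyVec r.2.2) ⊆
      (Finset.univ : Finset (Finset (Fin c) × Finset (Fin c))).biUnion fun DB =>
        ((Q DB.1 ×ˢ Q DB.1).filter fun r =>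
          pairLabel DB.1 Finset.univ r.1 = pairLabel DB.1 DB.2 r.2) := by
    rintro ⟨⟨a, b⟩, ⟨x, y⟩⟩ hr
    simp only [Finset.mem_filter, Finset.mem_product] at hr
    obtain ⟨hX, hr⟩ := hr
    have key := keyVec_pair hr
    simp only [Finset.mem_biUnion, Finset.mem_univ, true_and, Finset.mem_filter,
      Finset.mem_product, hQ]
    -- `D` is the set of positions where `a` and `b` differ; on `D`, the set `B` tells whether `a`
    -- is matched with `x` or with `y`.
    refine ⟨(Finset.univ.filter fun p => a p ≠ b p, Finset.univ.filter fun p => a p = x p), ?_, ?_⟩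
    · simp only [Finset.mem_filter, Finset.mem_univ, true_and, not_not]
      exact ⟨⟨hX.1, fun p hp => hp⟩, hX.2, fun p hp => by have := key p; grind⟩
    · funext p
      simp only [pairLabel, Finset.mem_filter, Finset.mem_univ, true_and, if_true]
      have := key p
      grind
  refine (Finset.card_le_card hsub).trans ?_
  refine (Finset.card_biUnion_le_card_mul _ _ (X.card ^ 2) ?_).trans ?_
  · rintro ⟨D, B⟩ -
    have h := two_mul_card_pairs_le (Q D) (pairLabel D Finset.univ) (pairLabel D B)
    have h1 := card_pairLabel_le X D Finset.univ
    have h2 := card_pairLabel_le X D B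
    simp only [hQ] at h ⊢
    omega
  · refine le_of_eq ?_
    simp only [Finset.card_univ, Fintype.card_prod, Fintype.card_finset, Fintype.card_fin]
    rw [← mul_pow]; norm_num

/-- The number of quadruples with a prescribed XOR is largest for XOR zero. -/
lemma card_shifted_energy_le {c : ℕ} {A : Type*} [DecidableEq A] [Fintype A]
    (X : Finset (Fin c → A)) (v : Fin c × A → ZMod 2) :
    (((X ×ˢ X) ×ˢ (X ×ˢ X)).filter fun r =>
      keyVec r.1.1 + keyVec r.1.2 + v = keyVec r.2.1 + keyVec r.2.2).card ≤
      4 ^ c * X.card ^ 2 := by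
  have h := two_mul_card_pairs_le (X ×ˢ X) (fun q => keyVec q.1 + keyVec q.2 + v)
    (fun q => keyVec q.1 + keyVec q.2)
  have h0 := card_energy_le X
  simp only [add_left_inj] at h
  omega

/-! ### Counting dependent key sets -/

/-- At position `0` each key contributes exactly one character, so a key can only be the XOR of
an odd number of keys. -/
lemma odd_card_of_dependent {c : ℕ} (hc : 1 ≤ c) {A : Type*} [DecidableEq A] [Fintype A]
    {I : Finset (Fin c → A)} {y : Fin c → A} (h : keyVec y = ∑ x ∈ I, keyVec x) :
    Odd I.card := by
  have hs : ∀ x : Fin c → A, ∑ t : A, keyVec x (⟨0, hc⟩, t) = 1 := by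
    intro x
    simp [keyVec]
  have h1 : ∑ t : A, keyVec y (⟨0, hc⟩, t) = ∑ t : A, (∑ x ∈ I, keyVec x) (⟨0, hc⟩, t) := by
    rw [h]
  simp only [Finset.sum_apply] at h1
  rw [Finset.sum_comm, hs, Finset.sum_congr rfl fun x _ => hs x] at h1
  simp only [Finset.sum_const, nsmul_eq_mul, mul_one] at h1
  rw [← Nat.not_even_iff_odd, ← ZMod.natCast_eq_zero_iff_even, ← h1]
  exact one_ne_zero

/-- There are `O(|X| ^ (k - 1))` sets of `k` keys on which another key of `X` depends. If
`y = ⊕ I` with `I ⊆ S`, then `I` contains three distinct keys `a, b, x`, and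
`a ⊕ b ⊕ x ⊕ y` is the XOR of a subset of the remaining `k - 3` keys of `S`; so once these
remaining keys and that subset are chosen, the energy bound leaves `4 ^ c * |X| ^ 2` choices. -/
lemma card_dependent_sets_le {c : ℕ} (hc : 1 ≤ c) {A : Type*} [DecidableEq A] [Fintype A]
    (X : Finset (Fin c → A)) (k : ℕ) (𝒮 : Finset (Finset (Fin c → A)))
    (h𝒮 : ∀ S ∈ 𝒮, S ⊆ X ∧ S.card = k ∧ ∃ y ∈ X, y ∉ S ∧ ∃ I ⊆ S, keyVec y = ∑ x ∈ I, keyVec x) :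
    𝒮.card ≤ 2 ^ k * 4 ^ c * X.card ^ (k - 1) := by
  classical
  -- An odd set `I` with fewer than three elements is a singleton, which would force `y ∈ S`.
  by_cases hk : k < 3
  · suffices 𝒮 = ∅ by simp [this]
    refine Finset.eq_empty_of_forall_notMem fun S hS => ?_
    obtain ⟨hSX, hSk, y, hy, hyS, I, hIS, hI⟩ := h𝒮 S hS
    have := Finset.card_le_card hIS
    obtain ⟨t, ht⟩ := odd_card_of_dependent hc hI
    have : I.card = 1 := by omega
    obtain ⟨z, rfl⟩ := Finset.card_eq_one.1 this
    rw [Finset.sum_singleton] at hI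
    exact hyS (keyVec_injective hI ▸ hIS (Finset.mem_singleton_self z))
  push Not at hk
  have hsub : 𝒮 ⊆ (X.powersetCard (k - 3)).biUnion fun R => R.powerset.biUnion fun J =>
      (((X ×ˢ X) ×ˢ (X ×ˢ X)).filter fun r =>
        keyVec r.1.1 + keyVec r.1.2 + (∑ x ∈ J, keyVec x) = keyVec r.2.1 + keyVec r.2.2).image
        fun r => insert r.1.1 (insert r.1.2 (insert r.2.1 R)) := by
    intro S hS
    obtain ⟨hSX, hSk, y, hy, hyS, I, hIS, hI⟩ := h𝒮 S hS
    obtain ⟨t, ht⟩ := odd_card_of_dependent hc hI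
    have h3 : 3 ≤ I.card := by
      by_contra hlt
      have : I.card = 1 := by omega
      obtain ⟨z, rfl⟩ := Finset.card_eq_one.1 this
      rw [Finset.sum_singleton] at hI
      exact hyS (keyVec_injective hI ▸ hIS (Finset.mem_singleton_self z))
    obtain ⟨I', hI'I, hI'3⟩ := Finset.exists_subset_card_eq h3
    obtain ⟨a, b, x, hab, hax, hbx, rfl⟩ := Finset.card_eq_three.1 hI'3
    simp only [Finset.mem_biUnion, Finset.mem_powersetCard, Finset.mem_powerset,
      Finset.mem_image, Finset.mem_filter, Finset.mem_product]
    refine ⟨S \ {a, b, x}, ⟨Finset.sdiff_subset.trans hSX, ?_⟩, I \ {a, b, x},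
      Finset.sdiff_subset_sdiff hIS subset_rfl, ((a, b), (x, y)), ⟨?_, ?_⟩, ?_⟩
    · rw [Finset.card_sdiff_of_subset (hI'I.trans hIS), hSk, hI'3]
    · have := hI'I.trans (hIS.trans hSX)
      simp only [Finset.insert_subset_iff, Finset.singleton_subset_iff] at this
      exact ⟨⟨this.1, this.2.1⟩, this.2.2, hy⟩
    · rw [← Finset.sum_sdiff hI'I] at hI
      rw [hI, Finset.sum_insert (by simp [hab, hax]), Finset.sum_insert (by simp [hbx]),
        Finset.sum_singleton]
      have : keyVec x + keyVec x = 0 := by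
        funext p; exact CharTwo.add_self_eq_zero _
      calc _ = (∑ x ∈ I \ {a, b, x}, keyVec x) + (keyVec a + keyVec b) + 0 := by abel
        _ = _ := by rw [← this]; abel
    · have := hI'I.trans hIS
      ext z
      simp only [Finset.insert_subset_iff, Finset.singleton_subset_iff] at this
      simp only [Finset.mem_insert, Finset.mem_sdiff, Finset.mem_singleton]
      grind
  refine (Finset.card_le_card hsub).trans ?_
  refine (Finset.card_biUnion_le_card_mul _ _ (2 ^ k * (4 ^ c * X.card ^ 2)) ?_).trans ?_
  · intro R hR
    rw [Finset.mem_powersetCard] at hR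
    refine (Finset.card_biUnion_le_card_mul _ _ (4 ^ c * X.card ^ 2) fun J _ =>
      Finset.card_image_le.trans (card_shifted_energy_le X _)).trans ?_
    rw [Finset.card_powerset, hR.2]
    exact Nat.mul_le_mul_right _ (Nat.pow_le_pow_right (by norm_num) (by omega))
  · rw [Finset.card_powersetCard]
    calc _ ≤ X.card ^ (k - 3) * (2 ^ k * (4 ^ c * X.card ^ 2)) :=
          Nat.mul_le_mul_right _ (Nat.choose_le_pow _ _)
      _ = 2 ^ k * 4 ^ c * (X.card ^ (k - 3) * X.card ^ 2) := by ring
      _ = _ := by rw [← pow_add]; congr 2; omega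

/-! ### Hash values of independent keys -/

/-- A function taking at most `v` values factors through `Fin v`, which bounds the number of such
functions. -/
lemma card_small_image_le {ι R : Type*} [Fintype ι] [DecidableEq ι] [Fintype R] [DecidableEq R]
    [Nonempty R] (v : ℕ) :
    (Finset.univ.filter fun f : ι → R => (Finset.univ.image f).card ≤ v).card ≤
      Fintype.card R ^ v * v ^ Fintype.card ι := by
  classical
  have hsub : (Finset.univ.filter fun f : ι → R => (Finset.univ.image f).card ≤ v) ⊆
      (Finset.univ : Finset ((Fin v → R) × (ι → Fin v))).image fun q => q.1 ∘ q.2 := by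
    intro f hf
    rw [Finset.mem_filter] at hf
    obtain ⟨e⟩ : Nonempty ((Finset.univ.image f : Finset R) ↪ Fin v) :=
      Function.Embedding.nonempty_of_card_le
        (by rw [Fintype.card_coe, Fintype.card_fin]; exact hf.2)
    rw [Finset.mem_image]
    let e' : ι → Fin v := fun i => e ⟨f i, Finset.mem_image_of_mem f (Finset.mem_univ i)⟩
    refine ⟨(fun s => if h : ∃ i, e' i = s then f h.choose else Classical.arbitrary R, e'),
      Finset.mem_univ _, ?_⟩
    funext i
    have hex : ∃ i', e' i' = e' i := ⟨i, rfl⟩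
    simp only [Function.comp]
    rw [dif_pos hex]
    have := e.injective hex.choose_spec
    simpa using this
  refine (Finset.card_le_card hsub).trans (Finset.card_image_le.trans ?_)
  simp

/-- A surjective homomorphism of finite groups carries the uniform distribution to the uniform
distribution. -/
lemma card_comp_hom {G H : Type*} [AddGroup G] [AddGroup H] [Fintype G] [Fintype H]
    [DecidableEq H] (φ : G →+ H) (hφ : Function.Surjective φ) (P : H → Prop) [DecidablePred P] :
    (Finset.univ.filter fun g => P (φ g)).card * Fintype.card H =
      Fintype.card G * (Finset.univ.filter P).card := by
  have key : ∀ Q : H → Prop, ∀ [DecidablePred Q], (Finset.univ.filter fun g => Q (φ g)).card =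
      (Finset.univ.filter Q).card * (Finset.univ.filter fun g => φ g = 0).card := by
    intro Q _
    rw [Finset.card_eq_sum_card_fiberwise (f := φ) (t := Finset.univ.filter Q)]
    · rw [Finset.sum_const_nat]
      intro h hh
      rw [← AddMonoidHom.card_fiber_eq_of_mem_range φ (x := h) (y := 0) (hφ h) (hφ 0)]
      congr 1
      ext g
      simp only [Finset.mem_filter, Finset.mem_univ, true_and] at hh ⊢
      constructor
      · exact fun h => h.2
      · rintro rfl; exact ⟨hh, rfl⟩
    · intro g hg
      simpa using hg
  have h1 := key P
  have h2 := key (fun _ => True)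
  simp only [Finset.filter_true, Finset.card_univ] at h2
  rw [h1, h2]
  ring

lemma IndepKeys.linearIndepOn {c : ℕ} {A : Type*} [DecidableEq A] {S : Finset (Fin c → A)}
    (hS : IndepKeys S) : LinearIndepOn (ZMod 2) keyVec (S : Set (Fin c → A)) := by
  rw [linearIndepOn_finset_iff]
  intro f hf
  by_contra! hne
  obtain ⟨x, hx, hfx⟩ := hne
  refine hS (S.filter fun x => f x ≠ 0) (Finset.filter_subset _ _)
    ⟨x, Finset.mem_filter.2 ⟨hx, hfx⟩⟩ ?_
  rw [Finset.sum_filter]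
  refine Eq.trans ?_ hf
  refine Finset.sum_congr rfl fun z _ => ?_
  have : ∀ t : ZMod 2, t ≠ 0 → t = 1 := by decide
  by_cases hz : f z = 0
  · simp [hz]
  · simp [this _ hz]

/-- Any prescribed hash values on independent keys are realised by some table: a linear functional
`L` taking these values on the key vectors gives the table `T i α = L (i, α)`. -/
lemma IndepKeys.exists_table {c b : ℕ} {A : Type*} [DecidableEq A] {S : Finset (Fin c → A)}
    (hS : IndepKeys S) (f : S → (Fin b → ZMod 2)) :
    ∃ T : Fin c → A → (Fin b → ZMod 2), ∀ x : S, simpleTab T x = f x := by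
  have hli := hS.linearIndepOn
  obtain ⟨L, hL⟩ := LinearMap.exists_extend ((Module.Basis.span hli).constr (ZMod 2) f)
  refine ⟨fun i α => L (Pi.single (i, α) 1), fun x => ?_⟩
  have hx : keyVec (x : Fin c → A) = ∑ i, Pi.single (i, (x : Fin c → A) i) (1 : ZMod 2) := by
    funext p
    rw [Finset.sum_apply, Finset.sum_eq_single p.1]
    · by_cases h : (x : Fin c → A) p.1 = p.2
      · have : p = (p.1, (x : Fin c → A) p.1) := by rw [h]
        rw [← this]
        simp [keyVec, h]
      · have : p ≠ (p.1, (x : Fin c → A) p.1) := fun hp => h (congrArg Prod.snd hp).symm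
        simp [keyVec, h, Pi.single_eq_of_ne this]
    · intro i _ hi
      exact Pi.single_eq_of_ne (fun hp => hi (congrArg Prod.fst hp).symm) _
    · simp
  have h2 := congrArg (fun g => g (Module.Basis.span hli x)) hL
  simp only [LinearMap.comp_apply, Module.Basis.constr_basis] at h2
  rw [simpleTab, ← map_sum, ← hx, ← h2]
  congr 1
  exact (congrArg Subtype.val (Module.Basis.span_apply hli x)).symm

/-- The homomorphism sending `d` tables to the tuple of all hash values of the keys of `S`. -/
def hashHom {c b : ℕ} {A : Type*} (d : ℕ) (S : Finset (Fin c → A)) :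
    (Fin d → Fin c → A → (Fin b → ZMod 2)) →+ (S × Fin d → (Fin b → ZMod 2)) where
  toFun T := fun p => simpleTab (T p.2) p.1
  map_zero' := by funext p; simp [simpleTab]
  map_add' T T' := by funext p; simp [simpleTab, Finset.sum_add_distrib]

lemma hashHom_surjective {c b d : ℕ} {A : Type*} [DecidableEq A] {S : Finset (Fin c → A)}
    (hS : IndepKeys S) : Function.Surjective (hashHom (b := b) d S) := by
  intro f
  choose T hT using fun j : Fin d => hS.exists_table fun x => f (x, j)
  exact ⟨T, funext fun p => hT p.2 p.1⟩

/-- For independent keys `S` with `k = |S|`, the probability that they span at most `(d - 1) * k`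
vertices is at most `(d * k) ^ (d * k) / (2 ^ b) ^ k`. It suffices that the `d * k` hash values
then take at most `(d - 1) * k` values in `F₂ ^ b`, ignoring which of the `d` functions they come
from. -/
lemma card_bad_tables_le {c b d : ℕ} (hd : 2 ≤ d) {A : Type*} [DecidableEq A] [Fintype A]
    {S : Finset (Fin c → A)} (hS : IndepKeys S) :
    (Finset.univ.filter fun T : Fin d → Fin c → A → (Fin b → ZMod 2) =>
      (S.biUnion fun x => Finset.univ.image fun j : Fin d =>
        (simpleTab (T j) x, j)).card ≤ (d - 1) * S.card).card * (2 ^ b) ^ S.card ≤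
      Fintype.card (Fin d → Fin c → A → (Fin b → ZMod 2)) * (d * S.card) ^ (d * S.card) := by
  classical
  set k := S.card with hk
  have hsub : (Finset.univ.filter fun T : Fin d → Fin c → A → (Fin b → ZMod 2) =>
      (S.biUnion fun x => Finset.univ.image fun j : Fin d =>
        (simpleTab (T j) x, j)).card ≤ (d - 1) * k) ⊆
      Finset.univ.filter fun T : Fin d → Fin c → A → (Fin b → ZMod 2) =>
        (Finset.univ.image (hashHom d S T)).card ≤ (d - 1) * k := by
    intro T hT
    rw [Finset.mem_filter] at hT ⊢
    refine ⟨Finset.mem_univ _, le_trans ?_ hT.2⟩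
    refine le_trans (Finset.card_le_card ?_) (Finset.card_image_le (f := Prod.fst))
    intro r hr
    simp only [Finset.mem_image, Finset.mem_univ, true_and, Finset.mem_biUnion] at hr ⊢
    obtain ⟨⟨x, j⟩, rfl⟩ := hr
    exact ⟨(simpleTab (T j) x, j), ⟨x, x.2, j, rfl⟩, rfl⟩
  have h1 := card_comp_hom (hashHom (b := b) d S) (hashHom_surjective hS)
    (fun f => (Finset.univ.image f).card ≤ (d - 1) * k)
  have h2 := card_small_image_le (ι := S × Fin d) (R := Fin b → ZMod 2) ((d - 1) * k)
  have hR : Fintype.card (Fin b → ZMod 2) = 2 ^ b := by simp [ZMod.card]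
  have hH : Fintype.card (S × Fin d → (Fin b → ZMod 2)) = (2 ^ b) ^ ((d - 1) * k) * (2 ^ b) ^ k := by
    rw [Fintype.card_fun, hR, ← pow_add]
    congr 1
    simp only [Fintype.card_prod, Fintype.card_coe, Fintype.card_fin]
    obtain ⟨e, rfl⟩ : ∃ e, d = e + 1 := ⟨d - 1, by omega⟩
    simp only [Nat.add_sub_cancel]
    ring
  have hι : Fintype.card (S × Fin d) = d * k := by
    simp only [Fintype.card_prod, Fintype.card_coe, Fintype.card_fin]; ring
  rw [hR, hι] at h2
  rw [hH] at h1
  have hpos : 0 < (2 ^ b) ^ ((d - 1) * k) := by positivity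
  refine Nat.le_of_mul_le_mul_left ?_ hpos
  have h3 := Finset.card_le_card hsub
  calc _ ≤ (2 ^ b) ^ ((d - 1) * k) * ((Finset.univ.filter fun T : Fin d → Fin c → A → (Fin b → ZMod 2) =>
        (Finset.univ.image (hashHom d S T)).card ≤ (d - 1) * k).card * (2 ^ b) ^ k) := by gcongr
    _ = Fintype.card (Fin d → Fin c → A → (Fin b → ZMod 2)) * _ := by rw [← h1]; ring
    _ ≤ Fintype.card (Fin d → Fin c → A → (Fin b → ZMod 2)) *
        ((2 ^ b) ^ ((d - 1) * k) * ((d - 1) * k) ^ (d * k)) := Nat.mul_le_mul_left _ h2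
    _ ≤ Fintype.card (Fin d → Fin c → A → (Fin b → ZMod 2)) *
        ((2 ^ b) ^ ((d - 1) * k) * (d * k) ^ (d * k)) := by gcongr; omega
    _ = _ := by ring

/-! ### Asymptotics and the union bound -/

/-- All factors of the union bound other than `1 / n` are together `n ^ o(1)`: with
`K = O(log log n)` they are at most `exp (M * (K + 1) ^ 2)`, and `(log log n) ^ 2 = o(log n)`. -/
lemma subpolynomial_bound (d c : ℕ) (hd : 2 ≤ d) (E α δ : ℝ) (hE : 1 ≤ E) (hα : 0 < α)
    (hδ : 0 < δ) :
    ∃ n₀ : ℕ, 1 ≤ n₀ ∧ ∀ n : ℝ, (n₀ : ℝ) ≤ n → ∀ K : ℕ, K = ⌊α * Real.logb 2 (Real.logb 2 n)⌋₊ →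
      (K : ℝ) * (2 ^ K * 4 ^ c * E ^ K * d * (d * K : ℝ) ^ (d * K)) ≤ n ^ δ := by
  have hl2 : 0 < Real.log 2 := Real.log_pos (by norm_num)
  set α' := α / Real.log 2 with hα'
  have hα'0 : 0 < α' := by positivity
  set M : ℝ := 2 + 4 ^ c * d + E + (d : ℝ) ^ 2 with hM
  have hM0 : 0 < M := by positivity
  have hε : 0 < δ * Real.log 2 / (M * (α' + 1) ^ 2) := by positivity
  have hev := (Real.isLittleO_pow_log_id_atTop (n := 2)).bound hε
  have htend : Filter.Tendsto (fun n : ℕ => Real.logb 2 (n : ℝ)) Filter.atTop Filter.atTop :=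
    (Real.tendsto_logb_atTop (by norm_num)).comp tendsto_natCast_atTop_atTop
  obtain ⟨s₀, hs₀⟩ := Filter.eventually_atTop.1 (hev.and (Filter.eventually_ge_atTop (Real.exp 1)))
  obtain ⟨n₀, hn₀⟩ := Filter.eventually_atTop.1 (htend.eventually_ge_atTop s₀)
  refine ⟨max n₀ 1, le_max_right _ _, fun n hn K hK => ?_⟩
  have hn1 : (1 : ℝ) ≤ n := le_trans (by exact_mod_cast le_max_right n₀ 1) hn
  set s := Real.logb 2 n with hs
  have hss : s₀ ≤ s := (hn₀ (max n₀ 1) (le_max_left _ _)).trans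
    (Real.logb_le_logb_of_le (by norm_num) (by positivity) hn)
  obtain ⟨h1, h2⟩ := hs₀ s hss
  have hs0 : 0 < s := (Real.exp_pos 1).trans_le h2
  have hlog : 1 ≤ Real.log s := by rwa [Real.le_log_iff_exp_le hs0]
  rw [Real.norm_of_nonneg (by positivity), id, Real.norm_of_nonneg hs0.le] at h1
  have hKle : (K : ℝ) ≤ α' * Real.log s := by
    have : α * Real.logb 2 s = α' * Real.log s := by rw [Real.logb, hα']; ring
    rw [hK, this]
    exact Nat.floor_le (by positivity)
  have hlogn : Real.log n = s * Real.log 2 := by rw [hs, Real.logb]; field_simp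
  have hK0 : (0 : ℝ) ≤ K := Nat.cast_nonneg K
  have hsq : ((K : ℝ) + 1) ^ 2 ≤ (α' + 1) ^ 2 * Real.log s ^ 2 := by
    rw [← mul_pow]
    exact pow_le_pow_left₀ (by positivity) (by linarith) 2
  have hexp : M * ((K : ℝ) + 1) ^ 2 ≤ δ * Real.log n := by
    calc M * ((K : ℝ) + 1) ^ 2 ≤ M * ((α' + 1) ^ 2 * (δ * Real.log 2 / (M * (α' + 1) ^ 2) * s)) := by
          gcongr; exact hsq.trans (by gcongr)
      _ = δ * Real.log n := by rw [hlogn]; field_simp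
  have hle : ∀ x : ℝ, x ≤ Real.exp x := fun x => by linarith [Real.add_one_le_exp x]
  have b1 : (K : ℝ) ≤ Real.exp K := hle _
  have b2 : (2 : ℝ) ^ K ≤ Real.exp K := by
    rw [← Real.exp_one_pow]
    exact pow_le_pow_left₀ (by norm_num) (by linarith [Real.add_one_le_exp 1]) K
  have b3 : (4 : ℝ) ^ c * d ≤ Real.exp (4 ^ c * d) := hle _
  have b4 : E ^ K ≤ Real.exp (K * E) := by
    rw [Real.exp_nat_mul]; exact pow_le_pow_left₀ (by linarith) (hle E) K
  have b5 : (d * K : ℝ) ^ (d * K) ≤ Real.exp ((d * K : ℕ) * (d * K : ℝ)) := by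
    rw [Real.exp_nat_mul]; exact pow_le_pow_left₀ (by positivity) (hle _) _
  calc (K : ℝ) * (2 ^ K * 4 ^ c * E ^ K * d * (d * K : ℝ) ^ (d * K))
      = K * 2 ^ K * (4 ^ c * d) * E ^ K * (d * K : ℝ) ^ (d * K) := by ring
    _ ≤ Real.exp K * Real.exp K * Real.exp (4 ^ c * d) * Real.exp (K * E) *
        Real.exp ((d * K : ℕ) * (d * K : ℝ)) := by gcongr
    _ = Real.exp (K + K + 4 ^ c * d + K * E + (d * K : ℕ) * (d * K : ℝ)) := by
        simp only [Real.exp_add]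
    _ ≤ Real.exp (M * ((K : ℝ) + 1) ^ 2) := by
        rw [Real.exp_le_exp, hM]
        push_cast
        have : (0 : ℝ) ≤ 4 ^ c * d := by positivity
        have h4 : (0 : ℝ) ≤ 4 ^ c * d * ((K : ℝ) ^ 2 + 2 * K) := by positivity
        have h5 : (0 : ℝ) ≤ E * ((K : ℝ) ^ 2 + K + 1) := by positivity
        have h6 : (0 : ℝ) ≤ (d : ℝ) ^ 2 * (2 * K + 1) := by positivity
        nlinarith [sq_nonneg (K : ℝ)]
    _ ≤ Real.exp (δ * Real.log n) := Real.exp_le_exp.2 hexp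
    _ = n ^ δ := by rw [Real.rpow_def_of_pos (by linarith), mul_comm]

/-- The union bound for one size `k`: `F` sets of keys, each bad for at most `B` of the `N` tables,
with `G` hash values and `m` keys. -/
lemma per_size_bound {d k m : ℕ} (hk : 1 ≤ k) {c : ℕ} {C G N F B : ℝ} (hG : 0 < G)
    (hd : 0 < (d : ℝ)) (hB : B * G ^ k ≤ N * (d * k : ℝ) ^ (d * k))
    (hF : F ≤ 2 ^ k * 4 ^ c * (m : ℝ) ^ (k - 1)) (hm : (m : ℝ) ≤ C * (d * G)) (hB0 : 0 ≤ B) :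
    F * B ≤ N * (2 ^ k * 4 ^ c * (max 1 (C * d)) ^ k * d * (d * k : ℝ) ^ (d * k)) / (d * G) := by
  obtain ⟨j, rfl⟩ : ∃ j, k = j + 1 := ⟨k - 1, by omega⟩
  simp only [Nat.add_sub_cancel] at hF
  set k := j + 1 with hkj
  set P := (d * k : ℝ) ^ (d * k) with hP
  have hP0 : 0 ≤ P := by positivity
  set E := max 1 (C * d) with hE
  have hE1 : 1 ≤ E := le_max_left _ _
  have hmE : (m : ℝ) ≤ E * G := by
    calc (m : ℝ) ≤ C * d * G := by rw [mul_assoc]; exact hm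
      _ ≤ E * G := by gcongr; exact le_max_right _ _
  rw [le_div_iff₀ (by positivity)]
  have e1 : (m : ℝ) ^ j ≤ E ^ k * G ^ j := by
    calc (m : ℝ) ^ j ≤ (E * G) ^ j := by gcongr
      _ = E ^ j * G ^ j := mul_pow _ _ _
      _ ≤ E ^ k * G ^ j := by gcongr; omega
  calc F * B * (d * G) ≤ (2 ^ k * 4 ^ c * (E ^ k * G ^ j)) * B * (d * G) := by
        gcongr; exact hF.trans (by gcongr)
    _ = 2 ^ k * 4 ^ c * E ^ k * d * (B * G ^ k) := by rw [hkj]; ring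
    _ ≤ 2 ^ k * 4 ^ c * E ^ k * d * (N * P) := by gcongr
    _ = _ := by ring

theorem stmt9 (d c : ℕ) (hd : 2 ≤ d) (hc : 1 ≤ c) (C α : ℝ) (hC : 0 < C) (hα : 0 < α)
    (δ : ℝ) (hδ : 0 < δ) :
    ∃ n₀ : ℕ, ∀ b : ℕ, 1 ≤ b → ∀ (A : Type) [Fintype A] [DecidableEq A],
      ∀ X : Finset (Fin c → A),
        n₀ ≤ d * 2 ^ b → (X.card : ℝ) ≤ C * ((d : ℝ) * 2 ^ b) →
        (Nat.card {T : Fin d → Fin c → A → (Fin b → ZMod 2) //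
            ∃ S ⊆ X, IndepKeys S ∧
              (S.card : ℝ) ≤ α * Real.logb 2 (Real.logb 2 ((d : ℝ) * 2 ^ b)) ∧
              (S.biUnion fun x => Finset.univ.image fun j : Fin d =>
                  (simpleTab (T j) x, j)).card ≤ (d - 1) * S.card ∧
              ∃ y ∈ X, y ∉ S ∧ ∃ I ⊆ S, keyVec y = ∑ x ∈ I, keyVec x} : ℝ) /
          (Fintype.card (Fin d → Fin c → A → (Fin b → ZMod 2)) : ℝ) ≤
        ((d : ℝ) * 2 ^ b) ^ (-(1 : ℝ) + δ) := by
  classical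
  obtain ⟨n₀, hn₀1, hn₀⟩ := subpolynomial_bound d c hd (max 1 (C * d)) α δ (le_max_left _ _) hα hδ
  refine ⟨n₀, fun b hb A _ _ X hn hX => ?_⟩
  set n : ℝ := (d : ℝ) * 2 ^ b with hn_def
  have hnn : (n₀ : ℝ) ≤ n := by rw [hn_def]; exact_mod_cast hn
  have hd0 : (0 : ℝ) < d := by positivity
  have hn0 : 0 < n := by positivity
  set K := ⌊α * Real.logb 2 (Real.logb 2 n)⌋₊ with hK
  have hbound := hn₀ n hnn K hK
  set E := max 1 (C * d) with hE
  have hE1 : 1 ≤ E := le_max_left _ _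
  set N := Fintype.card (Fin d → Fin c → A → (Fin b → ZMod 2)) with hN
  have hN0 : (0 : ℝ) < N := by exact_mod_cast Fintype.card_pos
  set Bad : Finset (Fin c → A) → Finset (Fin d → Fin c → A → (Fin b → ZMod 2)) := fun S =>
    Finset.univ.filter fun T => (S.biUnion fun x => Finset.univ.image fun j : Fin d =>
      (simpleTab (T j) x, j)).card ≤ (d - 1) * S.card with hBad
  set 𝒮 : ℕ → Finset (Finset (Fin c → A)) := fun k => X.powerset.filter fun S =>
    IndepKeys S ∧ S.card = k ∧ ∃ y ∈ X, y ∉ S ∧ ∃ I ⊆ S, keyVec y = ∑ x ∈ I, keyVec x with h𝒮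
  set term : ℝ := 2 ^ K * 4 ^ c * E ^ K * d * (d * K : ℝ) ^ (d * K) with hterm
  have hsize : ∀ k ∈ Finset.Icc 1 K, (((𝒮 k).biUnion Bad).card : ℝ) ≤ N * term / n := by
    intro k hk
    rw [Finset.mem_Icc] at hk
    have hF := card_dependent_sets_le hc X k (𝒮 k) fun S hS => by
      simp only [h𝒮, Finset.mem_filter, Finset.mem_powerset] at hS
      exact ⟨hS.1, hS.2.2⟩
    have hB : ∀ S ∈ 𝒮 k, ((Bad S).card : ℝ) ≤ N * (d * k : ℝ) ^ (d * k) / (2 ^ b) ^ k := by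
      intro S hS
      simp only [h𝒮, Finset.mem_filter, Finset.mem_powerset] at hS
      have := card_bad_tables_le (b := b) hd hS.2.1
      rw [hS.2.2.1] at this
      rw [le_div_iff₀ (by positivity)]
      simp only [hBad, hS.2.2.1]
      exact_mod_cast this
    have hsum : (((𝒮 k).biUnion Bad).card : ℝ) ≤
        (𝒮 k).card * (N * (d * k : ℝ) ^ (d * k) / (2 ^ b) ^ k) := by
      calc (((𝒮 k).biUnion Bad).card : ℝ) ≤ ∑ S ∈ 𝒮 k, ((Bad S).card : ℝ) := by
            exact_mod_cast Finset.card_biUnion_le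
        _ ≤ ∑ S ∈ 𝒮 k, N * (d * k : ℝ) ^ (d * k) / (2 ^ b) ^ k := Finset.sum_le_sum hB
        _ = _ := by rw [Finset.sum_const, nsmul_eq_mul]
    refine hsum.trans ((per_size_bound (G := 2 ^ b) (N := N) (m := X.card) hk.1 (by positivity) hd0
      (div_mul_cancel₀ _ (by positivity)).le (by exact_mod_cast hF) hX
      (by positivity)).trans ?_)
    rw [← hn_def, hterm]
    have hkK : (k : ℝ) ≤ K := by exact_mod_cast hk.2
    have h1dK : (1 : ℝ) ≤ d * K := by
      have : (1 : ℝ) ≤ K := by exact_mod_cast hk.1.trans hk.2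
      have : (1 : ℝ) ≤ d := by exact_mod_cast (by omega : 1 ≤ d)
      nlinarith
    have hpow : (d * k : ℝ) ^ (d * k) ≤ (d * K : ℝ) ^ (d * K) :=
      (pow_le_pow_left₀ (by positivity) (by gcongr) _).trans
        (pow_le_pow_right₀ h1dK (Nat.mul_le_mul_left _ hk.2))
    have h2 : (2 : ℝ) ^ k ≤ 2 ^ K := pow_le_pow_right₀ (by norm_num) hk.2
    have hEk : E ^ k ≤ E ^ K := pow_le_pow_right₀ hE1 hk.2
    gcongr
  have hcover : (Nat.card {T : Fin d → Fin c → A → (Fin b → ZMod 2) //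
            ∃ S ⊆ X, IndepKeys S ∧
              (S.card : ℝ) ≤ α * Real.logb 2 (Real.logb 2 n) ∧
              (S.biUnion fun x => Finset.univ.image fun j : Fin d =>
                  (simpleTab (T j) x, j)).card ≤ (d - 1) * S.card ∧
              ∃ y ∈ X, y ∉ S ∧ ∃ I ⊆ S, keyVec y = ∑ x ∈ I, keyVec x}) ≤
      ((Finset.Icc 1 K).biUnion fun k => (𝒮 k).biUnion Bad).card := by
    rw [← Nat.card_eq_finsetCard]
    refine Nat.card_le_card_of_injective (fun T => ⟨T.1, ?_⟩)
      fun T T' h => Subtype.ext (Subtype.mk.inj h)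
    obtain ⟨S, hSX, hS, hSK, hV, hdep⟩ := T.2
    simp only [Finset.mem_biUnion, Finset.mem_Icc]
    refine ⟨S.card, ⟨?_, Nat.le_floor hSK⟩, S, ?_, ?_⟩
    · obtain ⟨y, -, -, I, hIS, hI⟩ := hdep
      exact (odd_card_of_dependent hc hI).pos.trans_le (Finset.card_le_card hIS)
    · exact Finset.mem_filter.2 ⟨Finset.mem_powerset.2 hSX, hS, rfl, hdep⟩
    · simp only [hBad, Finset.mem_filter, Finset.mem_univ, true_and]
      exact hV
  rw [div_le_iff₀ hN0]
  calc _ ≤ (((Finset.Icc 1 K).biUnion fun k => (𝒮 k).biUnion Bad).card : ℝ) := by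
        exact_mod_cast hcover
    _ ≤ ∑ k ∈ Finset.Icc 1 K, (((𝒮 k).biUnion Bad).card : ℝ) := by
        exact_mod_cast Finset.card_biUnion_le
    _ ≤ ∑ k ∈ Finset.Icc 1 K, N * term / n := Finset.sum_le_sum hsize
    _ = (K * term) * (N / n) := by
        rw [Finset.sum_const, nsmul_eq_mul, Nat.card_Icc, Nat.add_sub_cancel]; ring
    _ ≤ n ^ δ * (N / n) := by gcongr
    _ = n ^ (-(1 : ℝ) + δ) * N := by
        rw [Real.rpow_add hn0, Real.rpow_neg_one]; field_simp
end
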